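/- Let 1 < p < q < p*. For every open ball B ⊂ ℝ^N, the supremum of μ_{p,q}(Ω) over all open bounded convex sets Ω ⊂ ℝ^N with diam(Ω) = diam(B) is strictly less than λ_{p,q}(B); equivalently, there is no sequence of open bounded convex sets Ω_n with diam(Ω_n) = diam(B) and μ_{p,q}(Ω_n) → λ_{p,q}(B), so for q > p the upper bound μ_{p,q}(Ω) < λ_{p,q}(B)(diam(B)/diam(Ω))^{p+Np/q−N} is not sharp. -/

import Mathlib

open MeasureTheory Metric Set Real

noncomputable section

/-- The Rayleigh quotient `(∫_Ω |∇v|^p) / (∫_Ω |v|^q)^(p/q)`, where the gradient is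
understood as the (a.e. defined) Fréchet derivative. -/
def rayleighQuot {N : ℕ} (p q : ℝ) (Ω : Set (EuclideanSpace ℝ (Fin N)))
    (v : EuclideanSpace ℝ (Fin N) → ℝ) : ℝ :=
  (∫ x in Ω, ‖fderiv ℝ v x‖ ^ p) / (∫ x in Ω, |v x| ^ q) ^ (p / q)

/-- The first (generalized) Dirichlet eigenvalue `λ_{p,q}(Ω)`: infimum of the Rayleigh
quotient over nontrivial smooth functions compactly supported in `Ω`. -/
def lambdaPQ {N : ℕ} (p q : ℝ) (Ω : Set (EuclideanSpace ℝ (Fin N))) : ℝ :=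
  sInf { R : ℝ | ∃ v : EuclideanSpace ℝ (Fin N) → ℝ,
    ContDiff ℝ (⊤ : ℕ∞) v ∧ HasCompactSupport v ∧ tsupport v ⊆ Ω ∧
    (∃ x ∈ Ω, v x ≠ 0) ∧ R = rayleighQuot p q Ω v }

/-- The first nontrivial (generalized) Neumann eigenvalue `μ_{p,q}(Ω)`: infimum of the
Rayleigh quotient over nontrivial Lipschitz functions on the closure of `Ω` satisfying
the constraint `∫_Ω |v|^(q-2) v = 0`. -/
def muPQ {N : ℕ} (p q : ℝ) (Ω : Set (EuclideanSpace ℝ (Fin N))) : ℝ :=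
  sInf { R : ℝ | ∃ v : EuclideanSpace ℝ (Fin N) → ℝ, ∃ K : NNReal,
    LipschitzOnWith K v (closure Ω) ∧ (∃ x ∈ Ω, v x ≠ 0) ∧
    (∫ x in Ω, |v x| ^ (q - 2) * v x) = 0 ∧ R = rayleighQuot p q Ω v }

/-- `q` is below the critical Sobolev exponent `p* = Np/(N-p)` (with `p* = ∞` if `p ≥ N`). -/
def ltCritical (N : ℕ) (p q : ℝ) : Prop := p < N → q < N * p / (N - p)

end

/-!
A convex set `Ω` is star-shaped with respect to each endpoint of a diameter, and is contained in a
ball whose boundary passes through that endpoint. Near each endpoint the test function is a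
near-minimizer `w` for `λ = λ_{p,q}(B_r)` centred at that endpoint, where `2r = diam Ω`, so that the
two supports are disjoint. By the Pólya–Szegő inequality `w` can be taken radial and nonincreasing.
Testing near-minimality with truncations of `w` gives `∫_{B_R} |∇w|^p ≤ λ ∫_{B_R} w^q + ε` for every
`R ≤ r`, where `∫_{B_r} w^q = 1`; in polar coordinates this estimate passes from the balls `B_R` to
all star-shaped subsets of `B_r`. A ball whose boundary passes through the centre of `w` carries at
most a mass `η < 1/2` of `w^q`, uniformly in `ε`, because subcriticality of `q` keeps `w` bounded
below near its centre. As `p < q`, the Rayleigh quotient of `w` on a set carrying mass `A` is at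
most `λ A^{1-p/q}` up to `ε`, hence below `λ (1/2)^{1-p/q}` by a fixed gap, whereas gluing the
two functions with opposite signs costs at most a factor `2^{1-p/q}`.
-/

open Filter
open scoped ENNReal NNReal Pointwise Topology

/-! ### The Prékopa–Leindler and Brunn–Minkowski inequalities -/

lemma volume_add_volume_le_volume_add_of_isCompact {A B : Set ℝ} (hA : IsCompact A)
    (hB : IsCompact B) (hA₀ : A.Nonempty) (hB₀ : B.Nonempty) :
    volume A + volume B ≤ volume (A + B) := by
  have ha : sSup A ∈ A := hA.sSup_mem hA₀
  have hb : sInf B ∈ B := hB.sInf_mem hB₀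
  -- The translates `A + min B` and `max A + B` lie in `A + B` and share only one point.
  have hinter : volume ((fun x => x + sInf B) '' A ∩ (fun x => sSup A + x) '' B) = 0 := by
    refine measure_mono_null (t := {sSup A + sInf B}) ?_ (by simp)
    rintro z ⟨⟨x, hx, rfl⟩, ⟨y, hy, hxy⟩⟩
    have hxa : x ≤ sSup A := le_csSup hA.bddAbove hx
    have hby : sInf B ≤ y := csInf_le hB.bddBelow hy
    simp only [mem_singleton_iff] at *
    linarith
  have hmeas : MeasurableSet ((fun x => sSup A + x) '' B) :=
    (hB.image (by fun_prop)).measurableSet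
  calc volume A + volume B
      = volume ((fun x => x + sInf B) '' A ∪ (fun x => sSup A + x) '' B) := by
        rw [measure_union₀ hmeas.nullMeasurableSet hinter]
        simp
    _ ≤ volume (A + B) := by
        refine measure_mono (union_subset ?_ ?_)
        · rintro _ ⟨x, hx, rfl⟩
          exact add_mem_add hx hb
        · rintro _ ⟨y, hy, rfl⟩
          exact add_mem_add ha hy

lemma volume_add_volume_le_volume_add {A B : Set ℝ} (hA : MeasurableSet A) (hB : MeasurableSet B)
    (hA₀ : A.Nonempty) (hB₀ : B.Nonempty) : volume A + volume B ≤ volume (A + B) := by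
  obtain ⟨a, ha⟩ := hA₀
  obtain ⟨b, hb⟩ := hB₀
  rw [hA.measure_eq_iSup_isCompact, hB.measure_eq_iSup_isCompact]
  simp only [iSup_and']
  refine ENNReal.biSup_add_biSup_le' ⟨∅, by simp⟩ ⟨∅, by simp⟩ ?_
  rintro K ⟨hKA, hK⟩ L ⟨hLB, hL⟩
  calc volume K + volume L ≤ volume (insert a K) + volume (insert b L) := by
        gcongr <;> exact subset_insert _ _
    _ ≤ volume (insert a K + insert b L) :=
        volume_add_volume_le_volume_add_of_isCompact (hK.insert a) (hL.insert b)
          (insert_nonempty a K) (insert_nonempty b L)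
    _ ≤ volume (A + B) :=
        measure_mono (add_subset_add (insert_subset ha hKA) (insert_subset hb hLB))

lemma ennreal_geom_mean_le_arith_mean2_weighted {a b : ℝ} (ha : 0 < a) (hb : 0 < b)
    (hab : a + b = 1) (x y : ℝ≥0∞) :
    x ^ a * y ^ b ≤ ENNReal.ofReal a * x + ENNReal.ofReal b * y := by
  rcases eq_or_ne x ∞ with rfl | hx
  · simp [ENNReal.mul_top, ha]
  rcases eq_or_ne y ∞ with rfl | hy
  · simp [ENNReal.mul_top, hb]
  lift x to ℝ≥0 using hx
  lift y to ℝ≥0 using hy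
  have := NNReal.geom_mean_le_arith_mean2_weighted ⟨a, ha.le⟩ ⟨b, hb.le⟩ x y (NNReal.eq hab)
  rw [← ENNReal.coe_rpow_of_nonneg _ ha.le, ← ENNReal.coe_rpow_of_nonneg _ hb.le,
    ENNReal.ofReal_eq_coe_nnreal ha.le, ENNReal.ofReal_eq_coe_nnreal hb.le]
  exact_mod_cast this

lemma lintegral_eq_lintegral_Ioi_meas_ofReal_lt {α : Type*} [MeasurableSpace α] (μ : Measure α)
    {f : α → ℝ≥0∞} (hf : Measurable f) (hf_top : ∀ x, f x ≠ ∞) :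
    ∫⁻ x, f x ∂μ = ∫⁻ t in Ioi (0 : ℝ), μ {x | ENNReal.ofReal t < f x} := by
  calc ∫⁻ x, f x ∂μ = ∫⁻ x, ENNReal.ofReal (f x).toReal ∂μ :=
        lintegral_congr fun x => (ENNReal.ofReal_toReal (hf_top x)).symm
    _ = ∫⁻ t in Ioi (0 : ℝ), μ {x | t < (f x).toReal} :=
        lintegral_eq_lintegral_meas_lt μ (.of_forall fun _ => ENNReal.toReal_nonneg)
          hf.ennreal_toReal.aemeasurable
    _ = ∫⁻ t in Ioi (0 : ℝ), μ {x | ENNReal.ofReal t < f x} := by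
        refine setLIntegral_congr_fun measurableSet_Ioi fun t ht => ?_
        simp only [ENNReal.ofReal_lt_iff_lt_toReal (le_of_lt ht) (hf_top _)]

section PrekopaLeindler

variable {a b : ℝ}

lemma weighted_add_volume_superlevel_le (ha : 0 < a) (hb : 0 < b) (hab : a + b = 1)
    {f g h : ℝ → ℝ≥0∞} (hf : Measurable f) (hg : Measurable g)
    (hf_sup : ⨆ x, f x = 1) (hg_sup : ⨆ x, g x = 1)
    (H : ∀ x y, f x ^ a * g y ^ b ≤ h (a * x + b * y)) (t : ℝ≥0∞) :
    ENNReal.ofReal a * volume {x | t < f x} + ENNReal.ofReal b * volume {x | t < g x} ≤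
      volume {x | t < min (h x) 1} := by
  have hf_one : ∀ x, f x ≤ 1 := fun x => hf_sup ▸ le_iSup f x
  have hg_one : ∀ x, g x ≤ 1 := fun x => hg_sup ▸ le_iSup g x
  rcases le_or_gt 1 t with ht | ht
  · simp [fun x => ((hf_one x).trans ht).not_gt, fun x => ((hg_one x).trans ht).not_gt]
  have smul_level {c : ℝ} (hc : 0 < c) (s : Set ℝ) :
      ENNReal.ofReal c * volume s = volume (c • s) := by
    simp [Measure.addHaar_smul, abs_of_pos hc]
  have hf_ne : {x | t < f x}.Nonempty := lt_iSup_iff.1 (hf_sup.symm ▸ ht : t < ⨆ x, f x)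
  have hg_ne : {x | t < g x}.Nonempty := lt_iSup_iff.1 (hg_sup.symm ▸ ht : t < ⨆ x, g x)
  rw [smul_level ha, smul_level hb]
  refine (volume_add_volume_le_volume_add
    ((measurableSet_lt measurable_const hf).const_smul₀ a)
    ((measurableSet_lt measurable_const hg).const_smul₀ b)
    hf_ne.smul_set hg_ne.smul_set).trans (measure_mono ?_)
  rintro _ ⟨_, ⟨x, hx, rfl⟩, _, ⟨y, hy, rfl⟩, rfl⟩
  refine lt_min ?_ ht
  calc t = t ^ a * t ^ b := by
        rw [← ENNReal.rpow_add_of_nonneg _ _ ha.le hb.le, hab, ENNReal.rpow_one]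
    _ < f x ^ a * g y ^ b :=
        ENNReal.mul_lt_mul (ENNReal.rpow_lt_rpow hx ha) (ENNReal.rpow_lt_rpow hy hb)
    _ ≤ h (a * x + b * y) := H x y

lemma prekopa_leindler_real_of_iSup_eq_one (ha : 0 < a) (hb : 0 < b) (hab : a + b = 1)
    {f g h : ℝ → ℝ≥0∞} (hf : Measurable f) (hg : Measurable g) (hh : Measurable h)
    (hf_sup : ⨆ x, f x = 1) (hg_sup : ⨆ x, g x = 1)
    (H : ∀ x y, f x ^ a * g y ^ b ≤ h (a * x + b * y)) :
    (∫⁻ x, f x) ^ a * (∫⁻ x, g x) ^ b ≤ ∫⁻ x, h x := by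
  have level_antitone (k : ℝ → ℝ≥0∞) :
      Antitone fun t : ℝ => volume {x | ENNReal.ofReal t < k x} :=
    fun s t hst => measure_mono fun x hx => (ENNReal.ofReal_le_ofReal hst).trans_lt hx
  have layer_cake {k : ℝ → ℝ≥0∞} (hk : Measurable k) (hk_one : ∀ x, k x ≤ 1) :=
    lintegral_eq_lintegral_Ioi_meas_ofReal_lt volume hk
      fun x => ne_top_of_le_ne_top ENNReal.one_ne_top (hk_one x)
  calc (∫⁻ x, f x) ^ a * (∫⁻ x, g x) ^ b
      ≤ ENNReal.ofReal a * (∫⁻ x, f x) + ENNReal.ofReal b * ∫⁻ x, g x :=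
        ennreal_geom_mean_le_arith_mean2_weighted ha hb hab _ _
    _ = ∫⁻ t in Ioi (0 : ℝ), (ENNReal.ofReal a * volume {x | ENNReal.ofReal t < f x} +
          ENNReal.ofReal b * volume {x | ENNReal.ofReal t < g x}) := by
        rw [layer_cake hf fun x => hf_sup ▸ le_iSup f x,
          layer_cake hg fun x => hg_sup ▸ le_iSup g x,
          lintegral_add_left ((level_antitone f).measurable.const_mul _),
          lintegral_const_mul _ (level_antitone f).measurable,
          lintegral_const_mul _ (level_antitone g).measurable]
    _ ≤ ∫⁻ t in Ioi (0 : ℝ), volume {x | ENNReal.ofReal t < min (h x) 1} :=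
        lintegral_mono fun t =>
          weighted_add_volume_superlevel_le ha hb hab hf hg hf_sup hg_sup H (ENNReal.ofReal t)
    _ = ∫⁻ x, min (h x) 1 :=
        (layer_cake (hh.min measurable_const) fun _ => min_le_right _ _).symm
    _ ≤ ∫⁻ x, h x := lintegral_mono fun _ => min_le_left _ _

lemma prekopa_leindler_real_of_iSup_ne_top (ha : 0 < a) (hb : 0 < b) (hab : a + b = 1)
    {f g h : ℝ → ℝ≥0∞} (hf : Measurable f) (hg : Measurable g) (hh : Measurable h)
    (hf_sup : ⨆ x, f x ≠ ∞) (hg_sup : ⨆ x, g x ≠ ∞)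
    (H : ∀ x y, f x ^ a * g y ^ b ≤ h (a * x + b * y)) :
    (∫⁻ x, f x) ^ a * (∫⁻ x, g x) ^ b ≤ ∫⁻ x, h x := by
  set M := ⨆ x, f x with hM
  set L := ⨆ x, g x with hL
  rcases eq_or_ne M 0 with hM₀ | hM₀
  · simp [(ENNReal.iSup_eq_zero.1 hM₀ : ∀ x, f x = 0), ha]
  rcases eq_or_ne L 0 with hL₀ | hL₀
  · simp [(ENNReal.iSup_eq_zero.1 hL₀ : ∀ x, g x = 0), hb]
  have hMa₀ : M ^ a ≠ 0 := by simp [hM₀, hf_sup]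
  have hMa : M ^ a ≠ ∞ := ENNReal.rpow_ne_top_of_nonneg ha.le hf_sup
  have hdiv (u v : ℝ≥0∞) : (u / M) ^ a * (v / L) ^ b = u ^ a * v ^ b / (M ^ a * L ^ b) := by
    rw [ENNReal.div_rpow_of_nonneg _ _ ha.le, ENNReal.div_rpow_of_nonneg _ _ hb.le,
      ENNReal.mul_div_mul_comm (.inl hMa₀) (.inl hMa)]
  have hnormalized := prekopa_leindler_real_of_iSup_eq_one ha hb hab (hf.div_const M)
    (hg.div_const L) (hh.div_const (M ^ a * L ^ b))
    (by rw [← ENNReal.iSup_div, ← hM, ENNReal.div_self hM₀ hf_sup])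
    (by rw [← ENNReal.iSup_div, ← hL, ENNReal.div_self hL₀ hg_sup])
    (fun x y => by rw [hdiv]; exact ENNReal.div_le_div_right (H x y) _)
  simp only [div_eq_mul_inv, lintegral_mul_const _ hf, lintegral_mul_const _ hg,
    lintegral_mul_const _ hh] at hnormalized
  simp only [← div_eq_mul_inv] at hnormalized
  rw [hdiv] at hnormalized
  have hML₀ : M ^ a * L ^ b ≠ 0 := by simp [hMa₀, hL₀, hg_sup]
  have hML : M ^ a * L ^ b ≠ ∞ := ENNReal.mul_ne_top hMa (by simp [hL₀, hg_sup])
  rwa [ENNReal.div_le_iff hML₀ hML, ENNReal.div_mul_cancel hML₀ hML] at hnormalized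

lemma tendsto_lintegral_min_natCast {α : Type*} [MeasurableSpace α] {μ : Measure α}
    {f : α → ℝ≥0∞} (hf : Measurable f) :
    Tendsto (fun n : ℕ => ∫⁻ x, min (f x) n ∂μ) atTop (𝓝 (∫⁻ x, f x ∂μ)) := by
  refine lintegral_tendsto_of_tendsto_of_monotone (fun n => by fun_prop)
    (.of_forall fun x m n hmn => ?_) (.of_forall fun x => ?_)
  · dsimp only
    gcongr
  · simpa using (tendsto_const_nhds (x := f x)).min ENNReal.tendsto_nat_nhds_top

lemma prekopa_leindler_real (ha : 0 < a) (hb : 0 < b) (hab : a + b = 1)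
    {f g h : ℝ → ℝ≥0∞} (hf : Measurable f) (hg : Measurable g) (hh : Measurable h)
    (H : ∀ x y, f x ^ a * g y ^ b ≤ h (a * x + b * y)) :
    (∫⁻ x, f x) ^ a * (∫⁻ x, g x) ^ b ≤ ∫⁻ x, h x := by
  rcases eq_or_ne (∫⁻ x, f x) 0 with hf₀ | hf₀
  · simp [hf₀, ha]
  rcases eq_or_ne (∫⁻ x, g x) 0 with hg₀ | hg₀
  · simp [hg₀, hb]
  have hlim : Tendsto (fun n : ℕ => (∫⁻ x, min (f x) n) ^ a * (∫⁻ x, min (g x) n) ^ b) atTop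
      (𝓝 ((∫⁻ x, f x) ^ a * (∫⁻ x, g x) ^ b)) :=
    ENNReal.Tendsto.mul ((tendsto_lintegral_min_natCast hf).ennrpow_const a)
      (.inl (by simp [hf₀, ha, ha.le])) ((tendsto_lintegral_min_natCast hg).ennrpow_const b)
      (.inl (by simp [hg₀, hb, hb.le]))
  have hsup (k : ℝ → ℝ≥0∞) (n : ℕ) : ⨆ x, min (k x) (n : ℝ≥0∞) ≠ ∞ :=
    ne_top_of_le_ne_top (ENNReal.natCast_ne_top n) (iSup_le fun _ => min_le_right _ _)
  refine le_of_tendsto hlim (.of_forall fun n => ?_)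
  refine prekopa_leindler_real_of_iSup_ne_top ha hb hab (by fun_prop) (by fun_prop) hh
    (hsup f n) (hsup g n) fun x y => le_trans ?_ (H x y)
  gcongr <;> exact min_le_left _ _

lemma prekopa_leindler_pi (ha : 0 < a) (hb : 0 < b) (hab : a + b = 1) (n : ℕ)
    {f g h : (Fin n → ℝ) → ℝ≥0∞} (hf : Measurable f) (hg : Measurable g) (hh : Measurable h)
    (H : ∀ x y, f x ^ a * g y ^ b ≤ h (a • x + b • y)) :
    (∫⁻ x, f x) ^ a * (∫⁻ x, g x) ^ b ≤ ∫⁻ x, h x := by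
  induction n with
  | zero =>
    have eval_zero (k : (Fin 0 → ℝ) → ℝ≥0∞) : ∫⁻ x, k x = k 0 := by
      rw [Measure.volume_pi_eq_dirac 0 (ι := Fin 0) (α := fun _ => ℝ)]
      simp
    simpa only [eval_zero, smul_zero, add_zero] using H 0 0
  | succ n ih =>
    have e := (volume_preserving_piFinSuccAbove (fun _ : Fin (n + 1) => ℝ) 0).symm
    have measurable_cons {k : (Fin (n + 1) → ℝ) → ℝ≥0∞} (hk : Measurable k) :
        Measurable fun z : ℝ × (Fin n → ℝ) => k (Fin.cons z.1 z.2) := by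
      simpa [Function.comp_def, Fin.insertNthEquiv] using hk.comp e.measurable
    have fubini {k : (Fin (n + 1) → ℝ) → ℝ≥0∞} (hk : Measurable k) :
        ∫⁻ x, k x = ∫⁻ s : ℝ, ∫⁻ y : Fin n → ℝ, k (Fin.cons s y) := by
      rw [← e.lintegral_comp hk, Measure.volume_eq_prod, lintegral_prod _ (by fun_prop)]
      simp [Fin.insertNthEquiv]
    rw [fubini hf, fubini hg, fubini hh]
    refine prekopa_leindler_real ha hb hab (measurable_cons hf).lintegral_prod_right'
      (measurable_cons hg).lintegral_prod_right' (measurable_cons hh).lintegral_prod_right'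
      fun s t => ih ((measurable_cons hf).comp measurable_prodMk_left)
        ((measurable_cons hg).comp measurable_prodMk_left)
        ((measurable_cons hh).comp measurable_prodMk_left) fun x y => ?_
    convert H (Fin.cons s x) (Fin.cons t y) using 2
    ext i
    refine Fin.cases ?_ (fun j => ?_) i <;> simp

variable {E : Type*} [NormedAddCommGroup E] [NormedSpace ℝ E] [FiniteDimensional ℝ E]
  [MeasurableSpace E] [BorelSpace E] (μ : Measure E) [μ.IsAddHaarMeasure]

theorem prekopa_leindler (ha : 0 < a) (hb : 0 < b) (hab : a + b = 1)
    {f g h : E → ℝ≥0∞} (hf : Measurable f) (hg : Measurable g) (hh : Measurable h)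
    (H : ∀ x y, f x ^ a * g y ^ b ≤ h (a • x + b • y)) :
    (∫⁻ x, f x ∂μ) ^ a * (∫⁻ x, g x ∂μ) ^ b ≤ ∫⁻ x, h x ∂μ := by
  let e : (Fin (Module.finrank ℝ E) → ℝ) ≃L[ℝ] E := ContinuousLinearEquiv.ofFinrankEq (by simp)
  have he : Measurable e := e.continuous.measurable
  have := e.isAddHaarMeasure_map volume
  obtain ⟨c, hμ⟩ : ∃ c : ℝ≥0, μ = c • volume.map e :=
    ⟨_, Measure.isAddLeftInvariant_eq_smul μ (volume.map e)⟩
  have pull_back {k : E → ℝ≥0∞} (hk : Measurable k) :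
      ∫⁻ x, k x ∂μ = c * ∫⁻ x, k (e x) := by
    rw [hμ, lintegral_smul_measure, lintegral_map hk he]
    rfl
  calc (∫⁻ x, f x ∂μ) ^ a * (∫⁻ x, g x ∂μ) ^ b
      = c * ((∫⁻ x, f (e x)) ^ a * (∫⁻ x, g (e x)) ^ b) := by
        rw [pull_back hf, pull_back hg, ENNReal.mul_rpow_of_nonneg _ _ ha.le,
          ENNReal.mul_rpow_of_nonneg _ _ hb.le, mul_mul_mul_comm,
          ← ENNReal.rpow_add_of_nonneg _ _ ha.le hb.le, hab, ENNReal.rpow_one]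
    _ ≤ c * ∫⁻ x, h (e x) := by
        gcongr
        refine prekopa_leindler_pi ha hb hab _ (hf.comp he) (hg.comp he) (hh.comp he)
          fun x y => ?_
        simpa using H (e x) (e y)
    _ = ∫⁻ x, h x ∂μ := (pull_back hh).symm

theorem brunn_minkowski_rpow_mul (ha : 0 < a) (hb : 0 < b) (hab : a + b = 1) {X Y : Set E}
    (hX : MeasurableSet X) (hY : MeasurableSet Y) (hXY : MeasurableSet (a • X + b • Y)) :
    μ X ^ a * μ Y ^ b ≤ μ (a • X + b • Y) := by
  rw [← lintegral_indicator_one hX, ← lintegral_indicator_one hY, ← lintegral_indicator_one hXY]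
  refine prekopa_leindler μ ha hb hab (measurable_one.indicator hX) (measurable_one.indicator hY)
    (measurable_one.indicator hXY) fun x y => ?_
  by_cases hx : x ∈ X
  · by_cases hy : y ∈ Y
    · simp [hx, hy, add_mem_add (smul_mem_smul_set (a := a) hx) (smul_mem_smul_set (a := b) hy)]
    · simp [hy, hb]
  · simp [hx, ha]

theorem measure_ball_add_le_measure_thickening {A : Set E} (hA : MeasurableSet A) {ρ h : ℝ}
    (hρ : 0 < ρ) (hh : 0 < h) (hAρ : μ (ball 0 ρ) ≤ μ A) :
    μ (ball 0 (ρ + h)) ≤ μ (thickening h A) := by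
  set a := ρ / (ρ + h) with ha_def
  set b := h / (ρ + h) with hb_def
  have ha : 0 < a := by positivity
  have hb : 0 < b := by positivity
  have hab : a + b = 1 := by rw [ha_def, hb_def]; field_simp
  have hball {c s : ℝ} (hc : 0 < c) (hs : c = s / (ρ + h)) (hs₀ : 0 < s) :
      c⁻¹ • ball (0 : E) s = ball 0 (ρ + h) := by
    rw [_root_.smul_ball (by positivity), smul_zero, norm_inv, norm_of_nonneg hc.le, hs]
    congr 1
    field_simp
  have hball_le : μ (ball 0 (ρ + h)) ≤ μ (a⁻¹ • A) := by
    rw [← hball ha ha_def hρ, Measure.addHaar_smul, Measure.addHaar_smul]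
    gcongr
  have hsum : a • a⁻¹ • A + b • b⁻¹ • ball (0 : E) h = thickening h A := by
    rw [smul_inv_smul₀ ha.ne', smul_inv_smul₀ hb.ne', add_ball_zero]
  calc μ (ball 0 (ρ + h)) = μ (ball 0 (ρ + h)) ^ a * μ (ball 0 (ρ + h)) ^ b := by
        rw [← ENNReal.rpow_add_of_nonneg _ _ ha.le hb.le, hab, ENNReal.rpow_one]
    _ ≤ μ (a⁻¹ • A) ^ a * μ (b⁻¹ • ball 0 h) ^ b := by
        rw [hball hb hb_def hh]
        gcongr
    _ ≤ μ (a • a⁻¹ • A + b • b⁻¹ • ball 0 h) :=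
        brunn_minkowski_rpow_mul μ ha hb hab (hA.const_smul₀ _) (measurableSet_ball.const_smul₀ _)
          (hsum ▸ isOpen_thickening.measurableSet)
    _ = μ (thickening h A) := by rw [hsum]

end PrekopaLeindler

/-! ### Symmetric decreasing rearrangement -/

section Rearrangement

lemma exists_lt_lt_measure_superlevel {α : Type*} [MeasurableSpace α] (μ : Measure α)
    {f : α → ℝ} {s : ℝ} {m : ℝ≥0∞} (h : m < μ {x | s < f x}) :
    ∃ t, s < t ∧ m < μ {x | t < f x} := by
  obtain ⟨u, hu_anti, hu_gt, hu_lim⟩ := exists_seq_strictAnti_tendsto s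
  have hunion : {x | s < f x} = ⋃ n, {x | u n < f x} := by
    ext x
    simp only [mem_ofPred_eq, mem_iUnion]
    exact ⟨fun hx => (hu_lim.eventually_lt_const hx).exists, fun ⟨n, hn⟩ => (hu_gt n).trans hn⟩
  have hmono : Monotone fun n => {x | u n < f x} :=
    fun m n hmn x hx => (hu_anti.antitone hmn).trans_lt hx
  rw [hunion, hmono.measure_iUnion] at h
  obtain ⟨n, hn⟩ := lt_iSup_iff.1 h
  exact ⟨u n, hu_gt n, hn⟩

variable {E : Type*} [NormedAddCommGroup E]

lemma superlevel_subset_ball {f : E → ℝ} {r : ℝ} (hr : ∀ x, r ≤ ‖x‖ → f x = 0) {s : ℝ}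
    (hs : 0 ≤ s) :
    {x | s < f x} ⊆ ball 0 r := by
  intro x hx
  by_contra hxr
  rw [mem_ball_zero_iff, not_lt] at hxr
  exact hs.not_gt (hr x hxr ▸ hx)

variable [MeasurableSpace E]

/-- The radial profile of the symmetric decreasing rearrangement of `f`, so that the rearrangement
is `x ↦ rearrangement μ f ‖x‖`. Only the positive part of `f` is seen, and the infimum is
`0` by convention when no level qualifies, as may happen for unbounded `f`. -/
noncomputable def rearrangement (μ : Measure E) (f : E → ℝ) (ρ : ℝ) : ℝ :=
  sInf {s : ℝ | 0 ≤ s ∧ μ {x | s < f x} ≤ μ (ball 0 ρ)}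

variable {μ : Measure E} {f : E → ℝ}

lemma lt_of_measure_ball_lt {ρ σ : ℝ} (h : μ (ball (0 : E) ρ) < μ (ball 0 σ)) : ρ < σ := by
  by_contra! hle
  exact h.not_ge (measure_mono (ball_subset_ball hle))

lemma rearrangement_nonneg (ρ : ℝ) : 0 ≤ rearrangement μ f ρ :=
  Real.sInf_nonneg fun _ hx => hx.1

lemma lt_rearrangement_iff (hf : BddAbove (range f)) {ρ s : ℝ} (hs : 0 ≤ s) :
    s < rearrangement μ f ρ ↔ μ (ball 0 ρ) < μ {x | s < f x} := by
  constructor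
  · intro h
    by_contra! hle
    exact h.not_ge (csInf_le ⟨0, fun x hx => hx.1⟩ ⟨hs, hle⟩)
  · intro h
    obtain ⟨t, hst, ht⟩ := exists_lt_lt_measure_superlevel μ h
    obtain ⟨M, hM⟩ := hf
    refine hst.trans_le (le_csInf ⟨max M 0, le_max_right _ _, ?_⟩ fun u ⟨_, hu⟩ => ?_)
    · have hempty : {x | max M 0 < f x} = ∅ := eq_empty_of_forall_notMem fun x hx =>
        ((hM (mem_range_self x)).trans (le_max_left M 0)).not_gt hx
      rw [hempty, measure_empty]
      exact zero_le
    · by_contra! hut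
      exact (ht.trans_le (measure_mono fun x hx => hut.trans hx)).not_ge hu

lemma rearrangement_antitone (hf : BddAbove (range f)) : Antitone (rearrangement μ f) := by
  intro ρ σ hρσ
  by_contra! h
  rw [lt_rearrangement_iff hf (rearrangement_nonneg ρ)] at h
  exact ((lt_rearrangement_iff hf (rearrangement_nonneg ρ)).2
    ((measure_mono (ball_subset_ball hρσ)).trans_lt h)).false

lemma rearrangement_eq_zero (hf : BddAbove (range f)) {r : ℝ} (hr : ∀ x, r ≤ ‖x‖ → f x = 0)
    {ρ : ℝ} (hρ : r ≤ ρ) : rearrangement μ f ρ = 0 := by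
  refine le_antisymm (not_lt.1 fun h => ?_) (rearrangement_nonneg ρ)
  rw [lt_rearrangement_iff hf le_rfl] at h
  exact h.not_ge
    (measure_mono ((superlevel_subset_ball hr le_rfl).trans (ball_subset_ball hρ)))

variable [NormedSpace ℝ E] [FiniteDimensional ℝ E] [Nontrivial E] [BorelSpace E]
  [μ.IsAddHaarMeasure]

lemma measure_ball_lt_measure_ball {ρ σ : ℝ} (hρ : 0 ≤ ρ) (hρσ : ρ < σ) :
    μ (ball (0 : E) ρ) < μ (ball 0 σ) := by
  rw [Measure.addHaar_ball _ _ hρ, Measure.addHaar_ball _ _ (hρ.trans hρσ.le)]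
  refine ENNReal.mul_lt_mul_left (measure_ball_pos μ 0 one_pos).ne' measure_ball_lt_top.ne ?_
  exact (ENNReal.ofReal_lt_ofReal_iff (pow_pos (hρ.trans_lt hρσ) _)).2
    (pow_lt_pow_left₀ hρσ hρ Module.finrank_pos.ne')

lemma exists_measure_ball_eq (μ : Measure E) [μ.IsAddHaarMeasure] {m : ℝ≥0∞} (hm : m ≠ ∞) :
    ∃ R : ℝ, 0 ≤ R ∧ μ (ball (0 : E) R) = m := by
  have hball₀ : μ (ball (0 : E) 1) ≠ 0 := (measure_ball_pos μ 0 one_pos).ne'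
  refine ⟨(m / μ (ball (0 : E) 1)).toReal ^ (Module.finrank ℝ E : ℝ)⁻¹, by positivity, ?_⟩
  rw [Measure.addHaar_ball _ _ (by positivity),
    rpow_inv_natCast_pow ENNReal.toReal_nonneg Module.finrank_pos.ne',
    ENNReal.ofReal_toReal (ENNReal.div_ne_top hm hball₀),
    ENNReal.div_mul_cancel hball₀ measure_ball_lt_top.ne]

lemma exists_superlevel_rearrangement_eq_ball (hf : BddAbove (range f)) {r : ℝ}
    (hr : ∀ x, r ≤ ‖x‖ → f x = 0) {s : ℝ} (hs : 0 ≤ s) :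
    ∃ R, 0 ≤ R ∧ {x : E | s < rearrangement μ f ‖x‖} = ball 0 R ∧
      μ {x | s < f x} = μ (ball 0 R) := by
  obtain ⟨R, hR, hR_eq⟩ := exists_measure_ball_eq μ (m := μ {x | s < f x})
    (measure_mono (superlevel_subset_ball hr hs) |>.trans_lt measure_ball_lt_top).ne
  refine ⟨R, hR, ?_, hR_eq.symm⟩
  ext x
  simp only [mem_ofPred_eq, mem_ball_zero_iff]
  rw [lt_rearrangement_iff hf hs, ← hR_eq]
  exact ⟨lt_of_measure_ball_lt, measure_ball_lt_measure_ball (norm_nonneg x)⟩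

lemma rearrangement_le_rearrangement_add (hf_bdd : BddAbove (range f)) {K : ℝ≥0}
    (hf : LipschitzWith K f) {r : ℝ} (hr : ∀ x, r ≤ ‖x‖ → f x = 0) (ρ : ℝ) {h : ℝ} (hh : 0 < h) :
    rearrangement μ f ρ ≤ rearrangement μ f (ρ + h) + K * h := by
  by_contra! hlt
  set s := rearrangement μ f (ρ + h)
  have hs : 0 ≤ s := rearrangement_nonneg _
  have hs' : 0 ≤ s + K * h := by positivity
  obtain ⟨R, hR, -, hR_eq⟩ := exists_superlevel_rearrangement_eq_ball (μ := μ) hf_bdd hr hs'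
  rw [lt_rearrangement_iff hf_bdd hs', hR_eq] at hlt
  have hR_pos : 0 < R := hR.lt_of_ne fun h => by simp [← h] at hlt
  have hthick : thickening h {x | s + K * h < f x} ⊆ {x | s < f x} := by
    intro x hx
    obtain ⟨y, hy, hxy⟩ := mem_thickening_iff.1 hx
    have hfxy : f y ≤ f x + K * dist y x := hf.le_add_mul y x
    have : K * dist y x ≤ K * h := by
      rw [dist_comm]
      gcongr
    rw [mem_ofPred_eq] at hy ⊢
    linarith
  have hball : μ (ball 0 (ρ + h)) < μ {x | s < f x} :=
    calc μ (ball 0 (ρ + h)) < μ (ball 0 (R + h)) := by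
          have hρR : ρ < R := lt_of_measure_ball_lt hlt
          rcases le_or_gt 0 (ρ + h) with hρh | hρh
          · exact measure_ball_lt_measure_ball hρh (by linarith)
          · rw [ball_eq_empty.2 hρh.le, measure_empty]
            exact measure_ball_pos μ _ (by positivity)
      _ ≤ μ (thickening h {x | s + K * h < f x}) :=
          measure_ball_add_le_measure_thickening μ
            (isOpen_lt continuous_const hf.continuous).measurableSet hR_pos hh hR_eq.ge
      _ ≤ μ {x | s < f x} := measure_mono hthick
  exact ((lt_rearrangement_iff hf_bdd hs).2 hball).false

lemma lipschitzWith_rearrangement (hf_bdd : BddAbove (range f)) {K : ℝ≥0}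
    (hf : LipschitzWith K f) {r : ℝ} (hr : ∀ x, r ≤ ‖x‖ → f x = 0) :
    LipschitzWith K (rearrangement μ f) := by
  refine LipschitzWith.of_le_add_mul K fun ρ σ => ?_
  rcases lt_or_ge ρ σ with hρσ | hσρ
  · have := rearrangement_le_rearrangement_add (μ := μ) hf_bdd hf hr ρ (sub_pos.2 hρσ)
    rwa [add_sub_cancel, ← abs_of_pos (sub_pos.2 hρσ), abs_sub_comm] at this
  · have := rearrangement_antitone (μ := μ) hf_bdd hσρ
    have : 0 ≤ K * dist ρ σ := by positivity
    linarith

end Rearrangement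

lemma lintegral_ofReal_le_of_measure_superlevel_le {α β : Type*} [MeasurableSpace α]
    [MeasurableSpace β] {μ : Measure α} {ν : Measure β} {f : α → ℝ} {g : β → ℝ}
    (hf : Measurable f) (hg : Measurable g) (hf₀ : ∀ x, 0 ≤ f x) (hg₀ : ∀ x, 0 ≤ g x)
    (h : ∀ t, 0 < t → μ {x | t < f x} ≤ ν {x | t < g x}) :
    ∫⁻ x, ENNReal.ofReal (f x) ∂μ ≤ ∫⁻ x, ENNReal.ofReal (g x) ∂ν := by
  rw [lintegral_eq_lintegral_meas_lt μ (.of_forall hf₀) hf.aemeasurable,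
    lintegral_eq_lintegral_meas_lt ν (.of_forall hg₀) hg.aemeasurable]
  exact setLIntegral_mono' measurableSet_Ioi h

lemma lintegral_ofReal_ne_top_of_bddAbove {E : Type*} [NormedAddCommGroup E] [ProperSpace E]
    [MeasurableSpace E] [OpensMeasurableSpace E] {μ : Measure E} [IsFiniteMeasureOnCompacts μ]
    {f : E → ℝ} (hf : BddAbove (range f)) {r : ℝ} (hr : ∀ x, r ≤ ‖x‖ → f x = 0) :
    ∫⁻ x, ENNReal.ofReal (f x) ∂μ ≠ ∞ := by
  obtain ⟨M, hM⟩ := hf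
  have hsupp : (ball (0 : E) r).indicator (fun x => ENNReal.ofReal (f x)) =
      fun x => ENNReal.ofReal (f x) := indicator_eq_self.2 fun x hx => by
    by_contra hxr
    exact hx (by simp [hr x (by simpa using hxr)])
  rw [← hsupp, lintegral_indicator measurableSet_ball]
  exact ((setLIntegral_mono measurable_const fun x _ => ENNReal.ofReal_le_ofReal
    (hM (mem_range_self x))).trans_lt (by simp [ENNReal.mul_lt_top_iff, measure_ball_lt_top])).ne

/-- The radial function `x ↦ w ‖x‖` is equimeasurable with `f` above level `0`, and its superlevel
sets are balls centred at the origin. -/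
def IsRadialRearrangement {E : Type*} [NormedAddCommGroup E] [MeasurableSpace E] (μ : Measure E)
    (f : E → ℝ) (w : ℝ → ℝ) : Prop :=
  ∀ s, 0 ≤ s → ∃ R, 0 ≤ R ∧ {x : E | s < w ‖x‖} = ball 0 R ∧ μ {x | s < f x} = μ (ball 0 R)

namespace IsRadialRearrangement

variable {E : Type*} [NormedAddCommGroup E] [MeasurableSpace E] {μ : Measure E} {f : E → ℝ}
  {w : ℝ → ℝ}

lemma measure_superlevel_eq (h : IsRadialRearrangement μ f w) {s : ℝ} (hs : 0 ≤ s) :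
    μ {x | s < f x} = μ {x | s < w ‖x‖} := by
  obtain ⟨R, -, hball, hR⟩ := h s hs
  rw [hR, hball]

lemma max_sub (h : IsRadialRearrangement μ f w) {τ : ℝ} (hτ : 0 ≤ τ) :
    IsRadialRearrangement μ (fun x => max (f x - τ) 0) (fun ρ => max (w ρ - τ) 0) := by
  intro s hs
  have superlevel (g : E → ℝ) : {x | s < max (g x - τ) 0} = {x | s + τ < g x} := by
    ext x
    simp [hs.not_gt, lt_sub_iff_add_lt]
  simpa only [superlevel f, superlevel fun x => w ‖x‖] using h (s + τ) (by positivity)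

lemma le_of_forall_le [μ.IsOpenPosMeasure] (h : IsRadialRearrangement μ f w)
    {M : ℝ} (hM₀ : 0 ≤ M) (hM : ∀ x, f x ≤ M) (x : E) : w ‖x‖ ≤ M := by
  obtain ⟨R, -, hball, hR⟩ := h M hM₀
  have hsuper : {x | M < f x} = ∅ := eq_empty_of_forall_notMem fun x => (hM x).not_gt
  have hempty : ball (0 : E) R = ∅ := by
    rw [hsuper, measure_empty, eq_comm, isOpen_ball.measure_eq_zero_iff μ] at hR
    exact hR
  exact not_lt.1 fun hx => (hball.trans hempty).le hx

lemma bddAbove_range [μ.IsOpenPosMeasure] (h : IsRadialRearrangement μ f w)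
    (hf : BddAbove (range f)) (hf₀ : ∀ x, 0 ≤ f x) : BddAbove (range fun x : E => w ‖x‖) := by
  obtain ⟨M, hM⟩ := hf
  have hM' : ∀ x, f x ≤ M := fun x => hM (mem_range_self x)
  exact ⟨M, forall_mem_range.2 (h.le_of_forall_le ((hf₀ 0).trans (hM' 0)) hM')⟩

end IsRadialRearrangement

/-! ### The Hopf–Lax semigroup and the Pólya–Szegő inequality -/

section HopfLax

/-- The transport cost of distance `d` in time `t` for the Hopf–Lax formula of exponent `P`. -/
noncomputable def hopfLaxCost (P t d : ℝ) : ℝ := t * ((d / t) ^ P / P)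

/-- The Hopf–Lax solution at time `t` of `∂ₜu = |∇u|^p / p` with initial datum `f`, where `P` is
the exponent conjugate to `p`. -/
noncomputable def hopfLax {E : Type*} [NormedAddCommGroup E] (P t : ℝ) (f : E → ℝ) (x : E) : ℝ :=
  ⨆ y, (f y - hopfLaxCost P t ‖x - y‖)

variable {P t : ℝ}

lemma hopfLaxCost_nonneg (hP : 0 < P) (ht : 0 < t) {d : ℝ} (hd : 0 ≤ d) :
    0 ≤ hopfLaxCost P t d := by
  unfold hopfLaxCost
  positivity

lemma hopfLaxCost_le_hopfLaxCost (hP : 0 < P) (ht : 0 < t) {d d' : ℝ} (hd : 0 ≤ d)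
    (hdd' : d ≤ d') : hopfLaxCost P t d ≤ hopfLaxCost P t d' := by
  unfold hopfLaxCost
  gcongr

lemma hopfLaxCost_zero (hP : P ≠ 0) : hopfLaxCost P t 0 = 0 := by
  simp [hopfLaxCost, zero_rpow hP]

lemma eventually_forall_le_hopfLaxCost (hP : 1 < P) (M : ℝ) {h : ℝ} (hh : 0 < h) :
    ∀ᶠ t in 𝓝[>] 0, ∀ d, h ≤ d → M ≤ hopfLaxCost P t d := by
  have hlim : Tendsto (fun t : ℝ => t ^ (P - 1) * (M * P)) (𝓝[>] 0) (𝓝 0) := by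
    have := (continuousAt_rpow_const 0 (P - 1) (.inr (by linarith))).tendsto.mono_left
      (nhdsWithin_le_nhds (s := Ioi 0))
    simpa [zero_rpow (sub_pos.2 hP).ne'] using this.mul_const (M * P)
  filter_upwards [hlim.eventually_lt_const (show 0 < h ^ P by positivity), self_mem_nhdsWithin]
    with t ht (ht₀ : 0 < t) d hd
  calc M ≤ d ^ P / (t ^ (P - 1) * P) := by
        rw [le_div_iff₀ (by positivity)]
        have : h ^ P ≤ d ^ P := by gcongr
        linarith
    _ = hopfLaxCost P t d := by
        rw [hopfLaxCost, div_rpow (hh.le.trans hd) ht₀.le, rpow_sub_one ht₀.ne']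
        field_simp

variable {E : Type*} [NormedAddCommGroup E] {f : E → ℝ}

lemma sub_hopfLaxCost_le_hopfLax (hP : 0 < P) (ht : 0 < t) (hf : BddAbove (range f)) (x y : E) :
    f y - hopfLaxCost P t ‖x - y‖ ≤ hopfLax P t f x := by
  obtain ⟨M, hM⟩ := hf
  refine le_ciSup (f := fun y => f y - hopfLaxCost P t ‖x - y‖) ⟨M, ?_⟩ y
  rintro _ ⟨y, rfl⟩
  exact (sub_le_self _ (hopfLaxCost_nonneg hP ht (norm_nonneg _))).trans (hM (mem_range_self y))

lemma le_hopfLax (hP : 0 < P) (ht : 0 < t) (hf : BddAbove (range f)) (x : E) :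
    f x ≤ hopfLax P t f x := by
  simpa [hopfLaxCost_zero hP.ne'] using sub_hopfLaxCost_le_hopfLax hP ht hf x x

lemma isOpen_superlevel_hopfLax (hP : 0 < P) (ht : 0 < t) (hf : BddAbove (range f)) (s : ℝ) :
    IsOpen {x | s < hopfLax P t f x} := by
  have hunion : {x | s < hopfLax P t f x} = ⋃ y, {x | s < f y - hopfLaxCost P t ‖x - y‖} := by
    ext x
    simp only [mem_ofPred_eq, mem_iUnion]
    exact ⟨exists_lt_of_lt_ciSup, fun ⟨y, hy⟩ =>
      hy.trans_le (sub_hopfLaxCost_le_hopfLax hP ht hf x y)⟩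
  rw [hunion]
  refine isOpen_iUnion fun y => isOpen_lt continuous_const ?_
  have : Continuous fun x : E => (‖x - y‖ / t) ^ P :=
    Continuous.rpow_const (by fun_prop) fun _ => .inr hP.le
  unfold hopfLaxCost
  fun_prop

lemma measurable_hopfLax [MeasurableSpace E] [OpensMeasurableSpace E] (hP : 0 < P) (ht : 0 < t)
    (hf : BddAbove (range f)) : Measurable (hopfLax P t f) :=
  measurable_of_Ioi fun s => (isOpen_superlevel_hopfLax hP ht hf s).measurableSet

lemma eventually_hopfLax_nonpos (hP : 1 < P) (hf : BddAbove (range f)) {r₀ r : ℝ} (hr : r₀ < r)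
    (hr₀ : ∀ x, r₀ ≤ ‖x‖ → f x = 0) :
    ∀ᶠ t in 𝓝[>] 0, ∀ x, r ≤ ‖x‖ → hopfLax P t f x ≤ 0 := by
  obtain ⟨M, hM⟩ := hf
  filter_upwards [eventually_forall_le_hopfLaxCost hP M (sub_pos.2 hr), self_mem_nhdsWithin]
    with t hcost ht x hx
  refine ciSup_le fun y => ?_
  rcases le_or_gt r₀ ‖y‖ with hy | hy
  · have := hopfLaxCost_nonneg (zero_lt_one.trans hP) ht (norm_nonneg (x - y))
    linarith [hr₀ y hy]
  · linarith [hcost ‖x - y‖ (by linarith [norm_sub_norm_le x y]), hM (mem_range_self y)]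

lemma eventually_hopfLax_le {p : ℝ} (hpP : p.HolderConjugate P) (hf : BddAbove (range f))
    (hf₀ : ∀ x, 0 ≤ f x) {g : E → ℝ} (hg₀ : ∀ x, 0 ≤ g x) {h : ℝ} (hh : 0 < h)
    (hslope : ∀ x y, ‖x - y‖ < h → f y ≤ f x + g x * ‖x - y‖) :
    ∀ᶠ t in 𝓝[>] 0, ∀ x, hopfLax P t f x ≤ f x + t * (g x ^ p / p) := by
  obtain ⟨M, hM⟩ := hf
  filter_upwards [eventually_forall_le_hopfLaxCost hpP.symm.lt M hh, self_mem_nhdsWithin]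
    with t hcost (ht : 0 < t) x
  refine ciSup_le fun y => ?_
  rcases lt_or_ge ‖x - y‖ h with hy | hy
  · have young := mul_le_mul_of_nonneg_left (young_inequality_of_nonneg (hg₀ x)
      (show 0 ≤ ‖x - y‖ / t by positivity) hpP) ht.le
    have : g x * ‖x - y‖ = t * (g x * (‖x - y‖ / t)) := by field_simp
    unfold hopfLaxCost
    linarith [hslope x y hy]
  · have : 0 ≤ t * (g x ^ p / p) :=
      mul_nonneg ht.le (div_nonneg (rpow_nonneg (hg₀ x) p) hpP.nonneg)
    linarith [hcost ‖x - y‖ hy, hM (mem_range_self y), hf₀ x]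

lemma lintegral_hopfLax_le [MeasurableSpace E] [OpensMeasurableSpace E] {μ : Measure E}
    {g : E → ℝ} {r : ℝ} (hf : Measurable f) (hf₀ : ∀ x, 0 ≤ f x) (hg₀ : ∀ x, 0 ≤ g x) (ht : 0 < t)
    (hle : ∀ x, hopfLax P t f x ≤ f x + t * g x) (hsupp : ∀ x, r ≤ ‖x‖ → hopfLax P t f x ≤ 0) :
    ∫⁻ x, ENNReal.ofReal (hopfLax P t f x) ∂μ ≤
      ∫⁻ x, ENNReal.ofReal (f x) ∂μ +
        ENNReal.ofReal t * ∫⁻ x in ball 0 r, ENNReal.ofReal (g x) ∂μ := by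
  rw [← lintegral_const_mul' _ _ ENNReal.ofReal_ne_top, ← lintegral_indicator measurableSet_ball,
    ← lintegral_add_left hf.ennreal_ofReal]
  refine lintegral_mono fun x => ?_
  by_cases hx : x ∈ ball (0 : E) r
  · rw [indicator_of_mem hx, ← ENNReal.ofReal_mul ht.le,
      ← ENNReal.ofReal_add (hf₀ x) (mul_nonneg ht.le (hg₀ x))]
    exact ENNReal.ofReal_le_ofReal (hle x)
  · simp [ENNReal.ofReal_of_nonpos (hsupp x (by simpa using hx))]

section Measure

variable [NormedSpace ℝ E] [FiniteDimensional ℝ E] [MeasurableSpace E] [BorelSpace E]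
  {μ : Measure E} [μ.IsAddHaarMeasure]

lemma measure_ball_add_le_measure_superlevel_hopfLax (hP : 0 < P) (ht : 0 < t)
    (hf_bdd : BddAbove (range f)) (hf : Measurable f) {s R d : ℝ} (hR : 0 < R) (hd : 0 ≤ d)
    (hRd : μ (ball 0 R) ≤ μ {x | s + hopfLaxCost P t d < f x}) :
    μ (ball 0 (R + d)) ≤ μ {x | s < hopfLax P t f x} := by
  rcases hd.eq_or_lt with rfl | hd
  · rw [hopfLaxCost_zero hP.ne'] at hRd
    simp only [add_zero] at hRd ⊢
    exact hRd.trans (measure_mono fun x hx => lt_of_lt_of_le hx (le_hopfLax hP ht hf_bdd x))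
  · refine (measure_ball_add_le_measure_thickening μ (measurableSet_lt measurable_const hf)
      hR hd hRd).trans (measure_mono fun x hx => ?_)
    obtain ⟨y, hy, hxy⟩ := mem_thickening_iff.1 hx
    rw [mem_ofPred_eq] at hy ⊢
    rw [dist_eq_norm] at hxy
    linarith [sub_hopfLaxCost_le_hopfLax hP ht hf_bdd x y,
      hopfLaxCost_le_hopfLaxCost hP ht (norm_nonneg _) hxy.le]

variable {w : ℝ → ℝ} [Nontrivial E]

lemma measure_superlevel_hopfLax_radial_le (hP : 0 < P) (ht : 0 < t)
    (hf_bdd : BddAbove (range f)) (hf : Measurable f) (hw : IsRadialRearrangement μ f w) {s : ℝ}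
    (hs : 0 ≤ s) :
    μ {x | s < hopfLax P t (fun x => w ‖x‖) x} ≤ μ {x | s < hopfLax P t f x} := by
  rcases eq_or_ne (μ {x | s < hopfLax P t f x}) ∞ with hfin | hfin
  · exact hfin ▸ le_top
  obtain ⟨R, hR, hR_eq⟩ := exists_measure_ball_eq μ hfin
  rw [← hR_eq]
  refine measure_mono fun x hx => ?_
  obtain ⟨y, hy⟩ := exists_lt_of_lt_ciSup (show s < ⨆ y, _ from hx)
  have hcost := hopfLaxCost_nonneg hP ht (norm_nonneg (x - y))
  obtain ⟨R', -, hball, hR'_eq⟩ := hw (s + hopfLaxCost P t ‖x - y‖) (by positivity)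
  have hyR' : ‖y‖ < R' := mem_ball_zero_iff.1 (hball.le (lt_sub_iff_add_lt.1 hy))
  have hR' : R' + ‖x - y‖ ≤ R := by
    by_contra! hlt
    refine (measure_ball_lt_measure_ball (μ := μ) hR hlt).not_ge (hR_eq ▸ ?_)
    exact measure_ball_add_le_measure_superlevel_hopfLax hP ht hf_bdd hf
      ((norm_nonneg y).trans_lt hyR') (norm_nonneg _) hR'_eq.ge
  rw [mem_ball_zero_iff]
  have : ‖x‖ ≤ ‖x - y‖ + ‖y‖ := norm_le_norm_sub_add x y
  linarith

lemma lintegral_hopfLax_radial_quotient_le {g : E → ℝ} {r : ℝ} (hP : 0 < P) (ht : 0 < t)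
    (hf_bdd : BddAbove (range f)) (hf : Measurable f) (hf₀ : ∀ x, 0 ≤ f x)
    (hf_int : ∫⁻ x, ENNReal.ofReal (f x) ∂μ ≠ ∞) (hw : IsRadialRearrangement μ f w)
    (hW : Measurable fun x : E => w ‖x‖) (hW₀ : ∀ x : E, 0 ≤ w ‖x‖) (hg₀ : ∀ x, 0 ≤ g x)
    (hle : ∀ x, hopfLax P t f x ≤ f x + t * g x) (hsupp : ∀ x, r ≤ ‖x‖ → hopfLax P t f x ≤ 0) :
    ∫⁻ x, ENNReal.ofReal ((hopfLax P t (fun x => w ‖x‖) x - w ‖x‖) / t) ∂μ ≤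
      ∫⁻ x in ball 0 r, ENNReal.ofReal (g x) ∂μ := by
  set W : E → ℝ := fun x => w ‖x‖
  have hW_bdd : BddAbove (range W) := hw.bddAbove_range hf_bdd hf₀
  have hle_W := le_hopfLax hP ht hW_bdd
  have hle_f := le_hopfLax hP ht hf_bdd
  have hint_eq : ∫⁻ x, ENNReal.ofReal (f x) ∂μ = ∫⁻ x, ENNReal.ofReal (W x) ∂μ :=
    le_antisymm
      (lintegral_ofReal_le_of_measure_superlevel_le hf hW hf₀ hW₀
        fun s hs => (hw.measure_superlevel_eq hs.le).le)
      (lintegral_ofReal_le_of_measure_superlevel_le hW hf hW₀ hf₀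
        fun s hs => (hw.measure_superlevel_eq hs.le).ge)
  have hsplit : ∫⁻ x, ENNReal.ofReal (hopfLax P t W x) ∂μ = ∫⁻ x, ENNReal.ofReal (W x) ∂μ +
      ENNReal.ofReal t * ∫⁻ x, ENNReal.ofReal ((hopfLax P t W x - W x) / t) ∂μ := by
    rw [← lintegral_const_mul' _ _ ENNReal.ofReal_ne_top,
      ← lintegral_add_left hW.ennreal_ofReal]
    refine lintegral_congr fun x => ?_
    rw [← ENNReal.ofReal_mul ht.le, mul_div_cancel₀ _ ht.ne',
      ← ENNReal.ofReal_add (hW₀ x) (sub_nonneg.2 (hle_W x)), add_sub_cancel]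
  have hcompare := (lintegral_ofReal_le_of_measure_superlevel_le
    (measurable_hopfLax hP ht hW_bdd) (measurable_hopfLax hP ht hf_bdd)
    (fun x => (hW₀ x).trans (hle_W x)) (fun x => (hf₀ x).trans (hle_f x))
    fun s hs => measure_superlevel_hopfLax_radial_le hP ht hf_bdd hf hw hs.le).trans
      (lintegral_hopfLax_le hf hf₀ hg₀ ht hle hsupp)
  rw [hsplit, hint_eq, ENNReal.add_le_add_iff_left (hint_eq ▸ hf_int)] at hcompare
  exact (ENNReal.mul_le_mul_iff_right (by simpa using ht) ENNReal.ofReal_ne_top).1 hcompare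

end Measure

section Gradient

variable [NormedSpace ℝ E] [FiniteDimensional ℝ E] {p : ℝ}

lemma exists_apply_eq_norm_rpow (hpP : p.HolderConjugate P) (D : E →L[ℝ] ℝ) :
    ∃ z, D z = ‖D‖ ^ p ∧ ‖z‖ ^ P ≤ ‖D‖ ^ p := by
  obtain ⟨e, he, hDe⟩ := (isCompact_closedBall (0 : E) 1).exists_sSup_image_eq ⟨0, by simp⟩
    (f := fun x => ‖D x‖) (by fun_prop)
  rw [D.sSup_unitClosedBall_eq_norm] at hDe
  refine ⟨(‖D‖ ^ (p - 1) * SignType.sign (D e)) • e, ?_, ?_⟩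
  · rw [map_smul, smul_eq_mul, mul_assoc, sign_mul_self, ← norm_eq_abs, ← hDe,
      ← rpow_add_one' (norm_nonneg D) (by simpa using hpP.ne_zero), sub_add_cancel]
  · have hz : ‖(‖D‖ ^ (p - 1) * SignType.sign (D e)) • e‖ ≤ ‖D‖ ^ (p - 1) := by
      have hsign : ‖(SignType.sign (D e) : ℝ)‖ ≤ 1 := by
        cases SignType.sign (D e) <;> simp
      rw [norm_smul, norm_mul, norm_of_nonneg (rpow_nonneg (norm_nonneg D) _), mul_assoc]
      exact mul_le_of_le_one_right (by positivity)
        (mul_le_one₀ hsign (norm_nonneg e) (mem_closedBall_zero_iff.1 he))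
    calc ‖(‖D‖ ^ (p - 1) * SignType.sign (D e)) • e‖ ^ P ≤ (‖D‖ ^ (p - 1)) ^ P :=
          rpow_le_rpow (norm_nonneg _) hz hpP.symm.nonneg
      _ = ‖D‖ ^ p := by rw [← rpow_mul (norm_nonneg D), hpP.sub_one_mul_conj]

lemma rpow_norm_fderiv_div_le_liminf_hopfLax (hpP : p.HolderConjugate P)
    (hf : BddAbove (range f)) (x : E) {ι : Type*} {l : Filter ι} [l.NeBot] {u : ι → ℝ}
    (hu : Tendsto u l (𝓝[>] 0)) :
    ENNReal.ofReal (‖fderiv ℝ f x‖ ^ p / p) ≤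
      liminf (fun n => ENNReal.ofReal ((hopfLax P (u n) f x - f x) / u n)) l := by
  by_cases hd : DifferentiableAt ℝ f x
  swap
  · simp [fderiv_zero_of_not_differentiableAt hd, zero_rpow hpP.ne_zero]
  obtain ⟨z, hDz, hz⟩ := exists_apply_eq_norm_rpow hpP (fderiv ℝ f x)
  have hlim : Tendsto (fun n => (f (x + u n • z) - f x) / u n - ‖z‖ ^ P / P) l
      (𝓝 (fderiv ℝ f x z - ‖z‖ ^ P / P)) := by
    have hderiv : HasDerivAt (fun s : ℝ => f (x + s • z)) (fderiv ℝ f x z) 0 :=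
      hd.hasFDerivAt.hasLineDerivAt z
    have := (hasDerivAt_iff_tendsto_slope.1 hderiv).comp
      (hu.mono_right (nhdsWithin_mono 0 fun s hs => (ne_of_gt hs : s ≠ 0)))
    simpa [Function.comp_def, slope_def_field] using this.sub_const (‖z‖ ^ P / P)
  have hle : ‖fderiv ℝ f x‖ ^ p / p ≤ fderiv ℝ f x z - ‖z‖ ^ P / P := by
    have hsum : ‖fderiv ℝ f x‖ ^ p / p + ‖fderiv ℝ f x‖ ^ p / P = ‖fderiv ℝ f x‖ ^ p := by
      rw [div_eq_mul_inv, div_eq_mul_inv, ← mul_add, hpP.inv_add_inv_eq_one, mul_one]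
    have := div_le_div_of_nonneg_right hz hpP.symm.nonneg
    linarith
  refine (ENNReal.ofReal_le_ofReal hle).trans ?_
  rw [← ((ENNReal.continuous_ofReal.tendsto _).comp hlim).liminf_eq]
  refine liminf_le_liminf ((hu.eventually self_mem_nhdsWithin).mono fun n (hn : 0 < u n) => ?_)
  refine ENNReal.ofReal_le_ofReal ?_
  have hnorm : ‖x - (x + u n • z)‖ / u n = ‖z‖ := by
    rw [sub_add_cancel_left, norm_neg, norm_smul, norm_of_nonneg hn.le,
      mul_div_cancel_left₀ _ hn.ne']
  have hz_le := sub_hopfLaxCost_le_hopfLax hpP.symm.pos hn hf x (x + u n • z)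
  rw [hopfLaxCost, hnorm] at hz_le
  rw [le_div_iff₀ hn, sub_mul, div_mul_cancel₀ _ hn.ne']
  linarith

end Gradient

section PolyaSzego

variable [NormedSpace ℝ E] [FiniteDimensional ℝ E] [Nontrivial E] [MeasurableSpace E]
  [BorelSpace E] {μ : Measure E} [μ.IsAddHaarMeasure] {p r₀ r : ℝ} {w : ℝ → ℝ}

/-- `G` bounds the slope of `f` at every point, up to errors that are uniform at small scales. -/
def IsUniformSlopeBound (f G : E → ℝ) : Prop :=
  ∀ η > 0, ∃ h > 0, ∀ x y, ‖x - y‖ < h → f y ≤ f x + (G x + η) * ‖x - y‖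

lemma lintegral_norm_fderiv_radial_rpow_le (hp : 1 < p) (hf_bdd : BddAbove (range f))
    (hf : Measurable f) (hf₀ : ∀ x, 0 ≤ f x) (hr : r₀ < r) (hr₀ : ∀ x, r₀ ≤ ‖x‖ → f x = 0)
    (hw : IsRadialRearrangement μ f w) (hW : Measurable fun x : E => w ‖x‖)
    (hW₀ : ∀ x : E, 0 ≤ w ‖x‖) {g : E → ℝ} (hg₀ : ∀ x, 0 ≤ g x) {h : ℝ} (hh : 0 < h)
    (hslope : ∀ x y, ‖x - y‖ < h → f y ≤ f x + g x * ‖x - y‖) :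
    ∫⁻ x, ENNReal.ofReal (‖fderiv ℝ (fun x : E => w ‖x‖) x‖ ^ p) ∂μ ≤
      ∫⁻ x in ball 0 r, ENNReal.ofReal (g x ^ p) ∂μ := by
  set W : E → ℝ := fun x => w ‖x‖
  obtain ⟨P, hpP⟩ : ∃ P, p.HolderConjugate P := ⟨_, .conjExponent hp⟩
  have hW_bdd : BddAbove (range W) := hw.bddAbove_range hf_bdd hf₀
  have hf_int := lintegral_ofReal_ne_top_of_bddAbove (μ := μ) hf_bdd hr₀
  obtain ⟨u, -, hu⟩ := exists_seq_strictAnti_tendsto' (zero_lt_one' ℝ)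
  have hu_pos : ∀ n, 0 < u n := fun n => (hu.1 n).1
  have hu_lim : Tendsto u atTop (𝓝[>] 0) :=
    tendsto_nhdsWithin_iff.2 ⟨hu.2, .of_forall hu_pos⟩
  have hdiv : ∫⁻ x, ENNReal.ofReal (‖fderiv ℝ W x‖ ^ p / p) ∂μ ≤
      ∫⁻ x in ball 0 r, ENNReal.ofReal (g x ^ p / p) ∂μ := by
    calc ∫⁻ x, ENNReal.ofReal (‖fderiv ℝ W x‖ ^ p / p) ∂μ
        ≤ ∫⁻ x, liminf (fun n => ENNReal.ofReal ((hopfLax P (u n) W x - W x) / u n)) atTop ∂μ :=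
          lintegral_mono fun x => rpow_norm_fderiv_div_le_liminf_hopfLax hpP hW_bdd x hu_lim
      _ ≤ liminf (fun n => ∫⁻ x, ENNReal.ofReal ((hopfLax P (u n) W x - W x) / u n) ∂μ) atTop :=
          lintegral_liminf_le fun n => ((measurable_hopfLax hpP.symm.pos (hu_pos n) hW_bdd).sub
            hW).div_const _ |>.ennreal_ofReal
      _ ≤ ∫⁻ x in ball 0 r, ENNReal.ofReal (g x ^ p / p) ∂μ := by
          refine liminf_le_of_frequently_le' (Eventually.frequently ?_)
          filter_upwards [hu_lim.eventually (eventually_hopfLax_nonpos hpP.symm.lt hf_bdd hr hr₀),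
            hu_lim.eventually (eventually_hopfLax_le hpP hf_bdd hf₀ hg₀ hh hslope)] with n hn hn'
          exact lintegral_hopfLax_radial_quotient_le hpP.symm.pos (hu_pos n) hf_bdd hf hf₀ hf_int
            hw hW hW₀ (fun x => div_nonneg (rpow_nonneg (hg₀ x) p) hpP.nonneg) hn' hn
  have hp_ne : ENNReal.ofReal p ≠ 0 := (ENNReal.ofReal_pos.2 hpP.pos).ne'
  simp only [ENNReal.ofReal_div_of_pos hpP.pos] at hdiv
  simp only [div_eq_mul_inv, lintegral_mul_const' _ _ (ENNReal.inv_ne_top.2 hp_ne)] at hdiv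
  exact (ENNReal.mul_le_mul_iff_left (ENNReal.inv_ne_zero.2 ENNReal.ofReal_ne_top)
    (ENNReal.inv_ne_top.2 hp_ne)).1 hdiv

theorem polya_szego (hp : 1 < p) (hf_bdd : BddAbove (range f)) (hf : Measurable f)
    (hf₀ : ∀ x, 0 ≤ f x) (hr : r₀ < r) (hr₀ : ∀ x, r₀ ≤ ‖x‖ → f x = 0)
    (hw : IsRadialRearrangement μ f w) (hW : Measurable fun x : E => w ‖x‖)
    (hW₀ : ∀ x : E, 0 ≤ w ‖x‖) {G : E → ℝ} (hG₀ : ∀ x, 0 ≤ G x) (hG_bdd : BddAbove (range G))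
    (hG : Measurable G) (hslope : IsUniformSlopeBound f G) :
    ∫⁻ x, ENNReal.ofReal (‖fderiv ℝ (fun x : E => w ‖x‖) x‖ ^ p) ∂μ ≤
      ∫⁻ x in ball 0 r, ENNReal.ofReal (G x ^ p) ∂μ := by
  obtain ⟨B, hB⟩ := hG_bdd
  have hp₀ : 0 ≤ p := by linarith
  have hlim : Tendsto
      (fun n : ℕ => ∫⁻ x in ball 0 r, ENNReal.ofReal ((G x + 1 / ((n : ℝ) + 1)) ^ p) ∂μ) atTop
      (𝓝 (∫⁻ x in ball 0 r, ENNReal.ofReal (G x ^ p) ∂μ)) := by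
    refine tendsto_lintegral_of_dominated_convergence (fun _ => ENNReal.ofReal ((B + 1) ^ p))
      (fun n => by fun_prop) (fun n => .of_forall fun x => ENNReal.ofReal_le_ofReal ?_)
      (by simp [ENNReal.mul_eq_top, measure_ball_lt_top.ne]) (.of_forall fun x => ?_)
    · have hn : 1 / ((n : ℝ) + 1) ≤ 1 := by
        rw [div_le_one (by positivity)]
        linarith [(n.cast_nonneg : (0 : ℝ) ≤ n)]
      have := hG₀ x
      have := hB (mem_range_self x)
      gcongr
    · have : Tendsto (fun n : ℕ => G x + 1 / ((n : ℝ) + 1)) atTop (𝓝 (G x)) := by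
        simpa using tendsto_one_div_add_atTop_nhds_zero_nat.const_add (G x)
      exact (ENNReal.continuous_ofReal.tendsto _).comp (this.rpow_const (.inr hp₀))
  refine ge_of_tendsto' hlim fun n => ?_
  obtain ⟨h, hh, hslope_h⟩ := hslope (1 / ((n : ℝ) + 1)) (by positivity)
  exact lintegral_norm_fderiv_radial_rpow_le hp hf_bdd hf hf₀ hr hr₀ hw hW hW₀
    (fun x => add_nonneg (hG₀ x) (by positivity)) hh hslope_h

end PolyaSzego

end HopfLax

/-! ### The Dirichlet eigenvalue and its near-minimizers -/

section Sobolev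

variable {E : Type*} [NormedAddCommGroup E] [NormedSpace ℝ E] [FiniteDimensional ℝ E]
  [MeasurableSpace E] [BorelSpace E]

lemma exists_subcritical_exponent {N : ℕ} (hN : 2 ≤ N) {p q : ℝ} (hp : 1 ≤ p) (hq : 0 < q)
    (h : ltCritical N p q) : ∃ P, 1 ≤ P ∧ P ≤ p ∧ P < N ∧ P⁻¹ - (N : ℝ)⁻¹ ≤ q⁻¹ := by
  have hN' : (2 : ℝ) ≤ N := by exact_mod_cast hN
  rcases lt_or_ge p N with hpN | hpN
  · refine ⟨p, hp, le_rfl, hpN, ?_⟩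
    have hconj : p⁻¹ - (N : ℝ)⁻¹ = (N * p / (N - p))⁻¹ := by
      have : (N : ℝ) - p ≠ 0 := by linarith
      field_simp
    exact hconj ▸ inv_anti₀ hq (h hpN).le
  · have hlt : ((N : ℝ)⁻¹ + q⁻¹)⁻¹ < N :=
      inv_lt_of_inv_lt₀ (by linarith) (lt_add_of_pos_right _ (inv_pos.2 hq))
    refine ⟨max 1 ((N : ℝ)⁻¹ + q⁻¹)⁻¹, le_max_left _ _, max_le hp (hlt.le.trans hpN),
      max_lt (by linarith) hlt, ?_⟩
    have := inv_anti₀ (by positivity) (le_max_right 1 ((N : ℝ)⁻¹ + q⁻¹)⁻¹)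
    rw [inv_inv] at this
    linarith

lemma exists_eLpNorm_le_mul_eLpNorm_fderiv (μ : Measure E) [μ.IsAddHaarMeasure]
    (hE : 2 ≤ Module.finrank ℝ E) {p q : ℝ≥0} (hp : 1 ≤ p) (hq : 0 < q)
    (h : ltCritical (Module.finrank ℝ E) p q) {s : Set E} (hs : Bornology.IsBounded s) :
    ∃ C : ℝ≥0, ∀ v : E → ℝ, ContDiff ℝ 1 v → tsupport v ⊆ s →
      eLpNorm v q μ ≤ C * eLpNorm (fderiv ℝ v) p μ := by
  obtain ⟨P, hP, hPp, hPE, hPq⟩ := exists_subcritical_exponent hE hp hq h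
  lift P to ℝ≥0 using zero_le_one.trans hP
  have hV : μ s ^ (1 / (P : ℝ) - 1 / p) ≠ ∞ :=
    ENNReal.rpow_ne_top_of_nonneg
      (sub_nonneg.2 (one_div_le_one_div_of_le (by positivity) hPp)) hs.measure_lt_top.ne
  refine ⟨eLpNormLESNormFDerivOfLeConst ℝ μ s P q * (μ s ^ (1 / (P : ℝ) - 1 / p)).toNNReal,
    fun v hv hsupp => ?_⟩
  have hfderiv (t : ℝ≥0) :
      eLpNorm (fderiv ℝ v) t (μ.restrict s) = eLpNorm (fderiv ℝ v) t μ :=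
    eLpNorm_restrict_eq_of_support_subset (ε := E →L[ℝ] ℝ)
      ((support_fderiv_subset ℝ).trans hsupp)
  have hPp' := eLpNorm_le_eLpNorm_mul_rpow_measure_univ (μ := μ.restrict s)
    (p := (P : ℝ≥0∞)) (q := (p : ℝ≥0∞)) (by exact_mod_cast hPp)
    (hv.continuous_fderiv one_ne_zero).aestronglyMeasurable
  rw [hfderiv, hfderiv, Measure.restrict_apply_univ] at hPp'
  calc eLpNorm v q μ
      ≤ eLpNormLESNormFDerivOfLeConst ℝ μ s P q * eLpNorm (fderiv ℝ v) P μ :=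
        eLpNorm_le_eLpNorm_fderiv_of_le μ hv ((subset_tsupport v).trans hsupp) hP
          (by exact_mod_cast hPE) hPq hs
    _ ≤ eLpNormLESNormFDerivOfLeConst ℝ μ s P q *
          (eLpNorm (fderiv ℝ v) p μ * μ s ^ (1 / (P : ℝ) - 1 / p)) := by gcongr; exact hPp'
    _ = _ := by rw [ENNReal.coe_mul, ENNReal.coe_toNNReal hV]; ring

lemma exists_integral_rpow_le_integral_norm_fderiv_rpow (μ : Measure E) [μ.IsAddHaarMeasure]
    (hE : 2 ≤ Module.finrank ℝ E) {p q : ℝ} (hp : 1 ≤ p) (hq : 0 < q)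
    (h : ltCritical (Module.finrank ℝ E) p q) {s : Set E} (hs : Bornology.IsBounded s) :
    ∃ C > 0, ∀ v : E → ℝ, ContDiff ℝ 1 v → HasCompactSupport v → tsupport v ⊆ s →
      (∫ x, |v x| ^ q ∂μ) ^ q⁻¹ ≤ C * (∫ x, ‖fderiv ℝ v x‖ ^ p ∂μ) ^ p⁻¹ := by
  lift p to ℝ≥0 using zero_le_one.trans hp
  lift q to ℝ≥0 using hq.le
  have hp₀ : (p : ℝ≥0∞) ≠ 0 := by
    have : 0 < p := zero_lt_one.trans_le hp
    exact_mod_cast this.ne'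
  have hq₀ : (q : ℝ≥0∞) ≠ 0 := by
    have : 0 < q := hq
    exact_mod_cast this.ne'
  obtain ⟨C, hC⟩ := exists_eLpNorm_le_mul_eLpNorm_fderiv μ hE hp hq h hs
  refine ⟨C + 1, by positivity, fun v hv hcompact hsupp => ?_⟩
  have hv_Lq : MemLp v q μ := hv.continuous.memLp_of_hasCompactSupport hcompact
  have hfderiv_Lp : MemLp (fderiv ℝ v) p μ :=
    (hv.continuous_fderiv one_ne_zero).memLp_of_hasCompactSupport (hcompact.fderiv ℝ)
  have hle := hC v hv hsupp
  rw [hv_Lq.eLpNorm_eq_integral_rpow_norm hq₀ ENNReal.coe_ne_top,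
    hfderiv_Lp.eLpNorm_eq_integral_rpow_norm hp₀ ENNReal.coe_ne_top,
    ← ENNReal.ofReal_coe_nnreal (p := C), ← ENNReal.ofReal_mul C.coe_nonneg] at hle
  simp only [ENNReal.coe_toReal, norm_eq_abs] at hle
  have hnonneg : 0 ≤ (∫ x, ‖fderiv ℝ v x‖ ^ (p : ℝ) ∂μ) ^ (p : ℝ)⁻¹ :=
    rpow_nonneg (integral_nonneg fun x => by positivity) _
  exact ((ENNReal.ofReal_le_ofReal_iff (by positivity)).1 hle).trans
    (mul_le_mul_of_nonneg_right (lt_add_one _).le hnonneg)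

end Sobolev

section TestFunction

/-- Test functions on `Ω`: the competitors in the definition of `lambdaPQ`, the zero function
included. -/
structure IsTestFunction {E : Type*} [NormedAddCommGroup E] [NormedSpace ℝ E] (Ω : Set E)
    (v : E → ℝ) : Prop where
  contDiff : ContDiff ℝ (⊤ : ℕ∞) v
  hasCompactSupport : HasCompactSupport v
  tsupport_subset : tsupport v ⊆ Ω

namespace IsTestFunction

variable {E : Type*} [NormedAddCommGroup E] [NormedSpace ℝ E] {Ω : Set E} {v : E → ℝ}

lemma eq_zero_of_notMem (h : IsTestFunction Ω v) {x : E} (hx : x ∉ Ω) : v x = 0 :=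
  image_eq_zero_of_notMem_tsupport fun hx' => hx (h.tsupport_subset hx')

lemma fderiv_eq_zero_of_notMem (h : IsTestFunction Ω v) {x : E} (hx : x ∉ Ω) :
    fderiv ℝ v x = 0 :=
  image_eq_zero_of_notMem_tsupport fun hx' =>
    hx (h.tsupport_subset (tsupport_fderiv_subset ℝ hx'))

lemma continuous_fderiv (h : IsTestFunction Ω v) : Continuous (fderiv ℝ v) :=
  h.contDiff.continuous_fderiv (by simp)

lemma continuous_abs_rpow (h : IsTestFunction Ω v) {q : ℝ} (hq : 0 < q) :
    Continuous fun x => |v x| ^ q :=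
  h.contDiff.continuous.abs.rpow_const fun _ => .inr hq.le

lemma const_mul (h : IsTestFunction Ω v) (k : ℝ) : IsTestFunction Ω fun x => k * v x where
  contDiff := contDiff_const.mul h.contDiff
  hasCompactSupport := h.hasCompactSupport.mul_left
  tsupport_subset := (tsupport_mul_subset_right (f := fun _ => k)).trans h.tsupport_subset

lemma comp_add_right (h : IsTestFunction Ω v) (c : E) :
    IsTestFunction ((· + c) ⁻¹' Ω) fun x => v (x + c) where
  contDiff := h.contDiff.comp (contDiff_id.add contDiff_const)
  hasCompactSupport := h.hasCompactSupport.comp_homeomorph (Homeomorph.addRight c)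
  tsupport_subset := by
    rw [show tsupport (fun x => v (x + c)) = (· + c) ⁻¹' tsupport v from
      tsupport_comp_eq_preimage v (Homeomorph.addRight c)]
    exact preimage_mono h.tsupport_subset

variable [MeasurableSpace E] {μ : Measure E} {q : ℝ}

lemma setIntegral_abs_rpow (h : IsTestFunction Ω v) (hq : 0 < q) :
    ∫ x in Ω, |v x| ^ q ∂μ = ∫ x, |v x| ^ q ∂μ :=
  setIntegral_eq_integral_of_forall_compl_eq_zero fun x hx => by
    rw [h.eq_zero_of_notMem hx, abs_zero, zero_rpow hq.ne']

lemma setIntegral_norm_fderiv_rpow (h : IsTestFunction Ω v) (hq : 0 < q) :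
    ∫ x in Ω, ‖fderiv ℝ v x‖ ^ q ∂μ = ∫ x, ‖fderiv ℝ v x‖ ^ q ∂μ :=
  setIntegral_eq_integral_of_forall_compl_eq_zero fun x hx => by
    rw [h.fderiv_eq_zero_of_notMem hx, norm_zero, zero_rpow hq.ne']

variable [OpensMeasurableSpace E] [IsFiniteMeasureOnCompacts μ]

lemma integrable_abs_rpow (h : IsTestFunction Ω v) (hq : 0 < q) :
    Integrable (fun x => |v x| ^ q) μ :=
  (h.continuous_abs_rpow hq).integrable_of_hasCompactSupport
    (h.hasCompactSupport.comp_left (g := fun z : ℝ => |z| ^ q) (by simp [zero_rpow hq.ne']))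

lemma integrable_norm_fderiv_rpow (h : IsTestFunction Ω v) (hq : 0 < q) :
    Integrable (fun x => ‖fderiv ℝ v x‖ ^ q) μ :=
  (h.continuous_fderiv.norm.rpow_const fun _ => .inr hq.le).integrable_of_hasCompactSupport
    ((h.hasCompactSupport.fderiv ℝ).comp_left (g := fun D : E →L[ℝ] ℝ => ‖D‖ ^ q)
      (by simp [zero_rpow hq.ne']))

lemma integral_abs_rpow_pos [μ.IsOpenPosMeasure] (h : IsTestFunction Ω v) (hq : 0 < q)
    (hv : v ≠ 0) : 0 < ∫ x, |v x| ^ q ∂μ := by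
  rw [integral_pos_iff_support_of_nonneg (fun x => by positivity) (h.integrable_abs_rpow hq)]
  obtain ⟨x, hx⟩ := Function.ne_iff.1 hv
  exact (h.continuous_abs_rpow hq).isOpen_support.measure_pos μ
    ⟨x, (rpow_pos_of_pos (abs_pos.2 hx) q).ne'⟩

end IsTestFunction

variable {N : ℕ} {p q r : ℝ} {Ω : Set (EuclideanSpace ℝ (Fin N))}
  {v : EuclideanSpace ℝ (Fin N) → ℝ}

lemma rayleighQuot_nonneg (p q : ℝ) (Ω : Set (EuclideanSpace ℝ (Fin N)))
    (v : EuclideanSpace ℝ (Fin N) → ℝ) : 0 ≤ rayleighQuot p q Ω v :=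
  div_nonneg (integral_nonneg fun x => by positivity)
    (rpow_nonneg (integral_nonneg fun x => by positivity) _)

lemma IsTestFunction.rayleighQuot_eq (h : IsTestFunction Ω v) (hp : 0 < p) (hq : 0 < q) :
    rayleighQuot p q Ω v = (∫ x, ‖fderiv ℝ v x‖ ^ p) / (∫ x, |v x| ^ q) ^ (p / q) := by
  rw [rayleighQuot, h.setIntegral_abs_rpow hq, h.setIntegral_norm_fderiv_rpow hp]

lemma rayleighQuot_comp_add_right (p q : ℝ) (Ω : Set (EuclideanSpace ℝ (Fin N)))
    (v : EuclideanSpace ℝ (Fin N) → ℝ) (c : EuclideanSpace ℝ (Fin N)) :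
    rayleighQuot p q ((· + c) ⁻¹' Ω) (fun x => v (x + c)) = rayleighQuot p q Ω v := by
  have htranslate (f : EuclideanSpace ℝ (Fin N) → ℝ) :
      ∫ x in (· + c) ⁻¹' Ω, f (x + c) = ∫ x in Ω, f x :=
    (measurePreserving_add_right volume c).setIntegral_preimage_emb
      (measurableEmbedding_addRight c) f Ω
  simp only [rayleighQuot, fderiv_comp_add_right]
  rw [htranslate fun x => ‖fderiv ℝ v x‖ ^ p, htranslate fun x => |v x| ^ q]

lemma lambdaPQ_eq_sInf_image (p q : ℝ) (Ω : Set (EuclideanSpace ℝ (Fin N))) :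
    lambdaPQ p q Ω = sInf (rayleighQuot p q Ω '' {v | IsTestFunction Ω v ∧ v ≠ 0}) := by
  unfold lambdaPQ
  congr 1
  ext R
  constructor
  · rintro ⟨v, hv, hcompact, hsupp, ⟨x, -, hx⟩, rfl⟩
    exact ⟨v, ⟨⟨hv, hcompact, hsupp⟩, Function.ne_iff.2 ⟨x, hx⟩⟩, rfl⟩
  · rintro ⟨v, ⟨h, hv⟩, rfl⟩
    obtain ⟨x, hx⟩ := Function.ne_iff.1 hv
    exact ⟨v, h.contDiff, h.hasCompactSupport, h.tsupport_subset,
      ⟨x, not_imp_comm.1 h.eq_zero_of_notMem hx, hx⟩, rfl⟩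

lemma lambdaPQ_nonneg (p q : ℝ) (Ω : Set (EuclideanSpace ℝ (Fin N))) : 0 ≤ lambdaPQ p q Ω := by
  rw [lambdaPQ_eq_sInf_image]
  exact Real.sInf_nonneg (forall_mem_image.2 fun v _ => rayleighQuot_nonneg p q Ω v)

lemma lambdaPQ_preimage_add_right (p q : ℝ) (Ω : Set (EuclideanSpace ℝ (Fin N)))
    (c : EuclideanSpace ℝ (Fin N)) : lambdaPQ p q ((· + c) ⁻¹' Ω) = lambdaPQ p q Ω := by
  have hsubset (Ω : Set (EuclideanSpace ℝ (Fin N))) (c : EuclideanSpace ℝ (Fin N)) :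
      rayleighQuot p q Ω '' {v | IsTestFunction Ω v ∧ v ≠ 0} ⊆
        rayleighQuot p q ((· + c) ⁻¹' Ω) '' {v | IsTestFunction ((· + c) ⁻¹' Ω) v ∧ v ≠ 0} := by
    rintro _ ⟨v, ⟨h, hv⟩, rfl⟩
    obtain ⟨x, hx⟩ := Function.ne_iff.1 hv
    exact ⟨_, ⟨h.comp_add_right c, Function.ne_iff.2 ⟨x - c, by simpa using hx⟩⟩,
      rayleighQuot_comp_add_right p q Ω v c⟩
  rw [lambdaPQ_eq_sInf_image, lambdaPQ_eq_sInf_image]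
  refine congrArg sInf ((hsubset Ω c).antisymm' ?_)
  simpa [preimage_preimage] using hsubset ((· + c) ⁻¹' Ω) (-c)

lemma lambdaPQ_ball (p q : ℝ) (c : EuclideanSpace ℝ (Fin N)) (r : ℝ) :
    lambdaPQ p q (ball c r) = lambdaPQ p q (ball (0 : EuclideanSpace ℝ (Fin N)) r) := by
  rw [← lambdaPQ_preimage_add_right p q (ball c r) c]
  congr 1
  ext x
  simp [dist_eq_norm]

lemma IsTestFunction.lambdaPQ_mul_le (h : IsTestFunction Ω v) (hp : 0 < p) (hq : 0 < q) :
    lambdaPQ p q Ω * (∫ x, |v x| ^ q) ^ (p / q) ≤ ∫ x, ‖fderiv ℝ v x‖ ^ p := by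
  rcases eq_or_ne v 0 with rfl | hv
  · simp [zero_rpow hp.ne', zero_rpow hq.ne', zero_rpow (div_pos hp hq).ne']
  · have hpos := h.integral_abs_rpow_pos (μ := volume) hq hv
    rw [← le_div_iff₀ (by positivity), ← h.rayleighQuot_eq hp hq, lambdaPQ_eq_sInf_image]
    exact csInf_le ⟨0, forall_mem_image.2 fun v _ => rayleighQuot_nonneg p q Ω v⟩
      (mem_image_of_mem _ ⟨h, hv⟩)

lemma exists_isTestFunction_ne_zero (hΩ : IsOpen Ω) (hΩ' : Ω.Nonempty) :
    ∃ v, IsTestFunction Ω v ∧ v ≠ 0 := by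
  obtain ⟨c, hc⟩ := hΩ'
  obtain ⟨v, hsupp, hcompact, hv, -, hvc⟩ :=
    exists_contDiff_tsupport_subset (n := (⊤ : ℕ∞)) (hΩ.mem_nhds hc)
  exact ⟨v, ⟨hv, hcompact, hsupp⟩, Function.ne_iff.2 ⟨c, by simp [hvc]⟩⟩

/-- Normalized test functions whose energy exceeds the eigenvalue by less than `ε`; they replace
minimizers, so that no compactness argument is needed. -/
structure IsNearMinimizer (p q ε : ℝ) (Ω : Set (EuclideanSpace ℝ (Fin N)))
    (v : EuclideanSpace ℝ (Fin N) → ℝ) : Prop extends IsTestFunction Ω v where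
  integral_abs_rpow_eq_one : ∫ x, |v x| ^ q = 1
  integral_norm_fderiv_rpow_lt : ∫ x, ‖fderiv ℝ v x‖ ^ p < lambdaPQ p q Ω + ε

lemma exists_isNearMinimizer (hΩ : IsOpen Ω) (hΩ' : Ω.Nonempty)
    (hp : 0 < p) (hq : 0 < q) {ε : ℝ} (hε : 0 < ε) :
    ∃ v, IsNearMinimizer p q ε Ω v := by
  have hlt : sInf (rayleighQuot p q Ω '' {v | IsTestFunction Ω v ∧ v ≠ 0}) < lambdaPQ p q Ω + ε :=
    lambdaPQ_eq_sInf_image p q Ω ▸ lt_add_of_pos_right _ hε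
  obtain ⟨_, ⟨v, ⟨h, hv⟩, rfl⟩, hR⟩ := exists_lt_of_csInf_lt
    (nonempty_def.2 (exists_isTestFunction_ne_zero hΩ hΩ') |>.image _) hlt
  rw [h.rayleighQuot_eq hp hq] at hR
  have hpos := h.integral_abs_rpow_pos (μ := volume) hq hv
  set I := ∫ x, |v x| ^ q
  have hk : 0 < I ^ (-q⁻¹) := rpow_pos_of_pos hpos _
  refine ⟨fun x => I ^ (-q⁻¹) * v x, ⟨h.const_mul _, ?_, ?_⟩⟩
  · simp_rw [abs_mul, abs_of_pos hk, mul_rpow hk.le (abs_nonneg _)]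
    rw [integral_const_mul, ← rpow_mul hpos.le, neg_mul, inv_mul_cancel₀ hq.ne', rpow_neg_one,
      inv_mul_cancel₀ hpos.ne']
  · have hfderiv (x) : ‖fderiv ℝ (fun x => I ^ (-q⁻¹) * v x) x‖ ^ p =
        (I ^ (p / q))⁻¹ * ‖fderiv ℝ v x‖ ^ p := by
      rw [fderiv_const_mul (h.contDiff.differentiable (by simp) x), norm_smul,
        norm_of_nonneg hk.le, mul_rpow hk.le (norm_nonneg _), ← rpow_mul hpos.le,
        ← rpow_neg hpos.le, neg_mul, inv_mul_eq_div]
    simp_rw [hfderiv]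
    rwa [integral_const_mul, inv_mul_eq_div]

lemma lambdaPQ_pos (hN : 2 ≤ N) (hp : 1 ≤ p) (hq : 0 < q) (h : ltCritical N p q)
    (hΩ : IsOpen Ω) (hΩ' : Ω.Nonempty) (hΩ_bdd : Bornology.IsBounded Ω) :
    0 < lambdaPQ p q Ω := by
  have hp₀ : 0 < p := by linarith
  obtain ⟨C, hC, hsobolev⟩ := exists_integral_rpow_le_integral_norm_fderiv_rpow
    (volume : Measure (EuclideanSpace ℝ (Fin N))) (by simpa using hN) hp hq (by simpa using h)
    hΩ_bdd
  refine (rpow_pos_of_pos (inv_pos.2 hC) p).trans_le (le_of_forall_pos_le_add fun ε hε => ?_)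
  obtain ⟨v, hv⟩ := exists_isNearMinimizer hΩ hΩ' hp₀ hq hε
  have hle := hsobolev v (hv.contDiff.of_le (by simp)) hv.hasCompactSupport hv.tsupport_subset
  rw [hv.integral_abs_rpow_eq_one, one_rpow, ← inv_le_iff_one_le_mul₀' hC,
    le_rpow_inv_iff_of_pos (by positivity) (integral_nonneg fun x => by positivity) hp₀] at hle
  exact hle.trans hv.integral_norm_fderiv_rpow_lt.le

end TestFunction

/-! ### Gradient estimates for the rearranged near-minimizers -/

section FirstVariation

/-- A smooth function of `|z|` that is `0` for `|z| ≤ a` and `1` for `b ≤ |z|`. -/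
noncomputable def levelCutoff (a b z : ℝ) : ℝ :=
  smoothTransition ((z ^ 2 - a ^ 2) / (b ^ 2 - a ^ 2))

variable {a b z : ℝ}

lemma contDiff_levelCutoff : ContDiff ℝ (⊤ : ℕ∞) (levelCutoff a b) :=
  smoothTransition.contDiff.comp (((contDiff_id.pow 2).sub contDiff_const).div_const _)

lemma levelCutoff_nonneg : 0 ≤ levelCutoff a b z := smoothTransition.nonneg _

lemma levelCutoff_le_one : levelCutoff a b z ≤ 1 := smoothTransition.le_one _

lemma levelCutoff_eq_zero (ha : 0 ≤ a) (hab : a ≤ b) (hz : |z| ≤ a) : levelCutoff a b z = 0 :=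
  smoothTransition.zero_of_nonpos (div_nonpos_of_nonpos_of_nonneg
    (sub_nonpos.2 (sq_le_sq' (neg_le_of_abs_le hz) (le_of_abs_le hz)))
    (sub_nonneg.2 (pow_le_pow_left₀ ha hab 2)))

lemma levelCutoff_eq_one (ha : 0 ≤ a) (hab : a < b) (hz : b ≤ |z|) : levelCutoff a b z = 1 := by
  have hpos : 0 < b ^ 2 - a ^ 2 := sub_pos.2 (pow_lt_pow_left₀ hab ha two_ne_zero)
  refine smoothTransition.one_of_one_le ((one_le_div hpos).2 ?_)
  rw [← sq_abs z]
  gcongr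
  exact ha.trans hab.le

lemma exists_contDiff_hasDerivAt_one_sub {χ : ℝ → ℝ} (hχ : ContDiff ℝ (⊤ : ℕ∞) χ)
    (h0 : ∀ z, |z| ≤ a → χ z = 0) : ∃ Ψ : ℝ → ℝ, ContDiff ℝ (⊤ : ℕ∞) Ψ ∧
      (∀ y, HasDerivAt Ψ (1 - χ y) y) ∧ Ψ 0 = 0 ∧ ∀ y, |y| ≤ a → Ψ y = y := by
  have hcont : Continuous fun z => 1 - χ z := continuous_const.sub hχ.continuous
  have hderiv (y : ℝ) : HasDerivAt (fun y => ∫ z in 0..y, (1 - χ z)) (1 - χ y) y :=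
    (hcont.integral_hasStrictDerivAt 0 y).hasDerivAt
  refine ⟨fun y => ∫ z in 0..y, (1 - χ z), contDiff_infty_iff_deriv.2
    ⟨fun y => (hderiv y).differentiableAt, ?_⟩, hderiv, by simp, fun y hy => ?_⟩
  · rw [show deriv (fun y => ∫ z in 0..y, (1 - χ z)) = fun z => 1 - χ z from
      funext fun y => (hderiv y).deriv]
    exact contDiff_const.sub hχ
  · have hcongr : ∫ z in 0..y, (1 - χ z) = ∫ _ in 0..y, (1 : ℝ) :=
      intervalIntegral.integral_congr fun z hz => by
        have hzy : |z| ≤ |y| := by simpa using abs_sub_left_of_mem_uIcc hz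
        simp [h0 z (hzy.trans hy)]
    simp [hcongr]

lemma IsTestFunction.comp {E : Type*} [NormedAddCommGroup E] [NormedSpace ℝ E] {Ω : Set E}
    {v : E → ℝ} (h : IsTestFunction Ω v) {Ψ : ℝ → ℝ} (hΨ : ContDiff ℝ (⊤ : ℕ∞) Ψ)
    (hΨ₀ : Ψ 0 = 0) : IsTestFunction Ω (Ψ ∘ v) where
  contDiff := hΨ.comp h.contDiff
  hasCompactSupport := h.hasCompactSupport.comp_left hΨ₀
  tsupport_subset := (closure_mono (Function.support_comp_subset hΨ₀ v)).trans h.tsupport_subset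

variable {N : ℕ} {p q ε : ℝ} {Ω : Set (EuclideanSpace ℝ (Fin N))}
  {v : EuclideanSpace ℝ (Fin N) → ℝ} {χ : ℝ → ℝ}

lemma IsTestFunction.integrable_norm_fderiv_rpow_mul (h : IsTestFunction Ω v) (hp : 0 < p)
    (hχ : Continuous χ) (hχ₀ : ∀ z, 0 ≤ χ z) (hχ₁ : ∀ z, χ z ≤ 1) :
    Integrable fun x => ‖fderiv ℝ v x‖ ^ p * χ (v x) := by
  refine (h.integrable_norm_fderiv_rpow hp).mono' ((h.continuous_fderiv.norm.rpow_const
    fun _ => .inr hp.le).mul (hχ.comp h.contDiff.continuous)).aestronglyMeasurable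
    (.of_forall fun x => ?_)
  rw [norm_mul, norm_of_nonneg (hχ₀ _), norm_of_nonneg (by positivity)]
  exact mul_le_of_le_one_right (by positivity) (hχ₁ _)

lemma IsTestFunction.integral_norm_fderiv_comp_rpow_le (h : IsTestFunction Ω v) (hp : 1 ≤ p)
    (hχ : Continuous χ) (hχ₀ : ∀ z, 0 ≤ χ z) (hχ₁ : ∀ z, χ z ≤ 1) {Ψ : ℝ → ℝ}
    (hΨ : IsTestFunction Ω (Ψ ∘ v)) (hderiv : ∀ y, HasDerivAt Ψ (1 - χ y) y) :
    ∫ x, ‖fderiv ℝ (Ψ ∘ v) x‖ ^ p ≤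
      (∫ x, ‖fderiv ℝ v x‖ ^ p) - ∫ x, ‖fderiv ℝ v x‖ ^ p * χ (v x) := by
  have hp₀ : 0 < p := by linarith
  have hint := h.integrable_norm_fderiv_rpow (μ := volume) hp₀
  have hint_χ := h.integrable_norm_fderiv_rpow_mul hp₀ hχ hχ₀ hχ₁
  rw [← integral_sub hint hint_χ]
  refine integral_mono (hΨ.integrable_norm_fderiv_rpow hp₀) (hint.sub hint_χ) fun x => ?_
  have hfderiv : HasFDerivAt (Ψ ∘ v) ((1 - χ (v x)) • fderiv ℝ v x) x :=
    (hderiv (v x)).comp_hasFDerivAt x (h.contDiff.differentiable (by simp) x).hasFDerivAt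
  have hnonneg : 0 ≤ 1 - χ (v x) := sub_nonneg.2 (hχ₁ _)
  have hrpow : (1 - χ (v x)) ^ p ≤ 1 - χ (v x) :=
    rpow_le_self_of_le_one hnonneg (by linarith [hχ₀ (v x)]) hp
  calc ‖fderiv ℝ (Ψ ∘ v) x‖ ^ p = (1 - χ (v x)) ^ p * ‖fderiv ℝ v x‖ ^ p := by
        rw [hfderiv.fderiv, norm_smul, norm_of_nonneg hnonneg, mul_rpow hnonneg (norm_nonneg _)]
    _ ≤ (1 - χ (v x)) * ‖fderiv ℝ v x‖ ^ p := by gcongr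
    _ = ‖fderiv ℝ v x‖ ^ p - ‖fderiv ℝ v x‖ ^ p * χ (v x) := by ring

lemma IsTestFunction.sub_setIntegral_superlevel_le (h : IsTestFunction Ω v) (hq : 0 < q)
    {u : EuclideanSpace ℝ (Fin N) → ℝ} (hu : IsTestFunction Ω u)
    (huv : ∀ x, |v x| ≤ a → u x = v x) :
    (∫ x, |v x| ^ q) - ∫ x in {x | a < |v x|}, |v x| ^ q ≤ ∫ x, |u x| ^ q := by
  have hmeas : MeasurableSet {x | a < |v x|} :=
    measurableSet_lt measurable_const h.contDiff.continuous.abs.measurable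
  have hint := h.integrable_abs_rpow (μ := volume) hq
  rw [sub_le_iff_le_add', ← integral_add_compl hmeas hint, add_le_add_iff_left,
    ← integral_indicator hmeas.compl]
  refine integral_mono (hint.indicator hmeas.compl) (hu.integrable_abs_rpow hq) fun x => ?_
  refine indicator_apply_le' (fun hx => ?_) fun _ => by positivity
  rw [huv x (not_lt.1 hx)]

/- Comparing `v` with `Ψ ∘ v`, where `Ψ' = 1 - χ` and `Ψ = id` near `0`: since `p ≤ q`, the mass
`1 - J` that `Ψ ∘ v` keeps satisfies `1 - J ≤ (1 - J) ^ (p / q)`. -/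
lemma IsNearMinimizer.integral_norm_fderiv_rpow_mul_le (h : IsNearMinimizer p q ε Ω v)
    (hp : 1 ≤ p) (hpq : p ≤ q) (hχ : ContDiff ℝ (⊤ : ℕ∞) χ) (ha : ∀ z, |z| ≤ a → χ z = 0)
    (hχ₀ : ∀ z, 0 ≤ χ z) (hχ₁ : ∀ z, χ z ≤ 1) :
    ∫ x, ‖fderiv ℝ v x‖ ^ p * χ (v x) ≤
      lambdaPQ p q Ω * (∫ x in {x | a < |v x|}, |v x| ^ q) + ε := by
  have hp₀ : 0 < p := by linarith
  have hq₀ : 0 < q := by linarith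
  obtain ⟨Ψ, hΨ, hderiv, hΨ₀, hΨ_eq⟩ := exists_contDiff_hasDerivAt_one_sub hχ ha
  have hΨv : IsTestFunction Ω (Ψ ∘ v) := h.comp hΨ hΨ₀
  have hmass := h.sub_setIntegral_superlevel_le hq₀ hΨv fun x hx => hΨ_eq (v x) hx
  have henergy := h.integral_norm_fderiv_comp_rpow_le hp hχ.continuous hχ₀ hχ₁ hΨv hderiv
  have hJ₀ : 0 ≤ ∫ x in {x | a < |v x|}, |v x| ^ q := integral_nonneg fun x => by positivity
  have hJ₁ : ∫ x in {x | a < |v x|}, |v x| ^ q ≤ 1 := h.integral_abs_rpow_eq_one ▸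
    setIntegral_le_integral (h.integrable_abs_rpow hq₀) (.of_forall fun x => by positivity)
  rw [h.integral_abs_rpow_eq_one] at hmass
  set J := ∫ x in {x | a < |v x|}, |v x| ^ q
  have hpow : 1 - J ≤ (∫ x, |(Ψ ∘ v) x| ^ q) ^ (p / q) :=
    calc 1 - J ≤ (1 - J) ^ (p / q) :=
          self_le_rpow_of_le_one (by linarith) (by linarith) ((div_le_one hq₀).2 hpq)
      _ ≤ _ := rpow_le_rpow (by linarith) hmass (by positivity)
  have := mul_le_mul_of_nonneg_left hpow (lambdaPQ_nonneg p q Ω)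
  linarith [hΨv.lambdaPQ_mul_le hp₀ hq₀, h.integral_norm_fderiv_rpow_lt]

end FirstVariation

section SlopeBound

variable {E : Type*} [NormedAddCommGroup E] [NormedSpace ℝ E] {f : E → ℝ}

lemma isUniformSlopeBound_abs (hf : Differentiable ℝ f) (hf' : UniformContinuous (fderiv ℝ f)) :
    IsUniformSlopeBound (fun x => |f x|) fun x => ‖fderiv ℝ f x‖ := by
  intro η hη
  obtain ⟨h, hh, hclose⟩ := Metric.uniformContinuous_iff.1 hf' η hη
  refine ⟨h, hh, fun x y hxy => ?_⟩
  have hfderiv : ∀ z ∈ ball x h, ‖fderiv ℝ f z‖ ≤ ‖fderiv ℝ f x‖ + η := fun z hz => by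
    have := hclose hz
    rw [dist_eq_norm] at this
    linarith [norm_le_norm_sub_add (fderiv ℝ f z) (fderiv ℝ f x)]
  have := (convex_ball x h).norm_image_sub_le_of_norm_fderiv_le (fun z _ => hf z) hfderiv
    (mem_ball_self hh) (by rwa [mem_ball, dist_eq_norm, norm_sub_rev])
  rw [norm_sub_rev y x] at this
  linarith [norm_le_norm_sub_add (f y) (f x), norm_eq_abs (f x), norm_eq_abs (f y)]

lemma isUniformSlopeBound_max_abs_sub (hf : Differentiable ℝ f) (hf_unif : UniformContinuous f)
    (hf' : UniformContinuous (fderiv ℝ f)) {χ : ℝ → ℝ} {b s : ℝ} (hbs : b < s)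
    (hχ₀ : ∀ z, 0 ≤ χ z) (hχ₁ : ∀ z, b ≤ |z| → χ z = 1) :
    IsUniformSlopeBound (fun x => max (|f x| - s) 0) fun x => ‖fderiv ℝ f x‖ * χ (f x) := by
  intro η hη
  obtain ⟨h, hh, hslope⟩ := isUniformSlopeBound_abs hf hf' η hη
  obtain ⟨h', hh', hclose⟩ := Metric.uniformContinuous_iff.1 hf_unif (s - b) (sub_pos.2 hbs)
  refine ⟨min h h', lt_min hh hh', fun x y hxy => ?_⟩
  have hnonneg : 0 ≤ (‖fderiv ℝ f x‖ * χ (f x) + η) * ‖x - y‖ := by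
    have := hχ₀ (f x)
    positivity
  change max (|f y| - s) 0 ≤ max (|f x| - s) 0 + (‖fderiv ℝ f x‖ * χ (f x) + η) * ‖x - y‖
  rcases le_or_gt b |f x| with hx | hx
  · rw [hχ₁ _ hx, mul_one] at hnonneg ⊢
    have : |f y| ≤ |f x| + (‖fderiv ℝ f x‖ + η) * ‖x - y‖ :=
      hslope x y (hxy.trans_le (min_le_left _ _))
    refine max_le ?_ ?_ <;>
      linarith [le_max_left (|f x| - s) 0, le_max_right (|f x| - s) 0]
  · have hy := hclose (a := y) (b := x)
      (by rw [dist_eq_norm, norm_sub_rev]; exact hxy.trans_le (min_le_right _ _))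
    rw [dist_eq_norm] at hy
    have hys : |f y| ≤ s := by
      linarith [norm_le_norm_sub_add (f y) (f x), norm_eq_abs (f x), norm_eq_abs (f y)]
    rw [max_eq_right (sub_nonpos.2 hys)]
    positivity

end SlopeBound

section Superlevel

variable {α β : Type*} [MeasurableSpace α] [MeasurableSpace β] {μ : Measure α} {ν : Measure β}

lemma setLIntegral_superlevel_rpow {f : α → ℝ} (hf : Measurable f) {q s : ℝ} (hq : 0 < q)
    (hs : 0 ≤ s) : ∫⁻ x in {x | s < f x}, ENNReal.ofReal (f x ^ q) ∂μ =
      ∫⁻ t in Ioi (0 : ℝ), μ {x | max s (t ^ q⁻¹) < f x} := by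
  have hmeas : MeasurableSet {x | s < f x} := measurableSet_lt measurable_const hf
  have hofReal (x : α) : {x | s < f x}.indicator (fun x => ENNReal.ofReal (f x ^ q)) x =
      ENNReal.ofReal ({x | s < f x}.indicator (fun x => f x ^ q) x) := by
    by_cases hx : x ∈ {x | s < f x} <;> simp [hx]
  rw [← lintegral_indicator hmeas, lintegral_congr hofReal,
    lintegral_eq_lintegral_meas_lt μ (f := {x | s < f x}.indicator fun x => f x ^ q)
      (ae_of_all μ (indicator_nonneg fun x hx => rpow_nonneg (hs.trans (le_of_lt hx)) q))
      ((hf.pow_const q).indicator hmeas).aemeasurable]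
  refine setLIntegral_congr_fun measurableSet_Ioi fun t (ht : 0 < t) => congrArg μ (ext fun x => ?_)
  by_cases hx : s < f x
  · simp [hx, rpow_inv_lt_iff_of_pos ht.le (hs.trans hx.le) hq]
  · simp [hx, ht.le]

lemma setLIntegral_superlevel_rpow_congr {f : α → ℝ} {g : β → ℝ} (hf : Measurable f)
    (hg : Measurable g) {q s : ℝ} (hq : 0 < q) (hs : 0 ≤ s)
    (h : ∀ t, 0 ≤ t → μ {x | t < f x} = ν {x | t < g x}) :
    ∫⁻ x in {x | s < f x}, ENNReal.ofReal (f x ^ q) ∂μ =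
      ∫⁻ x in {x | s < g x}, ENNReal.ofReal (g x ^ q) ∂ν := by
  rw [setLIntegral_superlevel_rpow hf hq hs, setLIntegral_superlevel_rpow hg hq hs]
  simp_rw [h _ (hs.trans (le_max_left s _))]

lemma setLIntegral_superlevel_le_of_forall_lt {f : α → ℝ} {g : α → ℝ≥0∞} {s : ℝ} {C : ℝ≥0∞}
    (h : ∀ s', s < s' → ∫⁻ x in {x | s' < f x}, g x ∂μ ≤ C) :
    ∫⁻ x in {x | s < f x}, g x ∂μ ≤ C := by
  obtain ⟨u, hu_anti, hu_gt, hu_lim⟩ := exists_seq_strictAnti_tendsto s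
  have hiUnion : {x | s < f x} = ⋃ n, {x | u n < f x} := by
    ext x
    simp only [mem_ofPred_eq, mem_iUnion]
    exact ⟨fun hx => (hu_lim.eventually_lt_const hx).exists,
      fun ⟨n, hn⟩ => (hu_gt n).trans hn⟩
  have hmono : Monotone fun n => {x | u n < f x} := fun m n hmn x hx =>
    (hu_anti.antitone hmn).trans_lt hx
  rw [hiUnion, setLIntegral_iUnion_of_directed _ hmono.directed_le]
  exact iSup_le fun n => h (u n) (hu_gt n)

lemma setLIntegral_superlevel_norm_fderiv_le {E : Type*} [NormedAddCommGroup E]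
    [NormedSpace ℝ E] [MeasurableSpace E] [OpensMeasurableSpace E] {μ : Measure E} {f : E → ℝ}
    (hf : Continuous f) (s p : ℝ) :
    ∫⁻ x in {x | s < f x}, ENNReal.ofReal (‖fderiv ℝ f x‖ ^ p) ∂μ ≤
      ∫⁻ x, ENNReal.ofReal (‖fderiv ℝ (fun x => max (f x - s) 0) x‖ ^ p) ∂μ := by
  refine (setLIntegral_congr_fun (measurableSet_lt measurable_const hf.measurable)
    fun x (hx : s < f x) => ?_).trans_le (setLIntegral_le_lintegral _ _)
  have hcongr : (fun x => max (f x - s) 0) =ᶠ[𝓝 x] fun x => f x - s :=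
    (hf.continuousAt.eventually_const_lt hx).mono fun y hy => max_eq_left (sub_nonneg.2 hy.le)
  simp only [hcongr.fderiv_eq, fderiv_sub_const]

end Superlevel

section RearrangedNearMinimizer

variable {N : ℕ} [NeZero N] {p q ε : ℝ} {Ω : Set (EuclideanSpace ℝ (Fin N))}
  {v : EuclideanSpace ℝ (Fin N) → ℝ} {w : ℝ → ℝ}

lemma IsTestFunction.lintegral_norm_fderiv_max_radial_sub_rpow_le (h : IsTestFunction Ω v)
    (hp : 1 < p) (hw : IsRadialRearrangement volume (fun x => |v x|) w) (hw_cont : Continuous w)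
    {χ : ℝ → ℝ} (hχ : Continuous χ) (hχ₀ : ∀ z, 0 ≤ χ z) (hχ₁ : ∀ z, χ z ≤ 1)
    {b s : ℝ} (hs : 0 ≤ s) (hbs : b < s) (hb : ∀ z, b ≤ |z| → χ z = 1) :
    ∫⁻ x : EuclideanSpace ℝ (Fin N),
        ENNReal.ofReal (‖fderiv ℝ (fun x => max (w ‖x‖ - s) 0) x‖ ^ p) ≤
      ENNReal.ofReal (∫ x, ‖fderiv ℝ v x‖ ^ p * χ (v x)) := by
  have hp₀ : 0 < p := by linarith
  have hv := h.contDiff.continuous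
  have hgrad : Continuous fun x => ‖fderiv ℝ v x‖ * χ (v x) :=
    h.continuous_fderiv.norm.mul (hχ.comp hv)
  obtain ⟨r₀, hr₀⟩ := h.hasCompactSupport.isCompact.isBounded.subset_ball 0
  have hsupp (x : EuclideanSpace ℝ (Fin N)) (hx : r₀ ≤ ‖x‖) : max (|v x| - s) 0 = 0 := by
    rw [image_eq_zero_of_notMem_tsupport fun hx' => (mem_ball_zero_iff.1 (hr₀ hx')).not_ge hx]
    simpa using hs
  have hslope := isUniformSlopeBound_max_abs_sub (h.contDiff.differentiable (by simp))
    (h.hasCompactSupport.uniformContinuous_of_continuous hv)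
    ((h.hasCompactSupport.fderiv ℝ).uniformContinuous_of_continuous h.continuous_fderiv)
    hbs hχ₀ hb
  have hbdd : BddAbove (range fun x => max (|v x| - s) 0) :=
    Continuous.bddAbove_range_of_hasCompactSupport (by fun_prop)
      (h.hasCompactSupport.comp_left (g := fun z => max (|z| - s) 0) (by simpa using hs))
  have hgrad_bdd : BddAbove (range fun x => ‖fderiv ℝ v x‖ * χ (v x)) :=
    hgrad.bddAbove_range_of_hasCompactSupport (h.hasCompactSupport.fderiv ℝ).norm.mul_right
  refine (polya_szego hp hbdd (by fun_prop) (fun x => le_max_right _ _) (lt_add_one r₀) hsupp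
    (hw.max_sub hs) (by fun_prop) (fun x => le_max_right _ _)
    (fun x => mul_nonneg (norm_nonneg _) (hχ₀ _)) hgrad_bdd hgrad.measurable hslope).trans ?_
  rw [ofReal_integral_eq_lintegral_ofReal (h.integrable_norm_fderiv_rpow_mul hp₀ hχ hχ₀ hχ₁)
    (.of_forall fun x => mul_nonneg (by positivity) (hχ₀ _))]
  refine (setLIntegral_le_lintegral _ _).trans
    (lintegral_mono fun x => ENNReal.ofReal_le_ofReal ?_)
  rw [mul_rpow (norm_nonneg _) (hχ₀ _)]
  exact mul_le_mul_of_nonneg_left (rpow_le_self_of_le_one (hχ₀ _) (hχ₁ _) hp.le) (by positivity)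

lemma IsNearMinimizer.setLIntegral_superlevel_norm_fderiv_radial_le
    (h : IsNearMinimizer p q ε Ω v) (hp : 1 < p) (hpq : p ≤ q) (hε : 0 ≤ ε)
    (hw : IsRadialRearrangement volume (fun x => |v x|) w) (hw_cont : Continuous w) {s : ℝ}
    (hs : 0 ≤ s) :
    ∫⁻ x : EuclideanSpace ℝ (Fin N) in {x | s < w ‖x‖},
        ENNReal.ofReal (‖fderiv ℝ (fun x => w ‖x‖) x‖ ^ p) ≤
      ENNReal.ofReal (lambdaPQ p q Ω) *
        (∫⁻ x : EuclideanSpace ℝ (Fin N) in {x | s < w ‖x‖}, ENNReal.ofReal (w ‖x‖ ^ q)) +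
        ENNReal.ofReal ε := by
  have hq : 0 < q := by linarith
  refine setLIntegral_superlevel_le_of_forall_lt fun s' hs' => ?_
  have hmid : s < (s + s') / 2 := left_lt_add_div_two.2 hs'
  have hfirst := h.integral_norm_fderiv_rpow_mul_le hp.le hpq contDiff_levelCutoff
    (fun z => levelCutoff_eq_zero hs hmid.le) (fun z => levelCutoff_nonneg)
    fun z => levelCutoff_le_one
  calc _ ≤ _ := setLIntegral_superlevel_norm_fderiv_le (by fun_prop) s' p
    _ ≤ _ := h.lintegral_norm_fderiv_max_radial_sub_rpow_le hp hw hw_cont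
      contDiff_levelCutoff.continuous (fun z => levelCutoff_nonneg) (fun z => levelCutoff_le_one)
      (hs.trans hs'.le) (add_div_two_lt_right.2 hs') fun z => levelCutoff_eq_one hs hmid
    _ ≤ _ := ENNReal.ofReal_le_ofReal hfirst
    _ = _ := by
      rw [ENNReal.ofReal_add (mul_nonneg (lambdaPQ_nonneg _ _ _)
          (integral_nonneg fun x => by positivity)) hε,
        ENNReal.ofReal_mul (lambdaPQ_nonneg _ _ _),
        ofReal_integral_eq_lintegral_ofReal (h.integrable_abs_rpow hq).integrableOn
          (.of_forall fun x => by positivity),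
        setLIntegral_superlevel_rpow_congr h.contDiff.continuous.abs.measurable
          (by fun_prop) hq hs fun t => hw.measure_superlevel_eq]

lemma norm_fderiv_comp_norm {E : Type*} [NormedAddCommGroup E] [InnerProductSpace ℝ E] (w : ℝ → ℝ)
    {x : E} (hx : x ≠ 0) : ‖fderiv ℝ (fun x => w ‖x‖) x‖ = |deriv w ‖x‖| := by
  have hx₀ : 0 < ‖x‖ := norm_pos_iff.2 hx
  have : Nontrivial E := ⟨x, 0, hx⟩
  have hnorm : DifferentiableAt ℝ (fun x : E => ‖x‖) x := differentiableAt_id.norm ℝ hx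
  by_cases hw : DifferentiableAt ℝ w ‖x‖
  · have hfderiv : HasFDerivAt (fun x : E => w ‖x‖) (deriv w ‖x‖ • fderiv ℝ (fun x => ‖x‖) x) x :=
      hw.hasDerivAt.comp_hasFDerivAt x hnorm.hasFDerivAt
    rw [hfderiv.fderiv, norm_smul, norm_fderiv_norm hnorm, mul_one, Real.norm_eq_abs]
  · rw [deriv_zero_of_not_differentiableAt hw, abs_zero,
      fderiv_zero_of_not_differentiableAt fun h => hw ?_, norm_zero]
    have hray : w =ᶠ[𝓝 ‖x‖] (fun x : E => w ‖x‖) ∘ fun ρ => (ρ / ‖x‖) • x := by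
      filter_upwards [lt_mem_nhds hx₀] with ρ hρ
      simp [norm_smul, abs_of_pos hρ, hx₀.ne']
    refine DifferentiableAt.congr_of_eventuallyEq (.comp _ ?_ (by fun_prop)) hray
    simpa [hx₀.ne'] using h

/- Off the superlevel set `{w R < w ‖x‖}` the antitone function `w` attains its minimum over
`(-∞, R)`, so its derivative vanishes there. -/
lemma IsNearMinimizer.setLIntegral_ball_abs_deriv_rpow_le
    (h : IsNearMinimizer p q ε Ω v) (hp : 1 < p) (hpq : p ≤ q) (hε : 0 ≤ ε)
    (hw : IsRadialRearrangement volume (fun x => |v x|) w) (hw_cont : Continuous w)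
    (hw₀ : ∀ ρ, 0 ≤ w ρ) (hw_anti : Antitone w) (R : ℝ) :
    ∫⁻ x in ball (0 : EuclideanSpace ℝ (Fin N)) R, ENNReal.ofReal (|deriv w ‖x‖| ^ p) ≤
      ENNReal.ofReal (lambdaPQ p q Ω) *
        (∫⁻ x in ball (0 : EuclideanSpace ℝ (Fin N)) R, ENNReal.ofReal (w ‖x‖ ^ q)) +
        ENNReal.ofReal ε := by
  set S : Set (EuclideanSpace ℝ (Fin N)) := {x | w R < w ‖x‖}
  have hS : MeasurableSet S := measurableSet_lt measurable_const (by fun_prop)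
  have hsubset : S ⊆ ball 0 R := fun x hx => mem_ball_zero_iff.2 (hw_anti.reflect_lt hx)
  have hzero (x : EuclideanSpace ℝ (Fin N)) (hx : x ∈ ball 0 R) (hxS : x ∉ S) :
      deriv w ‖x‖ = 0 := by
    refine IsLocalMin.deriv_eq_zero ?_
    filter_upwards [gt_mem_nhds (mem_ball_zero_iff.1 hx)] with ρ hρ
    exact (not_lt.1 hxS).trans (hw_anti hρ.le)
  calc ∫⁻ x in ball (0 : EuclideanSpace ℝ (Fin N)) R, ENNReal.ofReal (|deriv w ‖x‖| ^ p)
      ≤ ∫⁻ x in ball 0 R,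
          S.indicator (fun x => ENNReal.ofReal (‖fderiv ℝ (fun x => w ‖x‖) x‖ ^ p)) x := by
        refine lintegral_mono_ae ?_
        filter_upwards [ae_restrict_of_ae (Measure.ae_ne volume 0),
          ae_restrict_mem measurableSet_ball] with x hx₀ hx
        by_cases hxS : x ∈ S
        · rw [indicator_of_mem hxS, norm_fderiv_comp_norm w hx₀]
        · simp [hzero x hx hxS, zero_rpow (by linarith : p ≠ 0)]
    _ ≤ ∫⁻ x in S, ENNReal.ofReal (‖fderiv ℝ (fun x => w ‖x‖) x‖ ^ p) :=
        (setLIntegral_le_lintegral _ _).trans_eq (lintegral_indicator hS _)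
    _ ≤ _ := h.setLIntegral_superlevel_norm_fderiv_radial_le hp hpq hε hw hw_cont (hw₀ R)
    _ ≤ _ := by gcongr

end RearrangedNearMinimizer

/-! ### Near-minimizing radial profiles -/

section Nonconcentration

variable {E : Type*} [NormedAddCommGroup E] [NormedSpace ℝ E] [FiniteDimensional ℝ E]
  [Nontrivial E] [MeasurableSpace E] [BorelSpace E] (μ : Measure E) [μ.IsAddHaarMeasure]

lemma tendsto_measure_ball_zero : Tendsto (fun τ => μ (ball (0 : E) τ)) (𝓝[>] 0) (𝓝 0) := by
  have hlim : Tendsto (fun τ : ℝ => ENNReal.ofReal (τ ^ Module.finrank ℝ E) * μ (ball (0 : E) 1))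
      (𝓝[>] 0) (𝓝 (0 * μ (ball (0 : E) 1))) :=
    ENNReal.Tendsto.mul_const ((ENNReal.continuous_ofReal.comp (continuous_pow _)).tendsto' 0 0
      (by simp [Module.finrank_pos.ne']) |>.mono_left nhdsWithin_le_nhds)
      (.inr measure_ball_lt_top.ne)
  rw [zero_mul] at hlim
  refine hlim.congr' (eventually_mem_nhdsWithin.mono fun τ hτ => ?_)
  exact (Measure.addHaar_ball μ 0 (le_of_lt hτ)).symm

lemma exists_forall_setLIntegral_ball_le {s : ℝ} (hs : 1 < s) {C δ : ℝ≥0∞} (hC : C ≠ ∞)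
    (hδ : δ ≠ 0) {r : ℝ} (hr : 0 < r) :
    ∃ τ ∈ Ioo 0 r, ∀ f : E → ℝ≥0∞, AEMeasurable f μ → ∫⁻ x, f x ^ s ∂μ ≤ C →
      ∫⁻ x in ball 0 τ, f x ∂μ ≤ δ := by
  have hconj := HolderConjugate.conjExponent hs
  have hlim : Tendsto (fun τ => C ^ (1 / s) * μ (ball (0 : E) τ) ^ (1 / s.conjExponent))
      (𝓝[>] 0) (𝓝 0) := by
    have := ENNReal.Tendsto.const_mul (a := C ^ (1 / s))
      ((tendsto_measure_ball_zero μ).ennrpow_const (1 / s.conjExponent))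
      (.inr (ENNReal.rpow_ne_top_of_nonneg (by positivity) hC))
    rwa [ENNReal.zero_rpow_of_pos (one_div_pos.2 hconj.symm.pos), mul_zero] at this
  obtain ⟨τ, hτδ, hτ⟩ := ((hlim.eventually_lt_const hδ.bot_lt).and (Ioo_mem_nhdsGT hr)).exists
  refine ⟨τ, hτ, fun f hf hfC => ?_⟩
  calc ∫⁻ x in ball 0 τ, f x ∂μ
      = ∫⁻ x in ball 0 τ, (f * 1 : E → ℝ≥0∞) x ∂μ := by rw [mul_one]
    _ ≤ (∫⁻ x in ball 0 τ, f x ^ s ∂μ) ^ (1 / s) *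
        (∫⁻ _ in ball (0 : E) τ, 1 ^ s.conjExponent ∂μ) ^ (1 / s.conjExponent) :=
      ENNReal.lintegral_mul_le_Lp_mul_Lq _ hconj hf.restrict aemeasurable_const
    _ ≤ C ^ (1 / s) * μ (ball (0 : E) τ) ^ (1 / s.conjExponent) := by
      simp only [ENNReal.one_rpow, setLIntegral_one]
      gcongr
      exact (setLIntegral_le_lintegral _ _).trans hfC
    _ ≤ δ := hτδ.le

end Nonconcentration

lemma exists_gt_ltCritical {N : ℕ} {p q : ℝ} (h : ltCritical N p q) :
    ∃ q', q < q' ∧ ltCritical N p q' := by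
  by_cases hp : p < N
  · obtain ⟨q', hqq', hq'⟩ := exists_between (h hp)
    exact ⟨q', hqq', fun _ => hq'⟩
  · exact ⟨q + 1, lt_add_one q, fun h => absurd h hp⟩

/-- A radially nonincreasing function `w ‖x‖` on `ℝ^N`, normalized in `L^q` and supported inside
`ball 0 r`, whose energy on every centered ball is at most `lam` times its `q`-mass there, up to an
error `ε`. Rearranged near-minimizers of `λ_{p,q}` have this property, with `lam = λ_{p,q}`. -/
structure IsRadialProfile (N : ℕ) (p q lam r ε : ℝ) (w : ℝ → ℝ) : Prop where
  exists_lipschitzWith : ∃ K, LipschitzWith K w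
  antitone : Antitone w
  nonneg : ∀ ρ, 0 ≤ w ρ
  exists_eq_zero : ∃ r₁ < r, ∀ ρ, r₁ ≤ ρ → w ρ = 0
  lintegral_rpow_eq_one : ∫⁻ x : EuclideanSpace ℝ (Fin N), ENNReal.ofReal (w ‖x‖ ^ q) = 1
  setLIntegral_ball_le : ∀ R, ∫⁻ x in ball (0 : EuclideanSpace ℝ (Fin N)) R,
    ENNReal.ofReal (|deriv w ‖x‖| ^ p) ≤ ENNReal.ofReal lam *
      (∫⁻ x in ball (0 : EuclideanSpace ℝ (Fin N)) R, ENNReal.ofReal (w ‖x‖ ^ q)) +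
      ENNReal.ofReal ε

lemma IsRadialRearrangement.lintegral_rpow_eq {E : Type*} [NormedAddCommGroup E]
    [MeasurableSpace E] {μ : Measure E} {f : E → ℝ} {w : ℝ → ℝ} (h : IsRadialRearrangement μ f w)
    (hf : Measurable f) (hf₀ : ∀ x, 0 ≤ f x) (hW : Measurable fun x : E => w ‖x‖)
    (hW₀ : ∀ x : E, 0 ≤ w ‖x‖) {q : ℝ} (hq : 0 < q) :
    ∫⁻ x, ENNReal.ofReal (f x ^ q) ∂μ = ∫⁻ x, ENNReal.ofReal (w ‖x‖ ^ q) ∂μ := by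
  rw [lintegral_rpow_eq_lintegral_meas_lt_mul μ (.of_forall hf₀) hf.aemeasurable hq,
    lintegral_rpow_eq_lintegral_meas_lt_mul μ (.of_forall hW₀) hW.aemeasurable hq]
  congr 1
  exact setLIntegral_congr_fun measurableSet_Ioi fun t (ht : 0 < t) => by
    simp only [h.measure_superlevel_eq ht.le]

section RadialProfile

variable {N : ℕ} {p q q' lam r ε : ℝ} {Ω : Set (EuclideanSpace ℝ (Fin N))}
  {v : EuclideanSpace ℝ (Fin N) → ℝ} {w : ℝ → ℝ}

namespace IsTestFunction

lemma bddAbove_range_abs (h : IsTestFunction Ω v) : BddAbove (range fun x => |v x|) :=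
  h.contDiff.continuous.norm.bddAbove_range_of_hasCompactSupport h.hasCompactSupport.norm

lemma exists_forall_abs_eq_zero (h : IsTestFunction Ω v) (hΩ : Ω ⊆ ball 0 r) :
    ∃ r₀ < r, ∀ x, r₀ ≤ ‖x‖ → |v x| = 0 := by
  obtain ⟨r₀, hr₀, hsubset⟩ :=
    exists_lt_subset_ball (isClosed_tsupport v) (h.tsupport_subset.trans hΩ)
  refine ⟨r₀, hr₀, fun x hx => abs_eq_zero.2 (image_eq_zero_of_notMem_tsupport fun hxv => ?_)⟩
  exact (mem_ball_zero_iff.1 (hsubset hxv)).not_ge hx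

lemma lintegral_ofReal_abs_rpow (h : IsTestFunction Ω v) (hq : 0 < q) :
    ∫⁻ x, ENNReal.ofReal (|v x| ^ q) = ENNReal.ofReal (∫ x, |v x| ^ q) :=
  (ofReal_integral_eq_lintegral_ofReal (h.integrable_abs_rpow hq)
    (.of_forall fun x => by positivity)).symm

end IsTestFunction

section Rearrangement

variable [NeZero N]

lemma IsTestFunction.isRadialRearrangement (h : IsTestFunction Ω v) (hΩ : Ω ⊆ ball 0 r) :
    IsRadialRearrangement volume (fun x => |v x|) (rearrangement volume fun x => |v x|) := by
  obtain ⟨r₀, -, hr₀⟩ := h.exists_forall_abs_eq_zero hΩ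
  exact fun s hs => exists_superlevel_rearrangement_eq_ball h.bddAbove_range_abs hr₀ hs

lemma IsTestFunction.exists_lipschitzWith_rearrangement (h : IsTestFunction Ω v)
    (hΩ : Ω ⊆ ball 0 r) : ∃ K, LipschitzWith K (rearrangement volume fun x => |v x|) := by
  obtain ⟨r₀, -, hr₀⟩ := h.exists_forall_abs_eq_zero hΩ
  obtain ⟨K, hK⟩ := h.contDiff.lipschitzWith_of_hasCompactSupport h.hasCompactSupport (by simp)
  exact ⟨1 * K, lipschitzWith_rearrangement h.bddAbove_range_abs
    (lipschitzWith_one_norm.comp hK) hr₀⟩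

lemma IsTestFunction.lintegral_rearrangement_rpow (h : IsTestFunction Ω v) (hΩ : Ω ⊆ ball 0 r)
    (hq : 0 < q) : ∫⁻ x : EuclideanSpace ℝ (Fin N),
      ENNReal.ofReal (rearrangement volume (fun x => |v x|) ‖x‖ ^ q) =
        ENNReal.ofReal (∫ x, |v x| ^ q) := by
  obtain ⟨K, hK⟩ := h.exists_lipschitzWith_rearrangement hΩ
  rw [← h.lintegral_ofReal_abs_rpow hq]
  exact ((h.isRadialRearrangement hΩ).lintegral_rpow_eq h.contDiff.continuous.abs.measurable
    (fun x => abs_nonneg _) (hK.continuous.comp continuous_norm).measurable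
    (fun x => rearrangement_nonneg _) hq).symm

lemma IsNearMinimizer.isRadialProfile_rearrangement (h : IsNearMinimizer p q ε Ω v)
    (hp : 1 < p) (hpq : p ≤ q) (hε : 0 ≤ ε) (hΩ : Ω ⊆ ball 0 r) :
    IsRadialProfile N p q (lambdaPQ p q Ω) r ε (rearrangement volume fun x => |v x|) := by
  obtain ⟨K, hK⟩ := h.exists_lipschitzWith_rearrangement hΩ
  have hanti := rearrangement_antitone (μ := volume) h.bddAbove_range_abs
  refine ⟨⟨K, hK⟩, hanti, rearrangement_nonneg, ?_, ?_, ?_⟩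
  · obtain ⟨r₀, hr₀r, hr₀⟩ := h.exists_forall_abs_eq_zero hΩ
    exact ⟨r₀, hr₀r, fun ρ => rearrangement_eq_zero h.bddAbove_range_abs hr₀⟩
  · rw [h.lintegral_rearrangement_rpow hΩ (by linarith), h.integral_abs_rpow_eq_one,
      ENNReal.ofReal_one]
  · exact h.setLIntegral_ball_abs_deriv_rpow_le hp hpq hε (h.isRadialRearrangement hΩ)
      hK.continuous rearrangement_nonneg hanti

end Rearrangement

lemma exists_isRadialProfile_lintegral_rpow_le (hN : 2 ≤ N) (hp : 1 < p) (hpq : p ≤ q)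
    (hq' : 0 < q') (h : ltCritical N p q') (hΩ : IsOpen Ω) (hΩ' : Ω.Nonempty)
    (hΩr : Ω ⊆ ball 0 r) :
    ∃ C : ℝ, ∀ ε ∈ Ioc 0 1, ∃ w, IsRadialProfile N p q (lambdaPQ p q Ω) r ε w ∧
      ∫⁻ x : EuclideanSpace ℝ (Fin N), ENNReal.ofReal (w ‖x‖ ^ q') ≤ ENNReal.ofReal C := by
  have : NeZero N := ⟨by lia⟩
  obtain ⟨C, hC, hsobolev⟩ := exists_integral_rpow_le_integral_norm_fderiv_rpow
    (volume : Measure (EuclideanSpace ℝ (Fin N))) (by simpa using hN) hp.le hq'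
    (by simpa using h) (isBounded_ball.subset hΩr)
  refine ⟨(C * (lambdaPQ p q Ω + 1) ^ p⁻¹) ^ q', fun ε ⟨hε, hε₁⟩ => ?_⟩
  obtain ⟨v, hv⟩ := exists_isNearMinimizer hΩ hΩ' (by linarith : 0 < p) (by linarith : 0 < q) hε
  refine ⟨_, hv.isRadialProfile_rearrangement hp hpq hε.le hΩr, ?_⟩
  rw [hv.lintegral_rearrangement_rpow hΩr hq']
  refine ENNReal.ofReal_le_ofReal ?_
  have hlam := lambdaPQ_nonneg p q Ω
  rw [← rpow_inv_le_iff_of_pos (integral_nonneg fun x => by positivity) (by positivity) hq']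
  refine (hsobolev v (hv.contDiff.of_le (by simp)) hv.hasCompactSupport
    hv.tsupport_subset).trans ?_
  gcongr
  linarith [hv.integral_norm_fderiv_rpow_lt]

namespace IsRadialProfile

lemma continuous (h : IsRadialProfile N p q lam r ε w) : Continuous w :=
  h.exists_lipschitzWith.choose_spec.continuous

lemma lintegral_compl_ball_rpow_le (h : IsRadialProfile N p q lam r ε w) (hq : 0 < q) (τ : ℝ) :
    ∫⁻ x in (ball (0 : EuclideanSpace ℝ (Fin N)) τ)ᶜ, ENNReal.ofReal (w ‖x‖ ^ q) ≤
      ENNReal.ofReal (w τ ^ q) * volume (ball (0 : EuclideanSpace ℝ (Fin N)) r) := by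
  rw [← lintegral_indicator measurableSet_ball.compl,
    ← lintegral_indicator_const measurableSet_ball]
  refine lintegral_mono fun x => indicator_apply_le fun hx => ?_
  by_cases hxr : x ∈ ball (0 : EuclideanSpace ℝ (Fin N)) r
  · rw [indicator_of_mem hxr]
    have hwτ : w ‖x‖ ≤ w τ := h.antitone (by simpa using hx)
    exact ENNReal.ofReal_le_ofReal (rpow_le_rpow (h.nonneg _) hwτ hq.le)
  · obtain ⟨r₁, hr₁, hzero⟩ := h.exists_eq_zero
    have hxr : r ≤ ‖x‖ := by simpa using hxr
    simp [hzero _ (hr₁.le.trans hxr), zero_rpow hq.ne']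

/- If the ball of radius `τ` carries at most half of the mass, the rest of the mass keeps `w τ`
away from zero. -/
lemma rpow_inv_le_of_setLIntegral_ball_le (h : IsRadialProfile N p q lam r ε w) (hq : 0 < q)
    (hr : 0 < r) {τ : ℝ}
    (hτ : ∫⁻ x in ball (0 : EuclideanSpace ℝ (Fin N)) τ, ENNReal.ofReal (w ‖x‖ ^ q) ≤ 2⁻¹) :
    (2⁻¹ / volume (ball (0 : EuclideanSpace ℝ (Fin N)) r)).toReal ^ q⁻¹ ≤ w τ := by
  rw [rpow_inv_le_iff_of_pos ENNReal.toReal_nonneg (h.nonneg _) hq]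
  refine ENNReal.toReal_le_of_le_ofReal (rpow_nonneg (h.nonneg _) _) ?_
  rw [ENNReal.div_le_iff (measure_ball_pos _ _ hr).ne' measure_ball_lt_top.ne,
    ← ENNReal.one_sub_inv_two, tsub_le_iff_left, ← h.lintegral_rpow_eq_one,
    ← lintegral_add_compl _ (measurableSet_ball (x := (0 : EuclideanSpace ℝ (Fin N))) (ε := τ))]
  exact add_le_add hτ (h.lintegral_compl_ball_rpow_le hq τ)

end IsRadialProfile

theorem exists_isRadialProfile_le (hN : 2 ≤ N) (hp : 1 < p) (hpq : p ≤ q) (hq : ltCritical N p q)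
    (hr : 0 < r) (hΩ : IsOpen Ω) (hΩ' : Ω.Nonempty) (hΩr : Ω ⊆ ball 0 r) :
    ∃ τ ∈ Ioo 0 r, ∃ c > 0, ∀ ε ∈ Ioc 0 1,
      ∃ w, IsRadialProfile N p q (lambdaPQ p q Ω) r ε w ∧ c ≤ w τ := by
  have : NeZero N := ⟨by lia⟩
  have hq₀ : 0 < q := by linarith
  obtain ⟨q', hqq', hq'⟩ := exists_gt_ltCritical hq
  obtain ⟨C, hC⟩ :=
    exists_isRadialProfile_lintegral_rpow_le hN hp hpq (hq₀.trans hqq') hq' hΩ hΩ' hΩr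
  obtain ⟨τ, hτ, hsmall⟩ := exists_forall_setLIntegral_ball_le
    (volume : Measure (EuclideanSpace ℝ (Fin N))) ((one_lt_div hq₀).2 hqq')
    (ENNReal.ofReal_ne_top (r := C)) (δ := 2⁻¹) (by simp) hr
  refine ⟨τ, hτ, (2⁻¹ / volume (ball (0 : EuclideanSpace ℝ (Fin N)) r)).toReal ^ q⁻¹,
    rpow_pos_of_pos (ENNReal.toReal_pos ?_ ?_) _, fun ε hε => ?_⟩
  · exact (ENNReal.div_pos (by simp) measure_ball_lt_top.ne).ne'
  · exact ENNReal.div_ne_top (by simp) (measure_ball_pos _ _ hr).ne'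
  obtain ⟨w, hw, hwC⟩ := hC ε hε
  refine ⟨w, hw, hw.rpow_inv_le_of_setLIntegral_ball_le hq₀ hr (hsmall _ ?_ ?_)⟩
  · have := hw.continuous.measurable
    fun_prop
  · refine (lintegral_congr fun x => ?_).trans_le hwC
    rw [ENNReal.ofReal_rpow_of_nonneg (rpow_nonneg (hw.nonneg _) _)
      (div_pos (hq₀.trans hqq') hq₀).le, ← rpow_mul (hw.nonneg _), mul_div_cancel₀ _ hq₀.ne']

end RadialProfile

/-! ### Radial integrals over star-shaped sets -/

lemma measure_ball_mul_setLIntegral_ball_le {E : Type*} [NormedAddCommGroup E] [MeasurableSpace E]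
    [OpensMeasurableSpace E] {μ : Measure E} {g : ℝ → ℝ≥0∞} (hg : Antitone g) {R r : ℝ}
    (hRr : R ≤ r) :
    μ (ball 0 R) * ∫⁻ x in ball 0 r, g ‖x‖ ∂μ ≤ μ (ball 0 r) * ∫⁻ x in ball 0 R, g ‖x‖ ∂μ := by
  have hsub : ball (0 : E) R ⊆ ball 0 r := ball_subset_ball hRr
  have hdiff : MeasurableSet (ball (0 : E) r \ ball 0 R) :=
    measurableSet_ball.diff measurableSet_ball
  have hinner : μ (ball 0 R) * g R ≤ ∫⁻ x in ball 0 R, g ‖x‖ ∂μ := by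
    rw [mul_comm, ← setLIntegral_const]
    exact setLIntegral_mono' measurableSet_ball fun x hx => hg (mem_ball_zero_iff.1 hx).le
  have houter : ∫⁻ x in ball 0 r \ ball 0 R, g ‖x‖ ∂μ ≤ g R * μ (ball 0 r \ ball 0 R) := by
    rw [← setLIntegral_const]
    exact setLIntegral_mono' hdiff fun x hx => hg (by simpa using hx.2)
  have hsplit : ∫⁻ x in ball 0 r, g ‖x‖ ∂μ =
      ∫⁻ x in ball 0 R, g ‖x‖ ∂μ + ∫⁻ x in ball 0 r \ ball 0 R, g ‖x‖ ∂μ := by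
    rw [← lintegral_union hdiff disjoint_sdiff_right, union_sdiff_cancel hsub]
  set I := ∫⁻ x in ball 0 R, g ‖x‖ ∂μ
  calc μ (ball 0 R) * ∫⁻ x in ball 0 r, g ‖x‖ ∂μ
      ≤ μ (ball 0 R) * (I + g R * μ (ball 0 r \ ball 0 R)) := by rw [hsplit]; gcongr
    _ = μ (ball 0 R) * I + μ (ball 0 R) * g R * μ (ball 0 r \ ball 0 R) := by ring
    _ ≤ μ (ball 0 R) * I + I * μ (ball 0 r \ ball 0 R) := by gcongr
    _ = (μ (ball 0 R) + μ (ball 0 r \ ball 0 R)) * I := by ring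
    _ = μ (ball 0 r) * I := by
      rw [← measure_union disjoint_sdiff_right hdiff, union_sdiff_cancel hsub]

section PolarCoordinates

variable {E : Type*} [NormedAddCommGroup E] [NormedSpace ℝ E]

/-- Star-shapedness about the origin, for sets that need not contain the origin: this is what
remains of convexity when the origin is a boundary point. -/
def IsStarShaped (D : Set E) : Prop :=
  ∀ x ∈ D, ∀ t ∈ Ioc (0 : ℝ) 1, t • x ∈ D

lemma norm_coe_smul_coe_sphere (θ : sphere (0 : E) 1) (ρ : Ioi (0 : ℝ)) :
    ‖ρ.1 • θ.1‖ = ρ.1 := by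
  rw [norm_smul, norm_eq_of_mem_sphere, mul_one, norm_of_nonneg (le_of_lt ρ.2)]

lemma IsStarShaped.exists_setOf_smul_mem_eq {D : Set E} (h : IsStarShaped D) (hD : IsOpen D)
    (hb : Bornology.IsBounded D) (θ : sphere (0 : E) 1) :
    ∃ R : ℝ, {ρ : Ioi (0 : ℝ) | ρ.1 • θ.1 ∈ D} = {ρ | ρ.1 < R} := by
  set J := {ρ : ℝ | 0 < ρ ∧ ρ • θ.1 ∈ D}
  have hJ_bdd : BddAbove J := by
    obtain ⟨r, hr⟩ := hb.subset_ball 0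
    refine ⟨r, fun ρ hρ => ?_⟩
    simpa [norm_coe_smul_coe_sphere θ ⟨ρ, hρ.1⟩] using (mem_ball_zero_iff.1 (hr hρ.2)).le
  have hJ_open : IsOpen J :=
    isOpen_Ioi.inter (hD.preimage (f := fun ρ : ℝ => ρ • θ.1) (by fun_prop))
  refine ⟨sSup J, Subset.antisymm (fun ρ hρ => ?_) fun ρ (hρ : ρ.1 < sSup J) => ?_⟩
  · refine (le_csSup hJ_bdd ⟨ρ.2, hρ⟩).lt_of_ne fun heq => ?_
    obtain ⟨σ, hσ, hσJ⟩ := (hJ_open.eventually_mem ⟨ρ.2, hρ⟩).exists_gt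
    exact (heq ▸ le_csSup hJ_bdd hσJ).not_gt hσ
  · have hne : J.Nonempty := by
      by_contra hne
      rw [not_nonempty_iff_eq_empty.1 hne, Real.sSup_empty] at hρ
      exact ρ.2.not_gt hρ
    obtain ⟨s, ⟨hs, hsD⟩, hρs⟩ := exists_lt_of_lt_csSup hne hρ
    have := h _ hsD (ρ.1 / s) ⟨div_pos ρ.2 hs, (div_le_one hs).2 hρs.le⟩
    rwa [smul_smul, div_mul_cancel₀ _ hs.ne'] at this

variable [FiniteDimensional ℝ E] [Nontrivial E] [MeasurableSpace E] [BorelSpace E]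
  (μ : Measure E) [μ.IsAddHaarMeasure]

lemma lintegral_eq_lintegral_toSphere {f : E → ℝ≥0∞} (hf : Measurable f) :
    ∫⁻ x, f x ∂μ = ∫⁻ θ, ∫⁻ ρ, f (ρ.1 • θ.1)
      ∂(Measure.volumeIoiPow (Module.finrank ℝ E - 1)) ∂μ.toSphere := by
  have hm : Measurable fun z : sphere (0 : E) 1 × Ioi (0 : ℝ) => f (z.2.1 • z.1.1) :=
    hf.comp (by fun_prop)
  rw [← lintegral_prod _ hm.aemeasurable,
    ← μ.measurePreserving_homeomorphUnitSphereProd.lintegral_comp hm,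
    ← restrict_compl_singleton (μ := μ) 0,
    ← lintegral_subtype_comap (measurableSet_singleton _).compl f, restrict_compl_singleton]
  refine lintegral_congr fun x => congrArg f ?_
  have : ‖(x : E)‖ ≠ 0 := norm_ne_zero_iff.2 x.2
  simp [smul_smul, this]

lemma setLIntegral_comp_norm_eq_lintegral_toSphere {g : ℝ → ℝ≥0∞} (hg : Measurable g) {S : Set E}
    (hS : MeasurableSet S) :
    ∫⁻ x in S, g ‖x‖ ∂μ = ∫⁻ θ, ∫⁻ ρ in {ρ : Ioi (0 : ℝ) | ρ.1 • θ.1 ∈ S}, g ρ.1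
      ∂(Measure.volumeIoiPow (Module.finrank ℝ E - 1)) ∂μ.toSphere := by
  have hgS : Measurable (S.indicator fun x => g ‖x‖) := (hg.comp measurable_norm).indicator hS
  rw [← lintegral_indicator hS, lintegral_eq_lintegral_toSphere μ hgS]
  refine lintegral_congr fun θ => ?_
  have hm : MeasurableSet {ρ : Ioi (0 : ℝ) | ρ.1 • θ.1 ∈ S} :=
    (by fun_prop : Measurable fun ρ : Ioi (0 : ℝ) => ρ.1 • θ.1) hS
  rw [← lintegral_indicator hm]
  refine lintegral_congr fun ρ => ?_
  by_cases hx : ρ.1 • θ.1 ∈ S <;> simp [indicator, hx, norm_coe_smul_coe_sphere]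

lemma setLIntegral_ball_comp_norm_eq_mul {g : ℝ → ℝ≥0∞} (hg : Measurable g) (R : ℝ) :
    ∫⁻ x in ball 0 R, g ‖x‖ ∂μ = (∫⁻ ρ in {ρ : Ioi (0 : ℝ) | ρ.1 < R}, g ρ.1
      ∂(Measure.volumeIoiPow (Module.finrank ℝ E - 1))) * μ.toSphere univ := by
  rw [setLIntegral_comp_norm_eq_lintegral_toSphere μ hg measurableSet_ball]
  simp [norm_coe_smul_coe_sphere]

variable {μ}

-- In polar coordinates the estimates on balls are estimates on rays, and so integrate over any
-- family of rays.
theorem IsStarShaped.setLIntegral_comp_norm_le {D : Set E} (h : IsStarShaped D) (hD : IsOpen D)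
    (hb : Bornology.IsBounded D) {a b : ℝ → ℝ≥0∞} (ha : Measurable a) (hb' : Measurable b)
    {e : ℝ≥0∞}
    (hab : ∀ R, ∫⁻ x in ball (0 : E) R, a ‖x‖ ∂μ ≤ ∫⁻ x in ball (0 : E) R, b ‖x‖ ∂μ + e) :
    ∫⁻ x in D, a ‖x‖ ∂μ ≤ ∫⁻ x in D, b ‖x‖ ∂μ + e := by
  set ν := Measure.volumeIoiPow (Module.finrank ℝ E - 1)
  have hσ : μ.toSphere univ ≠ 0 := by
    simpa only [Ne, Measure.measure_univ_eq_zero] using Measure.toSphere_ne_zero μ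
  have hσ' : μ.toSphere univ ≠ ∞ := measure_ne_top _ _
  have hray (R : ℝ) : ∫⁻ ρ in {ρ : Ioi (0 : ℝ) | ρ.1 < R}, a ρ.1 ∂ν ≤
      ∫⁻ ρ in {ρ : Ioi (0 : ℝ) | ρ.1 < R}, b ρ.1 ∂ν + e / μ.toSphere univ := by
    rw [← ENNReal.mul_le_mul_iff_left hσ hσ', add_mul, ENNReal.div_mul_cancel hσ hσ',
      ← setLIntegral_ball_comp_norm_eq_mul μ ha, ← setLIntegral_ball_comp_norm_eq_mul μ hb']
    exact hab R
  simp only [setLIntegral_comp_norm_eq_lintegral_toSphere μ ha hD.measurableSet,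
    setLIntegral_comp_norm_eq_lintegral_toSphere μ hb' hD.measurableSet]
  calc ∫⁻ θ, ∫⁻ ρ in {ρ : Ioi (0 : ℝ) | ρ.1 • θ.1 ∈ D}, a ρ.1 ∂ν ∂μ.toSphere
      ≤ ∫⁻ θ, (∫⁻ ρ in {ρ : Ioi (0 : ℝ) | ρ.1 • θ.1 ∈ D}, b ρ.1 ∂ν +
          e / μ.toSphere univ) ∂μ.toSphere := lintegral_mono fun θ => by
        obtain ⟨R, hR⟩ := h.exists_setOf_smul_mem_eq hD hb θ
        simpa only [hR] using hray R
    _ = ∫⁻ θ, ∫⁻ ρ in {ρ : Ioi (0 : ℝ) | ρ.1 • θ.1 ∈ D}, b ρ.1 ∂ν ∂μ.toSphere + e := by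
        rw [lintegral_add_right _ measurable_const, lintegral_const,
          ENNReal.div_mul_cancel hσ hσ']

lemma IsStarShaped.measure_mul_setLIntegral_ball_le {D : Set E} (h : IsStarShaped D)
    (hD : IsOpen D) {r : ℝ} (hDr : D ⊆ ball 0 r) {g : ℝ → ℝ≥0∞} (hg : Antitone g) :
    μ D * ∫⁻ x in ball 0 r, g ‖x‖ ∂μ ≤ μ (ball 0 r) * ∫⁻ x in D, g ‖x‖ ∂μ := by
  set I := ∫⁻ x in ball 0 r, g ‖x‖ ∂μ
  have hgm : Measurable fun x : E => g ‖x‖ := hg.measurable.comp measurable_norm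
  have hind (S : Set E) :
      ∫⁻ x in S, (Iio r).indicator (fun _ => I) ‖x‖ ∂μ = μ (S ∩ ball 0 r) * I := by
    have (x : E) : (Iio r).indicator (fun _ => I) ‖x‖ = (ball (0 : E) r).indicator (fun _ => I) x :=
      by simp [indicator]
    simp only [this]
    rw [lintegral_indicator_const measurableSet_ball, Measure.restrict_apply measurableSet_ball,
      inter_comm, mul_comm]
  have := h.setLIntegral_comp_norm_le (μ := μ) (e := 0)
    (a := (Iio r).indicator fun _ => I) hD (isBounded_ball.subset hDr)
    (measurable_const.indicator measurableSet_Iio) (hg.measurable.const_mul (μ (ball 0 r)))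
    fun R => ?_
  · rwa [hind, inter_eq_left.2 hDr, add_zero, lintegral_const_mul _ hgm] at this
  · rw [hind, add_zero, lintegral_const_mul _ hgm,
      (by ext; simp : ball (0 : E) R ∩ ball 0 r = ball 0 (min R r))]
    refine (measure_ball_mul_setLIntegral_ball_le hg (min_le_right R r)).trans ?_
    gcongr
    exact min_le_left R r

end PolarCoordinates

section TangentBalls

variable {E : Type*} [NormedAddCommGroup E] [InnerProductSpace ℝ E]

lemma closedBall_norm_inter_closedBall_neg_subset (e : E) :
    closedBall e ‖e‖ ∩ closedBall (-e) ‖e‖ ⊆ {0} := by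
  rintro y ⟨hy, hy'⟩
  rw [mem_closedBall_iff_norm] at hy hy'
  rw [sub_neg_eq_add] at hy'
  have := parallelogram_law_with_norm ℝ y e
  rw [mem_singleton_iff, ← norm_eq_zero]
  nlinarith [norm_nonneg (y - e), norm_nonneg (y + e)]

lemma exists_forall_ball_disjoint_closedBall_norm {τ : ℝ} (hτ : 0 < τ) (ρ : ℝ) :
    ∃ s > 0, ∀ e f : E, ‖e‖ = ρ → ‖f‖ = 1 → inner ℝ e f = 0 →
      ball ((τ / 2) • f) s ⊆ ball 0 τ ∧ Disjoint (closedBall e ρ) (ball ((τ / 2) • f) s) := by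
  have hρ : |ρ| < √(ρ ^ 2 + (τ / 2) ^ 2) := lt_sqrt_of_sq_lt (by rw [sq_abs]; nlinarith)
  refine ⟨min (τ / 2) (√(ρ ^ 2 + (τ / 2) ^ 2) - ρ),
    lt_min (half_pos hτ) (sub_pos.2 ((le_abs_self ρ).trans_lt hρ)), fun e f he hf hef => ⟨?_, ?_⟩⟩
  · refine ball_subset_ball' ?_
    rw [dist_zero_right, norm_smul, hf, mul_one, norm_of_nonneg (half_pos hτ).le]
    linarith [min_le_left (τ / 2) (√(ρ ^ 2 + (τ / 2) ^ 2) - ρ)]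
  · refine closedBall_disjoint_ball ?_
    have hdist : dist e ((τ / 2) • f) = √(ρ ^ 2 + (τ / 2) ^ 2) := by
      rw [dist_eq_norm, eq_comm, sqrt_eq_iff_mul_self_eq (by positivity) (norm_nonneg _),
        norm_sub_sq_eq_norm_sq_add_norm_sq_real (by rw [inner_smul_right, hef, mul_zero]), he,
        norm_smul, hf, mul_one, norm_of_nonneg (half_pos hτ).le]
      ring
    rw [hdist]
    linarith [min_le_right (τ / 2) (√(ρ ^ 2 + (τ / 2) ^ 2) - ρ)]

lemma exists_norm_eq_one_inner_eq_zero [FiniteDimensional ℝ E] (hE : 2 ≤ Module.finrank ℝ E)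
    (e : E) : ∃ f : E, ‖f‖ = 1 ∧ inner ℝ e f = 0 := by
  have : LinearMap.ker (innerₛₗ ℝ e) ≠ ⊥ :=
    LinearMap.ker_ne_bot_of_finrank_lt (by simpa using by lia)
  obtain ⟨g, hg, hg₀⟩ := Submodule.exists_mem_ne_zero_of_ne_bot this
  have hge : inner ℝ e g = 0 := by simpa using hg
  exact ⟨‖g‖⁻¹ • g, by simp [norm_smul, hg₀], by rw [inner_smul_right, hge, mul_zero]⟩

variable [FiniteDimensional ℝ E] [MeasurableSpace E] [BorelSpace E] (μ : Measure E)
  [μ.IsAddHaarMeasure]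

-- Two opposite balls tangent at the origin are symmetric to each other, and leave room for a small
-- ball in their common tangent hyperplane.
theorem exists_two_mul_setLIntegral_closedBall_add_le (hE : 2 ≤ Module.finrank ℝ E) {τ : ℝ}
    (hτ : 0 < τ) (ρ : ℝ) :
    ∃ s > 0, ∀ F : ℝ → ℝ≥0∞, Antitone F → ∀ e : E, ‖e‖ = ρ →
      2 * ∫⁻ x in closedBall e ρ, F ‖x‖ ∂μ + F τ * μ (ball 0 s) ≤ ∫⁻ x, F ‖x‖ ∂μ := by
  have : Nontrivial E := Module.nontrivial_of_finrank_pos (R := ℝ) (by lia)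
  obtain ⟨s, hs, hdisj⟩ := exists_forall_ball_disjoint_closedBall_norm (E := E) hτ ρ
  refine ⟨s, hs, fun F hF e he => ?_⟩
  obtain ⟨f, hf, hef⟩ := exists_norm_eq_one_inner_eq_zero hE e
  obtain ⟨hball, hd⟩ := hdisj e f he hf hef
  obtain ⟨-, hd'⟩ := hdisj (-e) f (by rwa [norm_neg]) hf (by rw [inner_neg_left, hef, neg_zero])
  have hneg : ∫⁻ x in closedBall (-e) ρ, F ‖x‖ ∂μ = ∫⁻ x in closedBall e ρ, F ‖x‖ ∂μ := by
    have := (Measure.measurePreserving_neg μ).setLIntegral_comp_preimage_emb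
      (MeasurableEquiv.neg E).measurableEmbedding (fun x => F ‖x‖) (closedBall e ρ)
    simpa using this
  have hae : AEDisjoint μ (closedBall e ρ) (closedBall (-e) ρ) :=
    measure_mono_null (he ▸ closedBall_norm_inter_closedBall_neg_subset e) (measure_singleton 0)
  have hsmall : F τ * μ (ball 0 s) ≤ ∫⁻ x in ball ((τ / 2) • f) s, F ‖x‖ ∂μ := by
    rw [← Measure.addHaar_ball_center μ ((τ / 2) • f) s, ← setLIntegral_const]
    exact setLIntegral_mono' measurableSet_ball fun x hx => hF (mem_ball_zero_iff.1 (hball hx)).le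
  calc 2 * ∫⁻ x in closedBall e ρ, F ‖x‖ ∂μ + F τ * μ (ball 0 s)
      ≤ ∫⁻ x in closedBall e ρ, F ‖x‖ ∂μ + ∫⁻ x in closedBall (-e) ρ, F ‖x‖ ∂μ +
        ∫⁻ x in ball ((τ / 2) • f) s, F ‖x‖ ∂μ := by rw [hneg, two_mul]; gcongr
    _ = ∫⁻ x in closedBall e ρ ∪ closedBall (-e) ρ ∪ ball ((τ / 2) • f) s, F ‖x‖ ∂μ := by
      rw [lintegral_union measurableSet_ball (hd.union_left hd'),
        Measure.restrict_union₀ hae measurableSet_closedBall.nullMeasurableSet,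
        lintegral_add_measure]
    _ ≤ ∫⁻ x, F ‖x‖ ∂μ := setLIntegral_le_lintegral _ _

end TangentBalls

section RadialProfile

variable {N : ℕ} {p q lam r ε : ℝ} {w : ℝ → ℝ}

namespace IsRadialProfile

variable (h : IsRadialProfile N p q lam r ε w) (hq : 0 < q)
include h hq

lemma antitone_ofReal_rpow : Antitone fun ρ => ENNReal.ofReal (w ρ ^ q) := fun _ _ hρ =>
  ENNReal.ofReal_le_ofReal (rpow_le_rpow (h.nonneg _) (h.antitone hρ) hq.le)

lemma setLIntegral_ball_rpow_eq_one :
    ∫⁻ x in ball (0 : EuclideanSpace ℝ (Fin N)) r, ENNReal.ofReal (w ‖x‖ ^ q) = 1 := by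
  obtain ⟨r₁, hr₁, hw⟩ := h.exists_eq_zero
  rw [← h.lintegral_rpow_eq_one]
  refine setLIntegral_eq_of_support_subset fun x hx => ?_
  contrapose! hx
  simp [hw _ (hr₁.le.trans (by simpa using hx)), zero_rpow hq.ne']

variable [NeZero N] {D : Set (EuclideanSpace ℝ (Fin N))} (hD : IsOpen D) (hDr : D ⊆ ball 0 r)
  (hs : IsStarShaped D)
include hD hDr hs

lemma setLIntegral_abs_deriv_rpow_le :
    ∫⁻ x in D, ENNReal.ofReal (|deriv w ‖x‖| ^ p) ≤
      ENNReal.ofReal lam * (∫⁻ x in D, ENNReal.ofReal (w ‖x‖ ^ q)) + ENNReal.ofReal ε := by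
  have hw : Measurable fun ρ => ENNReal.ofReal (w ρ ^ q) :=
    (h.antitone_ofReal_rpow hq).measurable
  have hw' : Measurable fun ρ => ENNReal.ofReal (|deriv w ρ| ^ p) := by
    have := measurable_deriv w
    fun_prop
  have hwE : Measurable fun x : EuclideanSpace ℝ (Fin N) => ENNReal.ofReal (w ‖x‖ ^ q) :=
    hw.comp measurable_norm
  rw [← lintegral_const_mul _ hwE]
  refine hs.setLIntegral_comp_norm_le hD (isBounded_ball.subset hDr) hw'
    (hw.const_mul (ENNReal.ofReal lam)) fun R => ?_
  rw [lintegral_const_mul _ hwE]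
  exact h.setLIntegral_ball_le R

lemma volume_le_mul_setLIntegral_rpow :
    volume D ≤ volume (ball (0 : EuclideanSpace ℝ (Fin N)) r) *
      ∫⁻ x in D, ENNReal.ofReal (w ‖x‖ ^ q) := by
  have := hs.measure_mul_setLIntegral_ball_le (μ := volume) hD hDr (h.antitone_ofReal_rpow hq)
  rwa [h.setLIntegral_ball_rpow_eq_one hq, mul_one] at this

end IsRadialProfile

lemma exists_lt_half_forall_setLIntegral_closedBall_le (hN : 2 ≤ N) (hq : 0 < q) {τ c : ℝ}
    (hτ : 0 < τ) (hc : 0 < c) (ρ : ℝ) :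
    ∃ η < (2⁻¹ : ℝ≥0∞), ∀ {p lam r ε w}, IsRadialProfile N p q lam r ε w → c ≤ w τ →
      ∀ e : EuclideanSpace ℝ (Fin N), ‖e‖ = ρ →
        ∫⁻ x in closedBall e ρ, ENNReal.ofReal (w ‖x‖ ^ q) ≤ η := by
  obtain ⟨s, hs, h⟩ := exists_two_mul_setLIntegral_closedBall_add_le
    (volume : Measure (EuclideanSpace ℝ (Fin N))) (by simpa using hN) hτ ρ
  set δ := ENNReal.ofReal (c ^ q) * volume (ball (0 : EuclideanSpace ℝ (Fin N)) s)
  have hδ : δ ≠ 0 := mul_ne_zero (by simpa using rpow_pos_of_pos hc q) (measure_ball_pos _ _ hs).ne'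
  refine ⟨(1 - δ) / 2, ?_, fun hw hcw e he => ?_⟩
  · rw [← one_div]
    exact ENNReal.div_lt_div_right (by simp) (by simp) (ENNReal.sub_lt_self (by simp) (by simp) hδ)
  · rw [ENNReal.le_div_iff_mul_le (by simp) (by simp), mul_comm]
    refine ENNReal.le_sub_of_add_le_right (ne_of_lt ?_) ?_
    · exact ENNReal.mul_lt_top ENNReal.ofReal_lt_top measure_ball_lt_top
    · refine le_trans ?_ ((h _ (hw.antitone_ofReal_rpow hq) e he).trans hw.lintegral_rpow_eq_one.le)
      exact add_le_add_right
        (mul_le_mul_left (ENNReal.ofReal_le_ofReal (rpow_le_rpow hc.le hcw hq.le)) _) _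

end RadialProfile

/-! ### One-sided test functions at an endpoint of a diameter -/

lemma lipschitzWith_max_sub_norm {E : Type*} [SeminormedAddCommGroup E] (a b : ℝ) :
    LipschitzWith 1 fun x : E => max (a - ‖x‖) b := by
  have : LipschitzWith (0 + 1) fun x : E => a - ‖x‖ :=
    (LipschitzWith.const a).sub lipschitzWith_one_norm
  simpa using this.max_const b

lemma IsStarShaped.ofReal_mul_measure_le_setLIntegral_cone_rpow {E : Type*}
    [NormedAddCommGroup E] [NormedSpace ℝ E] [FiniteDimensional ℝ E] [MeasurableSpace E]
    [BorelSpace E] {μ : Measure E} [μ.IsAddHaarMeasure] {D : Set E} {q r : ℝ} (h : IsStarShaped D)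
    (hD : IsOpen D) (hq : 0 ≤ q) (hr : 0 ≤ r) (hDr : D ⊆ ball 0 r) :
    ENNReal.ofReal ((r / 4) ^ q * (4 ^ Module.finrank ℝ E)⁻¹) * μ D ≤
      ∫⁻ x in D, ENNReal.ofReal (max (r / 2 - ‖x‖) 0 ^ q) ∂μ := by
  have hsub : (4⁻¹ : ℝ) • D ⊆ D := by
    rintro _ ⟨y, hy, rfl⟩
    exact h y hy _ ⟨by norm_num, by norm_num⟩
  have hcone : ∀ x ∈ (4⁻¹ : ℝ) • D, r / 4 ≤ max (r / 2 - ‖x‖) 0 := by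
    rintro _ ⟨y, hy, rfl⟩
    have hy' : ‖(4⁻¹ : ℝ) • y‖ = 4⁻¹ * ‖y‖ := by simp [norm_smul]
    have := mem_ball_zero_iff.1 (hDr hy)
    exact le_max_of_le_left (by simp only [hy']; linarith)
  calc ENNReal.ofReal ((r / 4) ^ q * (4 ^ Module.finrank ℝ E)⁻¹) * μ D
      = ENNReal.ofReal ((r / 4) ^ q) * μ ((4⁻¹ : ℝ) • D) := by
        rw [Measure.addHaar_smul, inv_pow, abs_of_pos (by positivity), ← mul_assoc,
          ENNReal.ofReal_mul (by positivity)]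
    _ ≤ ∫⁻ x in (4⁻¹ : ℝ) • D, ENNReal.ofReal (max (r / 2 - ‖x‖) 0 ^ q) ∂μ := by
        rw [← setLIntegral_const]
        refine setLIntegral_mono' (hD.smul₀ (by norm_num)).measurableSet fun x hx => ?_
        exact ENNReal.ofReal_le_ofReal (rpow_le_rpow (by positivity) (hcone x hx) hq)
    _ ≤ _ := lintegral_mono_set hsub

/-- A nonnegative Lipschitz function supported inside `ball c r`, whose Rayleigh quotient on `Ω` is
at most `m`: one of the two parts, of opposite sign, of a competitor for `muPQ p q Ω`. The bound is
written without division, so that it makes sense before the integrals are known to be finite. -/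
structure IsOneSidedTestFunction {N : ℕ} (p q m : ℝ) (Ω : Set (EuclideanSpace ℝ (Fin N)))
    (c : EuclideanSpace ℝ (Fin N)) (r : ℝ) (g : EuclideanSpace ℝ (Fin N) → ℝ) : Prop where
  exists_lipschitzWith : ∃ K, LipschitzWith K g
  nonneg : ∀ x, 0 ≤ g x
  exists_pos : ∃ x ∈ Ω, 0 < g x
  exists_eq_zero : ∃ r₁ < r, ∀ x, r₁ ≤ dist x c → g x = 0
  setLIntegral_norm_fderiv_le : ∫⁻ x in Ω, ENNReal.ofReal (‖fderiv ℝ g x‖ ^ p) ≤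
    ENNReal.ofReal m * (∫⁻ x in Ω, ENNReal.ofReal (g x ^ q)) ^ (p / q)

lemma IsStarShaped.exists_norm_le {E : Type*} [NormedAddCommGroup E] [NormedSpace ℝ E] {D : Set E}
    (h : IsStarShaped D) (hD : D.Nonempty) {s : ℝ} (hs : 0 < s) : ∃ x ∈ D, ‖x‖ ≤ s := by
  obtain ⟨x, hx⟩ := hD
  have hsx : 0 < max s ‖x‖ := lt_max_of_lt_left hs
  refine ⟨(s / max s ‖x‖) • x,
    h x hx _ ⟨div_pos hs hsx, (div_le_one hsx).2 (le_max_left _ _)⟩, ?_⟩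
  rw [norm_smul, norm_of_nonneg (by positivity), div_mul_eq_mul_div, div_le_iff₀ hsx]
  gcongr
  exact le_max_right _ _

lemma ennreal_mul_add_le_mul_rpow {a e m η A I : ℝ≥0∞} {θ : ℝ} (hθ : 0 ≤ θ) (hθ' : θ ≤ 1)
    (hm : a * η ^ (1 - θ) ≤ m) (he : e ≤ (m - a * η ^ (1 - θ)) * A ^ θ) (hAI : A ≤ I)
    (hIη : I ≤ η) : a * I + e ≤ m * I ^ θ := by
  have hθ'' : 0 ≤ 1 - θ := sub_nonneg.2 hθ'
  calc a * I + e ≤ a * (η ^ (1 - θ) * I ^ θ) + (m - a * η ^ (1 - θ)) * I ^ θ := by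
        nth_rw 1 [← ENNReal.rpow_one I, ← sub_add_cancel 1 θ,
          ENNReal.rpow_add_of_nonneg _ _ hθ'' hθ]
        gcongr
        exact he.trans (by gcongr)
    _ = (a * η ^ (1 - θ) + (m - a * η ^ (1 - θ))) * I ^ θ := by ring
    _ = m * I ^ θ := by rw [add_tsub_cancel_of_le hm]

lemma exists_ofReal_mul_rpow_lt_two_rpow_mul_lt {L s : ℝ} {η : ℝ≥0∞} (hL : 0 < L)
    (hη : η < 2⁻¹) (hs : 0 < s) :
    ∃ m > 0, ENNReal.ofReal L * η ^ s < ENNReal.ofReal m ∧ 2 ^ s * m < L := by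
  have h2 : (0 : ℝ) < 2 ^ s := by positivity
  have hlt : ENNReal.ofReal L * η ^ s < ENNReal.ofReal (L / 2 ^ s) := by
    rw [div_eq_mul_inv, ENNReal.ofReal_mul hL.le, ENNReal.ofReal_inv_of_pos h2,
      ← ENNReal.ofReal_rpow_of_pos two_pos, ← ENNReal.inv_rpow, ENNReal.ofReal_ofNat]
    exact ENNReal.mul_lt_mul_right (by simpa using hL) ENNReal.ofReal_ne_top
      (ENNReal.rpow_lt_rpow hη hs)
  obtain ⟨m, -, hLm, hmL⟩ := ENNReal.lt_iff_exists_real_btwn.1 hlt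
  refine ⟨m, ENNReal.ofReal_pos.1 (zero_le.trans_lt hLm), hLm, ?_⟩
  rw [mul_comm]
  exact (lt_div_iff₀ h2).1 ((ENNReal.ofReal_lt_ofReal_iff (div_pos hL h2)).1 hmL)

lemma exists_mem_Ioc_ofReal_le {δ : ℝ≥0∞} (hδ : δ ≠ 0) :
    ∃ ε ∈ Ioc (0 : ℝ) 1, ENNReal.ofReal ε ≤ δ := by
  obtain ⟨ε, -, hε, hεδ⟩ := ENNReal.lt_iff_exists_real_btwn.1
    (lt_min (pos_iff_ne_zero.2 hδ) zero_lt_one)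
  exact ⟨ε, ⟨ENNReal.ofReal_pos.1 hε, ENNReal.ofReal_le_one.1 (hεδ.le.trans (min_le_right _ _))⟩,
    hεδ.le.trans (min_le_left _ _)⟩

section Endpoint

variable {N : ℕ} {p q m r : ℝ} {D : Set (EuclideanSpace ℝ (Fin N))}

lemma IsStarShaped.isOneSidedTestFunction_cone (h : IsStarShaped D) (hD : IsOpen D)
    (hD' : D.Nonempty) (hp : 0 ≤ p) (hpq : p ≤ q) (hq : 0 < q) (hr : 0 < r) (hDr : D ⊆ ball 0 r)
    (hsmall : volume D ^ (1 - p / q) ≤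
      ENNReal.ofReal m * ENNReal.ofReal ((r / 4) ^ q * (4 ^ N)⁻¹) ^ (p / q)) :
    IsOneSidedTestFunction p q m D 0 r fun x => max (r / 2 - ‖x‖) 0 where
  exists_lipschitzWith := ⟨1, lipschitzWith_max_sub_norm _ _⟩
  nonneg _ := le_max_right _ _
  exists_pos := by
    obtain ⟨x, hx, hxr⟩ := h.exists_norm_le hD' (s := r / 4) (by positivity)
    exact ⟨x, hx, lt_max_of_lt_left (by linarith)⟩
  exists_eq_zero := ⟨r / 2, half_lt_self hr, fun x hx => max_eq_right (by simpa using hx)⟩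
  setLIntegral_norm_fderiv_le := by
    have hθ : 0 ≤ p / q := by positivity
    have hθ' : 0 ≤ 1 - p / q := sub_nonneg.2 ((div_le_one hq).2 hpq)
    set f : EuclideanSpace ℝ (Fin N) → ℝ := fun x => max (r / 2 - ‖x‖) 0
    have hf (x) : ENNReal.ofReal (‖fderiv ℝ f x‖ ^ p) ≤ 1 :=
      ENNReal.ofReal_le_one.2 (rpow_le_one (norm_nonneg _)
        (by simpa using norm_fderiv_le_of_lipschitz ℝ (f := f) (lipschitzWith_max_sub_norm _ _)) hp)
    have hcone := h.ofReal_mul_measure_le_setLIntegral_cone_rpow (μ := volume) hD hq.le hr.le hDr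
    rw [finrank_euclideanSpace_fin] at hcone
    calc ∫⁻ x in D, ENNReal.ofReal (‖fderiv ℝ f x‖ ^ p)
        ≤ volume D := (setLIntegral_mono' hD.measurableSet fun x _ => hf x).trans_eq (by simp)
      _ = volume D ^ (1 - p / q) * volume D ^ (p / q) := by
        rw [← ENNReal.rpow_add_of_nonneg _ _ hθ' hθ, sub_add_cancel, ENNReal.rpow_one]
      _ ≤ ENNReal.ofReal m * ENNReal.ofReal ((r / 4) ^ q * (4 ^ N)⁻¹) ^ (p / q) *
          volume D ^ (p / q) := by gcongr
      _ ≤ ENNReal.ofReal m * (∫⁻ x in D, ENNReal.ofReal (f x ^ q)) ^ (p / q) := by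
        rw [mul_assoc, ← ENNReal.mul_rpow_of_nonneg _ _ hθ]
        gcongr

lemma IsRadialProfile.isOneSidedTestFunction [NeZero N] {lam ε τ : ℝ} {w : ℝ → ℝ}
    {η A : ℝ≥0∞} (h : IsRadialProfile N p q lam r ε w) (hτ : 0 < τ) (hwτ : 0 < w τ) (hp : 0 ≤ p)
    (hpq : p ≤ q) (hq : 0 < q) (hD : IsOpen D) (hD' : D.Nonempty) (hDr : D ⊆ ball 0 r)
    (hs : IsStarShaped D) (hη : ENNReal.ofReal lam * η ^ (1 - p / q) ≤ ENNReal.ofReal m)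
    (hε : ENNReal.ofReal ε ≤
      (ENNReal.ofReal m - ENNReal.ofReal lam * η ^ (1 - p / q)) * A ^ (p / q))
    (hA : A ≤ ∫⁻ x in D, ENNReal.ofReal (w ‖x‖ ^ q))
    (hw : ∫⁻ x in D, ENNReal.ofReal (w ‖x‖ ^ q) ≤ η) :
    IsOneSidedTestFunction p q m D 0 r fun x => w ‖x‖ where
  exists_lipschitzWith :=
    let ⟨K, hK⟩ := h.exists_lipschitzWith
    ⟨K * 1, hK.comp lipschitzWith_one_norm⟩
  nonneg _ := h.nonneg _
  exists_pos :=
    let ⟨x, hx, hxτ⟩ := hs.exists_norm_le hD' hτ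
    ⟨x, hx, hwτ.trans_le (h.antitone hxτ)⟩
  exists_eq_zero :=
    let ⟨r₁, hr₁, hw⟩ := h.exists_eq_zero
    ⟨r₁, hr₁, fun x hx => hw _ (by simpa using hx)⟩
  setLIntegral_norm_fderiv_le := by
    have hgrad : ∫⁻ x in D, ENNReal.ofReal (‖fderiv ℝ (fun x => w ‖x‖) x‖ ^ p) =
        ∫⁻ x in D, ENNReal.ofReal (|deriv w ‖x‖| ^ p) :=
      setLIntegral_congr_fun_ae hD.measurableSet <| by
        filter_upwards [Measure.ae_ne volume 0] with x hx _
        rw [norm_fderiv_comp_norm w hx]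
    rw [hgrad]
    exact (h.setLIntegral_abs_deriv_rpow_le hq hD hDr hs).trans
      (ennreal_mul_add_le_mul_rpow (by positivity) ((div_le_one hq).2 hpq) hη hε hA hw)

-- If `D` is small a cone is a good test function by scaling. Otherwise the mass of the profile on
-- `D` is bounded below, so that the defect `ε` can be absorbed, while the enclosing tangent ball
-- keeps that mass away from `1 / 2`.
theorem exists_forall_isOneSidedTestFunction (hN : 2 ≤ N) (hp : 1 < p) (hpq : p < q)
    (hq : ltCritical N p q) (hr : 0 < r) (ρ : ℝ) :
    ∃ m > 0, 2 ^ (1 - p / q) * m < lambdaPQ p q (ball (0 : EuclideanSpace ℝ (Fin N)) r) ∧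
      ∀ D : Set (EuclideanSpace ℝ (Fin N)), ∀ e, IsOpen D → D.Nonempty → D ⊆ ball 0 r →
        IsStarShaped D → ‖e‖ = ρ → D ⊆ closedBall e ρ →
        ∃ g, IsOneSidedTestFunction p q m D 0 r g := by
  have : NeZero N := ⟨by lia⟩
  have hp₀ : 0 < p := by linarith
  have hq₀ : 0 < q := by linarith
  have hθ : 0 < 1 - p / q := sub_pos.2 ((div_lt_one hq₀).2 hpq)
  obtain ⟨τ, hτ, c, hc, hprofile⟩ := exists_isRadialProfile_le hN hp hpq.le hq hr
    (isOpen_ball (x := (0 : EuclideanSpace ℝ (Fin N)))) (nonempty_ball.2 hr) subset_rfl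
  obtain ⟨η, hη, hhalf⟩ := exists_lt_half_forall_setLIntegral_closedBall_le hN hq₀ hτ.1 hc ρ
  have hlam := lambdaPQ_pos hN hp.le hq₀ hq (isOpen_ball (x := (0 : EuclideanSpace ℝ (Fin N))))
    (nonempty_ball.2 hr) isBounded_ball
  obtain ⟨m, hm, hηm, hmlam⟩ := exists_ofReal_mul_rpow_lt_two_rpow_mul_lt hlam hη hθ
  refine ⟨m, hm, hmlam, fun D e hD hD' hDr hs he hDe => ?_⟩
  set M := ENNReal.ofReal m * ENNReal.ofReal ((r / 4) ^ q * (4 ^ N)⁻¹) ^ (p / q)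
  set A := M ^ (1 - p / q)⁻¹ / volume (ball (0 : EuclideanSpace ℝ (Fin N)) r)
  rcases le_or_gt (volume D ^ (1 - p / q)) M with hsmall | hlarge
  · exact ⟨_, hs.isOneSidedTestFunction_cone hD hD' hp₀.le hpq.le hq₀ hr hDr hsmall⟩
  have hrpow {x : ℝ≥0∞} {s : ℝ} (hx : x ≠ 0) (hs : 0 ≤ s) : x ^ s ≠ 0 := by
    simp [ENNReal.rpow_eq_zero_iff, hx, hs]
  have hM : M ≠ 0 := mul_ne_zero (ENNReal.ofReal_pos.2 hm).ne'
    (hrpow (ENNReal.ofReal_pos.2 (by positivity)).ne' (by positivity))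
  have hA : A ≠ 0 := ENNReal.div_ne_zero.2
    ⟨hrpow hM (inv_nonneg.2 hθ.le), measure_ball_lt_top.ne⟩
  obtain ⟨ε, hε, hεA⟩ := exists_mem_Ioc_ofReal_le
    (mul_ne_zero (tsub_pos_of_lt hηm).ne' (hrpow hA (s := p / q) (by positivity)))
  obtain ⟨w, hw, hcw⟩ := hprofile ε hε
  refine ⟨_, hw.isOneSidedTestFunction hτ.1 (hc.trans_le hcw) hp₀.le hpq.le hq₀ hD hD' hDr hs
    hηm.le hεA ?_ ((lintegral_mono_set hDe).trans (hhalf hw hcw e he))⟩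
  refine ENNReal.div_le_of_le_mul' (le_trans ?_ (hw.volume_le_mul_setLIntegral_rpow hq₀ hD hDr hs))
  exact (ENNReal.rpow_inv_le_iff hθ).2 hlarge.le

end Endpoint

lemma setLIntegral_comp_sub_right_eq_inter_ball {E : Type*} [NormedAddCommGroup E]
    [MeasurableSpace E] [BorelSpace E] {μ : Measure E} [μ.IsAddRightInvariant] {r : ℝ} {c : E}
    {Ω : Set E} {f : E → ℝ≥0∞} (hf : ∀ x, r ≤ dist x 0 → f x = 0) :
    ∫⁻ x in Ω, f (x - c) ∂μ = ∫⁻ x in (c + ·) ⁻¹' Ω ∩ ball 0 r, f x ∂μ := by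
  have hsupp : Function.support f ⊆ ball 0 r := fun x hx => by
    contrapose! hx
    simp [hf x (by simpa using hx)]
  have := (measurePreserving_sub_right μ c).setLIntegral_comp_preimage_emb
    (measurableEmbedding_subRight c) f ((c + ·) ⁻¹' Ω)
  rw [inter_comm, ← Measure.restrict_restrict measurableSet_ball,
    setLIntegral_eq_of_support_subset hsupp, ← this]
  simp [preimage_preimage]

lemma nonempty_preimage_const_add_inter_ball {E : Type*} [SeminormedAddCommGroup E] {Ω : Set E}
    {c : E} {r : ℝ} (hc : c ∈ closure Ω) (hr : 0 < r) : ((c + ·) ⁻¹' Ω ∩ ball 0 r).Nonempty := by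
  obtain ⟨x, hx, hxc⟩ := Metric.mem_closure_iff.1 hc r hr
  exact ⟨x - c, by simpa using hx, by simpa [← dist_eq_norm, dist_comm] using hxc⟩

lemma isStarShaped_preimage_const_add_inter_ball {E : Type*} [NormedAddCommGroup E]
    [NormedSpace ℝ E] {Ω : Set E} {c : E} (hΩ : Convex ℝ Ω) (hΩ' : IsOpen Ω) (hc : c ∈ closure Ω)
    (r : ℝ) : IsStarShaped ((c + ·) ⁻¹' Ω ∩ ball 0 r) := by
  rintro x ⟨hx, hxr⟩ t ⟨ht, ht'⟩
  refine ⟨?_, ?_⟩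
  · have hx' : c + x ∈ interior Ω := hΩ'.interior_eq.symm ▸ hx
    have := hΩ.combo_closure_interior_mem_interior hc hx' (sub_nonneg.2 ht') ht
      (sub_add_cancel 1 t)
    rw [hΩ'.interior_eq] at this
    rwa [smul_add, ← add_assoc, ← add_smul, sub_add_cancel, one_smul] at this
  · rw [mem_ball_zero_iff] at hxr ⊢
    rw [norm_smul, norm_of_nonneg ht.le]
    exact (mul_le_of_le_one_left (norm_nonneg x) ht').trans_lt hxr

section OneSided

variable {N : ℕ} {p q m r : ℝ} {Ω : Set (EuclideanSpace ℝ (Fin N))}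
  {c : EuclideanSpace ℝ (Fin N)} {g : EuclideanSpace ℝ (Fin N) → ℝ}

namespace IsOneSidedTestFunction

lemma eventuallyEq_zero (h : IsOneSidedTestFunction p q m Ω c r g)
    {x : EuclideanSpace ℝ (Fin N)} (hx : r ≤ dist x c) : g =ᶠ[𝓝 x] 0 := by
  obtain ⟨r₁, hr₁, hg⟩ := h.exists_eq_zero
  filter_upwards [(continuousAt_id.dist continuousAt_const).eventually_const_lt
    (hr₁.trans_le hx)] with y hy using hg y (le_of_lt hy)

lemma comp_sub_right (h : IsOneSidedTestFunction p q m ((c + ·) ⁻¹' Ω ∩ ball 0 r) 0 r g)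
    (hp : 0 < p) (hq : 0 < q) : IsOneSidedTestFunction p q m Ω c r fun x => g (x - c) where
  exists_lipschitzWith :=
    let ⟨K, hK⟩ := h.exists_lipschitzWith
    ⟨K * 1, hK.comp (IsometryEquiv.subRight c).isometry.lipschitz⟩
  nonneg _ := h.nonneg _
  exists_pos :=
    let ⟨x, hx, hgx⟩ := h.exists_pos
    ⟨c + x, hx.1, by simpa using hgx⟩
  exists_eq_zero :=
    let ⟨r₁, hr₁, hg⟩ := h.exists_eq_zero
    ⟨r₁, hr₁, fun x hx => hg _ (by simpa [dist_eq_norm] using hx)⟩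
  setLIntegral_norm_fderiv_le := by
    simp only [fderiv_comp_sub]
    rw [setLIntegral_comp_sub_right_eq_inter_ball
        (f := fun x => ENNReal.ofReal (‖fderiv ℝ g x‖ ^ p)) (r := r),
      setLIntegral_comp_sub_right_eq_inter_ball
        (f := fun x => ENNReal.ofReal (g x ^ q)) (r := r)]
    · exact h.setLIntegral_norm_fderiv_le
    · intro x hx
      simp [(h.eventuallyEq_zero hx).eq_of_nhds, zero_rpow hq.ne']
    · intro x hx
      simp [(h.eventuallyEq_zero hx).fderiv_eq, zero_rpow hp.ne']

lemma const_mul (h : IsOneSidedTestFunction p q m Ω c r g) (hp : 0 ≤ p) (hq : 0 < q)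
    {a : ℝ} (ha : 0 < a) :
    IsOneSidedTestFunction p q m Ω c r fun x => a * g x where
  exists_lipschitzWith :=
    let ⟨_, hK⟩ := h.exists_lipschitzWith
    ⟨_, (lipschitzWith_smul a).comp hK⟩
  nonneg x := mul_nonneg ha.le (h.nonneg x)
  exists_pos :=
    let ⟨x, hx, hgx⟩ := h.exists_pos
    ⟨x, hx, mul_pos ha hgx⟩
  exists_eq_zero :=
    let ⟨r₁, hr₁, hg⟩ := h.exists_eq_zero
    ⟨r₁, hr₁, fun x hx => by rw [hg x hx, mul_zero]⟩
  setLIntegral_norm_fderiv_le := by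
    have hgrad (x) : ENNReal.ofReal (‖fderiv ℝ (fun x => a * g x) x‖ ^ p) =
        ENNReal.ofReal (a ^ p) * ENNReal.ofReal (‖fderiv ℝ g x‖ ^ p) := by
      have : fderiv ℝ (fun x => a * g x) x = a • fderiv ℝ g x :=
        congrFun (fderiv_const_smul_field a) x
      rw [this, norm_smul, norm_of_nonneg ha.le, mul_rpow ha.le (norm_nonneg _),
        ENNReal.ofReal_mul (by positivity)]
    have hpow (x) : ENNReal.ofReal ((a * g x) ^ q) =
        ENNReal.ofReal (a ^ q) * ENNReal.ofReal (g x ^ q) := by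
      rw [mul_rpow ha.le (h.nonneg x), ENNReal.ofReal_mul (by positivity)]
    have hapq : ENNReal.ofReal (a ^ q) ^ (p / q) = ENNReal.ofReal (a ^ p) := by
      rw [ENNReal.ofReal_rpow_of_pos (by positivity), ← rpow_mul ha.le, mul_div_cancel₀ _ hq.ne']
    simp only [hgrad, hpow]
    rw [lintegral_const_mul' _ _ ENNReal.ofReal_ne_top, lintegral_const_mul' _ _
      ENNReal.ofReal_ne_top, ENNReal.mul_rpow_of_nonneg _ _ (by positivity), hapq, mul_left_comm]
    gcongr
    exact h.setLIntegral_norm_fderiv_le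

variable (h : IsOneSidedTestFunction p q m Ω c r g) (hΩ_bdd : Bornology.IsBounded Ω)
include h hΩ_bdd

lemma integrableOn_rpow {s : ℝ} (hs : 0 ≤ s) : IntegrableOn (fun x => g x ^ s) Ω := by
  obtain ⟨K, hK⟩ := h.exists_lipschitzWith
  exact ((hK.continuous.rpow_const fun _ => Or.inr hs).continuousOn.integrableOn_compact
    hΩ_bdd.isCompact_closure).mono_set subset_closure

lemma integral_rpow_pos (hΩ : IsOpen Ω) {s : ℝ} (hs : 0 ≤ s) : 0 < ∫ x in Ω, g x ^ s := by
  obtain ⟨K, hK⟩ := h.exists_lipschitzWith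
  obtain ⟨x, hx, hgx⟩ := h.exists_pos
  rw [setIntegral_pos_iff_support_of_nonneg_ae
    (Eventually.of_forall fun x => rpow_nonneg (h.nonneg x) s) (h.integrableOn_rpow hΩ_bdd hs)]
  refine (((isOpen_lt continuous_const hK.continuous).inter hΩ).measure_pos volume
    ⟨x, hgx, hx⟩).trans_le (measure_mono ?_)
  exact inter_subset_inter_left _ fun y hy => (rpow_pos_of_pos hy s).ne'

lemma integrableOn_norm_fderiv_rpow (hp : 0 ≤ p) :
    IntegrableOn (fun x => ‖fderiv ℝ g x‖ ^ p) Ω := by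
  obtain ⟨K, hK⟩ := h.exists_lipschitzWith
  have := measurable_fderiv ℝ g
  refine Measure.integrableOn_of_bounded (M := (K : ℝ) ^ p) hΩ_bdd.measure_lt_top.ne
    (by fun_prop) (Eventually.of_forall fun x => ?_)
  rw [norm_of_nonneg (by positivity)]
  exact rpow_le_rpow (norm_nonneg _) (norm_fderiv_le_of_lipschitz ℝ hK) hp

lemma integral_norm_fderiv_rpow_le (hp : 0 ≤ p) (hq : 0 ≤ q) (hm : 0 ≤ m) :
    ∫ x in Ω, ‖fderiv ℝ g x‖ ^ p ≤ m * (∫ x in Ω, g x ^ q) ^ (p / q) := by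
  have hgrad := h.integrableOn_norm_fderiv_rpow hΩ_bdd hp
  have hpow := h.integrableOn_rpow hΩ_bdd hq
  have hpow_nonneg (x) : 0 ≤ g x ^ q := rpow_nonneg (h.nonneg x) q
  have hnonneg : 0 ≤ ∫ x in Ω, g x ^ q := integral_nonneg hpow_nonneg
  rw [← ENNReal.ofReal_le_ofReal_iff (by positivity), ENNReal.ofReal_mul hm,
    ← ENNReal.ofReal_rpow_of_nonneg hnonneg (by positivity),
    ofReal_integral_eq_lintegral_ofReal hgrad (Eventually.of_forall fun _ => by positivity),
    ofReal_integral_eq_lintegral_ofReal hpow (Eventually.of_forall hpow_nonneg)]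
  exact h.setLIntegral_norm_fderiv_le

end IsOneSidedTestFunction

end OneSided

theorem exists_forall_convex_isOneSidedTestFunction {N : ℕ} {p q r : ℝ} (hN : 2 ≤ N) (hp : 1 < p)
    (hpq : p < q) (hq : ltCritical N p q) (hr : 0 < r) (ρ : ℝ) :
    ∃ m > 0, 2 ^ (1 - p / q) * m < lambdaPQ p q (ball (0 : EuclideanSpace ℝ (Fin N)) r) ∧
      ∀ Ω : Set (EuclideanSpace ℝ (Fin N)), ∀ c ∈ closure Ω, ∀ e, IsOpen Ω → Convex ℝ Ω →
        dist c e = ρ → Ω ⊆ closedBall e ρ → ∃ g, IsOneSidedTestFunction p q m Ω c r g := by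
  obtain ⟨m, hm, hmlam, hg⟩ := exists_forall_isOneSidedTestFunction hN hp hpq hq hr ρ
  refine ⟨m, hm, hmlam, fun Ω c hc e hΩ hΩ' hce hΩe => ?_⟩
  obtain ⟨g, hg⟩ := hg ((c + ·) ⁻¹' Ω ∩ ball 0 r) (e - c)
    ((hΩ.preimage (continuous_const_add c)).inter isOpen_ball)
    (nonempty_preimage_const_add_inter_ball hc hr) inter_subset_right
    (isStarShaped_preimage_const_add_inter_ball hΩ' hΩ hc r)
    (by rw [← hce, dist_comm, dist_eq_norm]) fun x hx => by
      simpa [dist_eq_norm, add_sub_assoc, sub_sub_eq_add_sub, add_comm] using hΩe hx.1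
  exact ⟨_, hg.comp_sub_right (by linarith) (by linarith)⟩

lemma exists_mem_closure_dist_eq_diam {X : Type*} [PseudoMetricSpace X] [ProperSpace X] {s : Set X}
    (hs : s.Nonempty) (hs_bdd : Bornology.IsBounded s) :
    ∃ x ∈ closure s, ∃ y ∈ closure s, dist x y = diam s := by
  have hc := hs_bdd.isCompact_closure
  obtain ⟨⟨x, y⟩, hxy, hmax⟩ := (hc.prod hc).exists_isMaxOn (hs.closure.prod hs.closure)
    continuous_dist.continuousOn
  refine ⟨x, hxy.1, y, hxy.2, ?_⟩
  rw [← Metric.diam_closure]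
  exact (dist_le_diam_of_mem hc.isBounded hxy.1 hxy.2).antisymm <|
    diam_le_of_forall_dist_le dist_nonneg fun x' hx y' hy => hmax (mk_mem_prod hx hy)

lemma subset_closedBall_diam_of_mem_closure {X : Type*} [PseudoMetricSpace X] {s : Set X} {x : X}
    (hs : Bornology.IsBounded s) (hx : x ∈ closure s) : s ⊆ closedBall x (diam s) := fun y hy => by
  rw [← Metric.diam_closure]
  exact dist_le_diam_of_mem hs.closure (subset_closure hy) hx

/-! ### Gluing two one-sided test functions -/

lemma rpow_add_rpow_le_two_rpow_mul_add_rpow {X Y θ : ℝ} (hX : 0 ≤ X) (hY : 0 ≤ Y) (hθ : 0 ≤ θ)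
    (hθ' : θ ≤ 1) : X ^ θ + Y ^ θ ≤ 2 ^ (1 - θ) * (X + Y) ^ θ := by
  have h := (Real.concaveOn_rpow hθ hθ').2 (mem_Ici.2 hX) (mem_Ici.2 hY)
    (inv_nonneg.2 zero_le_two) (inv_nonneg.2 zero_le_two) (by norm_num)
  simp only [smul_eq_mul] at h
  rw [← mul_add, ← mul_add, mul_rpow (by positivity) (by positivity), inv_rpow zero_le_two,
    inv_mul_le_iff₀ zero_lt_two] at h
  rwa [rpow_sub zero_lt_two, rpow_one, div_eq_mul_inv, mul_assoc]

section Disjoint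

variable {a b : ℝ} (ha : 0 ≤ a) (hb : 0 ≤ b) (hab : a = 0 ∨ b = 0)
include ha hb hab

lemma abs_sub_rpow_of_eq_zero_or_eq_zero {s : ℝ} (hs : s ≠ 0) :
    |a - b| ^ s = a ^ s + b ^ s := by
  rcases hab with rfl | rfl
  · rw [zero_sub, abs_neg, abs_of_nonneg hb, zero_rpow hs, zero_add]
  · rw [sub_zero, abs_of_nonneg ha, zero_rpow hs, add_zero]

lemma abs_sub_rpow_mul_sub_of_eq_zero_or_eq_zero {s : ℝ} (hs : s ≠ 1) :
    |a - b| ^ (s - 2) * (a - b) = a ^ (s - 1) - b ^ (s - 1) := by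
  have hs' : s - 1 ≠ 0 := sub_ne_zero.2 hs
  have hpow {t : ℝ} (ht : 0 ≤ t) : t ^ (s - 2) * t = t ^ (s - 1) := by
    rw [← rpow_add_one' ht (by convert hs' using 1; ring)]
    ring_nf
  rcases hab with rfl | rfl
  · rw [zero_sub, abs_neg, abs_of_nonneg hb, mul_neg, hpow hb, zero_rpow hs', zero_sub]
  · rw [sub_zero, abs_of_nonneg ha, hpow ha, zero_rpow hs', sub_zero]

end Disjoint

lemma norm_fderiv_sub_rpow_of_eventuallyEq_zero {E : Type*} [NormedAddCommGroup E]
    [NormedSpace ℝ E] {f g : E → ℝ} {x : E} {p : ℝ} (hp : p ≠ 0)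
    (h : f =ᶠ[𝓝 x] 0 ∨ g =ᶠ[𝓝 x] 0) :
    ‖fderiv ℝ (fun y => f y - g y) x‖ ^ p = ‖fderiv ℝ f x‖ ^ p + ‖fderiv ℝ g x‖ ^ p := by
  rcases h with h | h
  · have hsub : (fun y => f y - g y) =ᶠ[𝓝 x] fun y => -g y := by
      filter_upwards [h] with y hy
      simp [hy]
    simp [hsub.fderiv_eq, fderiv_fun_neg, h.fderiv_eq, zero_rpow hp]
  · have hsub : (fun y => f y - g y) =ᶠ[𝓝 x] f := by
      filter_upwards [h] with y hy
      simp [hy]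
    simp [hsub.fderiv_eq, h.fderiv_eq, zero_rpow hp]

section Gluing

variable {N : ℕ} {p q m r₀ r₁ : ℝ} {Ω : Set (EuclideanSpace ℝ (Fin N))}
  {c₀ c₁ : EuclideanSpace ℝ (Fin N)} {g₀ g₁ : EuclideanSpace ℝ (Fin N) → ℝ}

lemma muPQ_le_rayleighQuot {v : EuclideanSpace ℝ (Fin N) → ℝ} {K : ℝ≥0}
    (hv : LipschitzOnWith K v (closure Ω)) (hv_ne : ∃ x ∈ Ω, v x ≠ 0)
    (hv_int : ∫ x in Ω, |v x| ^ (q - 2) * v x = 0) : muPQ p q Ω ≤ rayleighQuot p q Ω v :=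
  csInf_le ⟨0, fun _ ⟨_, _, _, _, _, hR⟩ => hR ▸ rayleighQuot_nonneg p q Ω _⟩
    ⟨v, K, hv, hv_ne, hv_int, rfl⟩

namespace IsOneSidedTestFunction

variable (h₀ : IsOneSidedTestFunction p q m Ω c₀ r₀ g₀)
  (h₁ : IsOneSidedTestFunction p q m Ω c₁ r₁ g₁) (hc : r₀ + r₁ ≤ dist c₀ c₁)
include h₀ h₁ hc

lemma eventuallyEq_zero_or_eventuallyEq_zero (x : EuclideanSpace ℝ (Fin N)) :
    g₀ =ᶠ[𝓝 x] 0 ∨ g₁ =ᶠ[𝓝 x] 0 := by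
  rcases le_or_gt r₀ (dist x c₀) with hx | hx
  · exact .inl (h₀.eventuallyEq_zero hx)
  · exact .inr (h₁.eventuallyEq_zero (by linarith [dist_triangle_left c₀ c₁ x]))

lemma eq_zero_or_eq_zero (x : EuclideanSpace ℝ (Fin N)) : g₀ x = 0 ∨ g₁ x = 0 :=
  (h₀.eventuallyEq_zero_or_eventuallyEq_zero h₁ hc x).imp (·.eq_of_nhds) (·.eq_of_nhds)

variable (hm : 0 ≤ m) (hΩ : IsOpen Ω) (hΩ_bdd : Bornology.IsBounded Ω)
include hm hΩ hΩ_bdd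

lemma rayleighQuot_sub_le (hp : 0 < p) (hpq : p ≤ q) :
    rayleighQuot p q Ω (fun x => g₀ x - g₁ x) ≤ 2 ^ (1 - p / q) * m := by
  have hq : 0 < q := hp.trans_le hpq
  have hθ : p / q ≤ 1 := (div_le_one hq).2 hpq
  have hg₀ := h₀.integral_rpow_pos hΩ_bdd hΩ hq.le
  have hg₁ := h₁.integral_rpow_pos hΩ_bdd hΩ hq.le
  have hsplit (x) : |g₀ x - g₁ x| ^ q = g₀ x ^ q + g₁ x ^ q :=
    abs_sub_rpow_of_eq_zero_or_eq_zero (h₀.nonneg x) (h₁.nonneg x)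
      (h₀.eq_zero_or_eq_zero h₁ hc x) hq.ne'
  have hgrad (x) := norm_fderiv_sub_rpow_of_eventuallyEq_zero hp.ne'
    (h₀.eventuallyEq_zero_or_eventuallyEq_zero h₁ hc x)
  simp only [rayleighQuot, hsplit, hgrad]
  rw [integral_add (h₀.integrableOn_norm_fderiv_rpow hΩ_bdd hp.le)
      (h₁.integrableOn_norm_fderiv_rpow hΩ_bdd hp.le),
    integral_add (h₀.integrableOn_rpow hΩ_bdd hq.le) (h₁.integrableOn_rpow hΩ_bdd hq.le),
    div_le_iff₀ (by positivity)]
  calc _ ≤ m * (∫ x in Ω, g₀ x ^ q) ^ (p / q) + m * (∫ x in Ω, g₁ x ^ q) ^ (p / q) :=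
        add_le_add (h₀.integral_norm_fderiv_rpow_le hΩ_bdd hp.le hq.le hm)
          (h₁.integral_norm_fderiv_rpow_le hΩ_bdd hp.le hq.le hm)
    _ = m * ((∫ x in Ω, g₀ x ^ q) ^ (p / q) + (∫ x in Ω, g₁ x ^ q) ^ (p / q)) := by ring
    _ ≤ m * (2 ^ (1 - p / q) * ((∫ x in Ω, g₀ x ^ q) + ∫ x in Ω, g₁ x ^ q) ^ (p / q)) := by
        gcongr
        exact rpow_add_rpow_le_two_rpow_mul_add_rpow hg₀.le hg₁.le (by positivity) hθ
    _ = _ := by ring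

lemma muPQ_le_of_integral_rpow_eq (hp : 0 < p) (hpq : p ≤ q) (hq : 1 < q)
    (heq : ∫ x in Ω, g₀ x ^ (q - 1) = ∫ x in Ω, g₁ x ^ (q - 1)) :
    muPQ p q Ω ≤ 2 ^ (1 - p / q) * m := by
  obtain ⟨K₀, hK₀⟩ := h₀.exists_lipschitzWith
  obtain ⟨K₁, hK₁⟩ := h₁.exists_lipschitzWith
  obtain ⟨x, hx, hgx⟩ := h₀.exists_pos
  have hx₁ : g₁ x = 0 := (h₀.eq_zero_or_eq_zero h₁ hc x).resolve_left hgx.ne'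
  have hsplit (x) : |g₀ x - g₁ x| ^ (q - 2) * (g₀ x - g₁ x) = g₀ x ^ (q - 1) - g₁ x ^ (q - 1) :=
    abs_sub_rpow_mul_sub_of_eq_zero_or_eq_zero (h₀.nonneg x) (h₁.nonneg x)
      (h₀.eq_zero_or_eq_zero h₁ hc x) hq.ne'
  refine (muPQ_le_rayleighQuot (hK₀.sub hK₁).lipschitzOnWith ⟨x, hx, ?_⟩ ?_).trans
    (h₀.rayleighQuot_sub_le h₁ hc hm hΩ hΩ_bdd hp hpq)
  · simpa [hx₁] using hgx.ne'
  · simp only [hsplit]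
    rw [integral_sub (h₀.integrableOn_rpow hΩ_bdd (by linarith))
      (h₁.integrableOn_rpow hΩ_bdd (by linarith)), heq, sub_self]

theorem muPQ_le (hp : 0 < p) (hpq : p ≤ q) (hq : 1 < q) :
    muPQ p q Ω ≤ 2 ^ (1 - p / q) * m := by
  have hq₀ : 0 < q := by linarith
  have hq₁ : 0 < q - 1 := by linarith
  have hI₀ := h₀.integral_rpow_pos hΩ_bdd hΩ hq₁.le
  have hI₁ := h₁.integral_rpow_pos hΩ_bdd hΩ hq₁.le
  set I₀ := ∫ x in Ω, g₀ x ^ (q - 1)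
  set I₁ := ∫ x in Ω, g₁ x ^ (q - 1)
  have ha₀ : 0 < I₁ ^ (q - 1)⁻¹ := by positivity
  have ha₁ : 0 < I₀ ^ (q - 1)⁻¹ := by positivity
  refine (h₀.const_mul hp.le hq₀ ha₀).muPQ_le_of_integral_rpow_eq
    (h₁.const_mul hp.le hq₀ ha₁) hc hm hΩ hΩ_bdd hp hpq hq ?_
  simp only [mul_rpow ha₀.le (h₀.nonneg _), mul_rpow ha₁.le (h₁.nonneg _), integral_const_mul,
    rpow_inv_rpow hI₀.le hq₁.ne', rpow_inv_rpow hI₁.le hq₁.ne']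
  exact mul_comm _ _

end IsOneSidedTestFunction

end Gluing

/-- Remark 4.3. Let `1 < p < q < p*`. For every open ball `B ⊂ ℝ^N`,
the supremum of `μ_{p,q}(Ω)` over open bounded convex sets `Ω` with `diam Ω = diam B`
is strictly below `λ_{p,q}(B)`: there is `m < λ_{p,q}(B)` bounding all such `μ_{p,q}(Ω)`
from above, so no maximizing sequence can reach `λ_{p,q}(B)` and the bound of
Theorem 4.1 is not sharp. -/
theorem muPQ_sup_lt_lambdaPQ_ball {N : ℕ} (hN : 2 ≤ N) (p q : ℝ) (hp : 1 < p)
    (hpq : p < q) (hq : ltCritical N p q)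
    (c : EuclideanSpace ℝ (Fin N)) (r : ℝ) (hr : 0 < r) :
    ∃ m : ℝ, m < lambdaPQ p q (ball c r) ∧
      ∀ Ω : Set (EuclideanSpace ℝ (Fin N)), IsOpen Ω → Bornology.IsBounded Ω →
        Convex ℝ Ω → Ω.Nonempty → diam Ω = diam (ball c r) →
        muPQ p q Ω ≤ m := by
  have : NeZero N := ⟨by lia⟩
  obtain ⟨m, hm, hmlam, hg⟩ := exists_forall_convex_isOneSidedTestFunction hN hp hpq hq hr (2 * r)
  refine ⟨2 ^ (1 - p / q) * m, by rwa [lambdaPQ_ball], fun Ω hΩ hΩ_bdd hΩ_conv hΩ_ne hdiam => ?_⟩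
  rw [diam_ball_eq c hr.le] at hdiam
  obtain ⟨x₀, hx₀, x₁, hx₁, hdist⟩ := exists_mem_closure_dist_eq_diam hΩ_ne hΩ_bdd
  have hsub {x} (hx : x ∈ closure Ω) : Ω ⊆ closedBall x (2 * r) :=
    hdiam ▸ subset_closedBall_diam_of_mem_closure hΩ_bdd hx
  rw [hdiam] at hdist
  obtain ⟨g₀, hg₀⟩ := hg Ω x₀ hx₀ x₁ hΩ hΩ_conv hdist (hsub hx₁)
  obtain ⟨g₁, hg₁⟩ := hg Ω x₁ hx₁ x₀ hΩ hΩ_conv (dist_comm x₁ x₀ ▸ hdist) (hsub hx₀)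
  exact hg₀.muPQ_le hg₁ (by linarith) hm.le hΩ hΩ_bdd (by linarith) hpq.le (hp.trans hpq)
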